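/- arXiv:1512.01968 — 2 statements merged into one kernel-verified Lean document; each statement's English description precedes it below -/
import Mathlib

section
/- Let f : {0,1}^n × {0,1}^n → {0,1} be a total Boolean function and let μ be a product distribution on {0,1}^n × {0,1}^n (i.e., μ = μ_A ⊗ μ_B for distributions μ_A, μ_B on {0,1}^n). Then there exists a universal constant C > 0 such that the distributional communication complexity of f with error 0.49 under μ satisfies CC^μ_{0.49}(f) ≤ C · (IC_{1/8}(f) · log IC_{1/8}(f))^2 (for IC_{1/8}(f) ≥ 2). -/
open scoped BigOperators
open scoped Classical

noncomputable section

/-! ## Probability distributions on finite types -/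

/-- `p` is a probability distribution on the finite type `α`. -/
def IsDist {α : Type} [Fintype α] (p : α → ℝ) : Prop :=
  (∀ a, 0 ≤ p a) ∧ ∑ a, p a = 1

/-- `μ` (in curried form) is a probability distribution on `X × Y`. -/
def IsDist2 {X Y : Type} [Fintype X] [Fintype Y] (μ : X → Y → ℝ) : Prop :=
  (∀ x y, 0 ≤ μ x y) ∧ ∑ x, ∑ y, μ x y = 1

/-! ## Deterministic communication protocols -/

/-- A deterministic two-party communication protocol: a finite binary tree where each
internal node is owned by Alice (`nodeA`) or Bob (`nodeB`) and is labeled by a function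
of that player's input choosing one of the two children; leaves carry Boolean outputs. -/
inductive Protocol (X Y : Type) : Type
  | leaf : Bool → Protocol X Y
  | nodeA : (X → Bool) → Protocol X Y → Protocol X Y → Protocol X Y
  | nodeB : (Y → Bool) → Protocol X Y → Protocol X Y → Protocol X Y

namespace Protocol

def eval {X Y : Type} : Protocol X Y → X → Y → Bool
  | leaf b, _, _ => b
  | nodeA g t0 t1, x, y => if g x then eval t1 x y else eval t0 x y
  | nodeB g t0 t1, x, y => if g y then eval t1 x y else eval t0 x y

/-- Depth (number of bits communicated in the worst case). -/
def depth {X Y : Type} : Protocol X Y → ℕ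
  | leaf _ => 0
  | nodeA _ t0 t1 => max (depth t0) (depth t1) + 1
  | nodeB _ t0 t1 => max (depth t0) (depth t1) + 1

/-- Number of leaves. -/
def leavesCount {X Y : Type} : Protocol X Y → ℕ
  | leaf _ => 1
  | nodeA _ t0 t1 => leavesCount t0 + leavesCount t1
  | nodeB _ t0 t1 => leavesCount t0 + leavesCount t1

/-- The sequence of bits communicated on input `(x, y)`. -/
def transcript {X Y : Type} : Protocol X Y → X → Y → List Bool
  | leaf _, _, _ => []
  | nodeA g t0 t1, x, y =>
      if g x then true :: transcript t1 x y else false :: transcript t0 x y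
  | nodeB g t0 t1, x, y =>
      if g y then true :: transcript t1 x y else false :: transcript t0 x y

end Protocol

/-- Error of a deterministic protocol w.r.t. input distribution `μ`. -/
def commErr {X Y : Type} [Fintype X] [Fintype Y]
    (μ : X → Y → ℝ) (f : X → Y → Bool) (P : Protocol X Y) : ℝ :=
  ∑ x, ∑ y, if P.eval x y ≠ f x y then μ x y else 0

/-- Distributional communication complexity `CC^μ_ε(f)`: the minimum depth of a
deterministic protocol erring with probability at most `ε` under `μ`. -/
def CCdist {X Y : Type} [Fintype X] [Fintype Y]
    (μ : X → Y → ℝ) (f : X → Y → Bool) (ε : ℝ) : ℕ :=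
  sInf {d : ℕ | ∃ P : Protocol X Y, P.depth ≤ d ∧ commErr μ f P ≤ ε}

/-- The advantage `adv_μ(Π)` of a protocol w.r.t. a (not necessarily normalized) measure. -/
def protAdv {X Y : Type} [Fintype X] [Fintype Y]
    (μ : X → Y → ℝ) (f : X → Y → Bool) (P : Protocol X Y) : ℝ :=
  ∑ x, ∑ y, if P.eval x y = f x y then μ x y else - μ x y

/-! ## Information complexity -/

/-- Probability of an event under a finite (possibly unnormalized) distribution. -/
def prOf {Ω : Type} [Fintype Ω] (p : Ω → ℝ) (q : Ω → Prop) : ℝ :=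
  ∑ ω, if q ω then p ω else 0

/-- Conditional mutual information `I(A ; B | C)` (in bits) of random variables `A`, `B`, `C`
defined on a finite probability space `(Ω, p)`. -/
def condMI {Ω α β γ : Type} [Fintype Ω] (p : Ω → ℝ)
    (A : Ω → α) (B : Ω → β) (C : Ω → γ) : ℝ :=
  ∑ ω, p ω * Real.logb 2 (
    (prOf p (fun ω' => A ω' = A ω ∧ B ω' = B ω ∧ C ω' = C ω) *
      prOf p (fun ω' => C ω' = C ω)) /
    (prOf p (fun ω' => A ω' = A ω ∧ C ω' = C ω) *
      prOf p (fun ω' => B ω' = B ω ∧ C ω' = C ω)))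

/-- Internal information cost `IC^μ(Π) = I(X;T|Y) + I(Y;T|X)` of the public-coin protocol
given by a distribution `ρ` on `Fin m` together with deterministic protocols `P r`; the
transcript `T` consists of the public randomness together with the communicated bits. -/
def infoCost {X Y : Type} [Fintype X] [Fintype Y] (μ : X → Y → ℝ)
    {m : ℕ} (ρ : Fin m → ℝ) (P : Fin m → Protocol X Y) : ℝ :=
  condMI (fun ω : X × Y × Fin m => μ ω.1 ω.2.1 * ρ ω.2.2)
      (fun ω => ω.1)
      (fun ω => (ω.2.2, (P ω.2.2).transcript ω.1 ω.2.1))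
      (fun ω => ω.2.1)
  + condMI (fun ω : X × Y × Fin m => μ ω.1 ω.2.1 * ρ ω.2.2)
      (fun ω => ω.2.1)
      (fun ω => (ω.2.2, (P ω.2.2).transcript ω.1 ω.2.1))
      (fun ω => ω.1)

/-- Error of a public-coin protocol under input distribution `μ` and coin distribution `ρ`. -/
def randErr {X Y : Type} [Fintype X] [Fintype Y] (μ : X → Y → ℝ) (f : X → Y → Bool)
    {m : ℕ} (ρ : Fin m → ℝ) (P : Fin m → Protocol X Y) : ℝ :=
  ∑ x, ∑ y, ∑ r, if (P r).eval x y ≠ f x y then μ x y * ρ r else 0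

/-- `IC^μ_ε(f)`: infimum of the information cost over all public-coin protocols computing
`f` with error at most `ε` under `μ`. -/
def ICmu {X Y : Type} [Fintype X] [Fintype Y]
    (μ : X → Y → ℝ) (f : X → Y → Bool) (ε : ℝ) : ℝ :=
  sInf { c : ℝ | ∃ (m : ℕ) (ρ : Fin m → ℝ) (P : Fin m → Protocol X Y),
    IsDist ρ ∧ randErr μ f ρ P ≤ ε ∧ c = infoCost μ ρ P }

/-- `IC_ε(f) = max_μ IC^μ_ε(f)`. -/
def IC {X Y : Type} [Fintype X] [Fintype Y] (f : X → Y → Bool) (ε : ℝ) : ℝ :=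
  sSup { c : ℝ | ∃ μ : X → Y → ℝ, IsDist2 μ ∧ c = ICmu μ f ε }

/-! ## Rectangles, smooth rectangle bound and partition bound -/

/-- Total weight of rectangles containing `(x, y)`: a combinatorial rectangle is a pair
`R = (S, T)` of finite sets, and `(x,y) ∈ R` iff `x ∈ S ∧ y ∈ T`. -/
def rcov {X Y : Type} [Fintype X] [Fintype Y]
    (w : Finset X × Finset Y → ℝ) (x : X) (y : Y) : ℝ :=
  ∑ R : Finset X × Finset Y, if x ∈ R.1 ∧ y ∈ R.2 then w R else 0

/-- `μ(R)` for a rectangle `R`. -/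
def rMass {X Y : Type} [Fintype X] [Fintype Y]
    (μ : X → Y → ℝ) (R : Finset X × Finset Y) : ℝ :=
  ∑ x, ∑ y, if x ∈ R.1 ∧ y ∈ R.2 then μ x y else 0

/-- `μ_z(R) = μ(R ∩ f⁻¹(z))` for a rectangle `R`. -/
def rMassZ {X Y : Type} [Fintype X] [Fintype Y]
    (μ : X → Y → ℝ) (f : X → Y → Bool) (z : Bool) (R : Finset X × Finset Y) : ℝ :=
  ∑ x, ∑ y, if (x ∈ R.1 ∧ y ∈ R.2) ∧ f x y = z then μ x y else 0

/-- `μ_z = μ(f⁻¹(z))`. -/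
def totalZ {X Y : Type} [Fintype X] [Fintype Y]
    (μ : X → Y → ℝ) (f : X → Y → Bool) (z : Bool) : ℝ :=
  ∑ x, ∑ y, if f x y = z then μ x y else 0

/-- `|μ|`, the total mass of a measure. -/
def totalMass {X Y : Type} [Fintype X] [Fintype Y] (μ : X → Y → ℝ) : ℝ :=
  ∑ x, ∑ y, μ x y

/-- Restriction of a measure to a rectangle. -/
def restrictRect {X Y : Type} (μ : X → Y → ℝ) (R : Finset X × Finset Y) : X → Y → ℝ :=
  fun x y => if x ∈ R.1 ∧ y ∈ R.2 then μ x y else 0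

/-- Distributional smooth rectangle bound `srec^{z,μ}_{ε,δ}(f)` (LP optimal value). -/
def srecZmu {X Y : Type} [Fintype X] [Fintype Y]
    (μ : X → Y → ℝ) (f : X → Y → Bool) (z : Bool) (ε δ : ℝ) : ℝ :=
  sInf { v : ℝ | ∃ w : Finset X × Finset Y → ℝ,
    (∀ R, 0 ≤ w R) ∧
    ((1 - ε) * totalZ μ f z ≤ ∑ x, ∑ y, if f x y = z then μ x y * rcov w x y else 0) ∧
    (∀ x y, f x y ≠ z → rcov w x y ≤ δ) ∧
    (∀ x y, rcov w x y ≤ 1) ∧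
    v = ∑ R : Finset X × Finset Y, w R }

/-- `srec^μ_{ε,δ}(f) = max{srec^{0,μ}_{ε,δ}(f), srec^{1,μ}_{ε,δ}(f)}`. -/
def srecMu {X Y : Type} [Fintype X] [Fintype Y]
    (μ : X → Y → ℝ) (f : X → Y → Bool) (ε δ : ℝ) : ℝ :=
  max (srecZmu μ f false ε δ) (srecZmu μ f true ε δ)

/-- Smooth rectangle bound `srec^z_{ε,δ}(f)` (LP optimal value). -/
def srecZ {X Y : Type} [Fintype X] [Fintype Y]
    (f : X → Y → Bool) (z : Bool) (ε δ : ℝ) : ℝ :=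
  sInf { v : ℝ | ∃ w : Finset X × Finset Y → ℝ,
    (∀ R, 0 ≤ w R) ∧
    (∀ x y, f x y = z → 1 - ε ≤ rcov w x y) ∧
    (∀ x y, f x y ≠ z → rcov w x y ≤ δ) ∧
    (∀ x y, rcov w x y ≤ 1) ∧
    v = ∑ R : Finset X × Finset Y, w R }

/-- `srec_{ε,δ}(f) = max{srec^0_{ε,δ}(f), srec^1_{ε,δ}(f)}`. -/
def srec {X Y : Type} [Fintype X] [Fintype Y] (f : X → Y → Bool) (ε δ : ℝ) : ℝ :=
  max (srecZ f false ε δ) (srecZ f true ε δ)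

/-- Partition bound `prt_ε(f)` (LP optimal value). -/
def prt {X Y : Type} [Fintype X] [Fintype Y] (f : X → Y → Bool) (ε : ℝ) : ℝ :=
  sInf { v : ℝ | ∃ w : Bool → Finset X × Finset Y → ℝ,
    (∀ z R, 0 ≤ w z R) ∧
    (∀ x y, 1 - ε ≤ rcov (w (f x y)) x y) ∧
    (∀ x y, rcov (w false) x y + rcov (w true) x y = 1) ∧
    v = ∑ R : Finset X × Finset Y, (w false R + w true R) }

/-! ### General-output versions -/

/-- Smooth rectangle bound `srec^z_{ε,δ}(f)` for general output alphabet. -/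
def srecZgen {X Y Z : Type} [Fintype X] [Fintype Y]
    (f : X → Y → Z) (z : Z) (ε δ : ℝ) : ℝ :=
  sInf { v : ℝ | ∃ w : Finset X × Finset Y → ℝ,
    (∀ R, 0 ≤ w R) ∧
    (∀ x y, f x y = z → 1 - ε ≤ rcov w x y) ∧
    (∀ x y, f x y ≠ z → rcov w x y ≤ δ) ∧
    (∀ x y, rcov w x y ≤ 1) ∧
    v = ∑ R : Finset X × Finset Y, w R }

/-- `srec_{ε,δ}(f) = max_{z ∈ Z} srec^z_{ε,δ}(f)`. -/
def srecGen {X Y Z : Type} [Fintype X] [Fintype Y] [Fintype Z]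
    (f : X → Y → Z) (ε δ : ℝ) : ℝ :=
  sSup (Set.range fun z : Z => srecZgen f z ε δ)

/-- Distributional smooth rectangle bound for general output alphabet. -/
def srecZmuGen {X Y Z : Type} [Fintype X] [Fintype Y]
    (μ : X → Y → ℝ) (f : X → Y → Z) (z : Z) (ε δ : ℝ) : ℝ :=
  sInf { v : ℝ | ∃ w : Finset X × Finset Y → ℝ,
    (∀ R, 0 ≤ w R) ∧
    ((1 - ε) * (∑ x, ∑ y, if f x y = z then μ x y else 0) ≤
      ∑ x, ∑ y, if f x y = z then μ x y * rcov w x y else 0) ∧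
    (∀ x y, f x y ≠ z → rcov w x y ≤ δ) ∧
    (∀ x y, rcov w x y ≤ 1) ∧
    v = ∑ R : Finset X × Finset Y, w R }

/-- `srec^μ_{ε,δ}(f) = max_{z ∈ Z} srec^{z,μ}_{ε,δ}(f)`. -/
def srecMuGen {X Y Z : Type} [Fintype X] [Fintype Y] [Fintype Z]
    (μ : X → Y → ℝ) (f : X → Y → Z) (ε δ : ℝ) : ℝ :=
  sSup (Set.range fun z : Z => srecZmuGen μ f z ε δ)

/-- Partition bound for general output alphabet. -/
def prtGen {X Y Z : Type} [Fintype X] [Fintype Y] [Fintype Z]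
    (f : X → Y → Z) (ε : ℝ) : ℝ :=
  sInf { v : ℝ | ∃ w : Z → Finset X × Finset Y → ℝ,
    (∀ z R, 0 ≤ w z R) ∧
    (∀ x y, 1 - ε ≤ rcov (w (f x y)) x y) ∧
    (∀ x y, (∑ z : Z, rcov (w z) x y) = 1) ∧
    v = ∑ z : Z, ∑ R : Finset X × Finset Y, w z R }

/-! ## Decision trees, subcubes and the query partition bound -/

/-- Deterministic decision trees on `n` input bits. -/
inductive DTree (n : ℕ) : Type
  | leaf : Bool → DTree n
  | node : Fin n → DTree n → DTree n → DTree n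

def DTree.eval {n : ℕ} : DTree n → (Fin n → Bool) → Bool
  | .leaf b, _ => b
  | .node i t0 t1, x => if x i then DTree.eval t1 x else DTree.eval t0 x

def DTree.depth {n : ℕ} : DTree n → ℕ
  | .leaf _ => 0
  | .node _ t0 t1 => max (DTree.depth t0) (DTree.depth t1) + 1

/-- Error of a decision tree w.r.t. the input distribution `μ`. -/
def qErr {n : ℕ} (μ : (Fin n → Bool) → ℝ) (g : (Fin n → Bool) → Bool) (T : DTree n) : ℝ :=
  ∑ x, if T.eval x ≠ g x then μ x else 0

/-- Distributional query complexity `QC^μ_ε(g)`: minimum depth of a deterministic decision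
tree erring with probability at most `ε` under `μ`. -/
def QCdist {n : ℕ} (μ : (Fin n → Bool) → ℝ) (g : (Fin n → Bool) → Bool) (ε : ℝ) : ℕ :=
  sInf {d : ℕ | ∃ T : DTree n, T.depth ≤ d ∧ qErr μ g T ≤ ε}

/-- A subcube of `{0,1}ⁿ`, given by its support pattern `s ∈ {0,1,⋆}ⁿ`. -/
abbrev Subcube (n : ℕ) := Fin n → Option Bool

/-- Membership in a subcube. -/
def memCube {n : ℕ} (A : Subcube n) (x : Fin n → Bool) : Prop :=
  ∀ i, ∀ b, A i = some b → x i = b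

/-- Size of (the support of) a subcube. -/
def cubeSize {n : ℕ} (A : Subcube n) : ℕ :=
  (Finset.univ.filter fun i => (A i).isSome).card

/-- Total weight of subcubes containing `x`. -/
def cubeCov {n : ℕ} (w : Subcube n → ℝ) (x : Fin n → Bool) : ℝ :=
  ∑ A : Subcube n, if memCube A x then w A else 0

/-- Query partition bound `qprt_ε(g)` (LP optimal value). -/
def qprt {n : ℕ} (g : (Fin n → Bool) → Bool) (ε : ℝ) : ℝ :=
  sInf { v : ℝ | ∃ w : Bool → Subcube n → ℝ,
    (∀ z A, 0 ≤ w z A) ∧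
    (∀ x, 1 - ε ≤ cubeCov (w (g x)) x) ∧
    (∀ x, cubeCov (w false) x + cubeCov (w true) x = 1) ∧
    v = ∑ A : Subcube n, (w false A + w true A) * 2 ^ cubeSize A }

/-- The bit-wise product distribution on `{0,1}ⁿ` with `p_i(1) = p i`, `p_i(0) = 1 - p i`. -/
def bitProd {n : ℕ} (p : Fin n → ℝ) : (Fin n → Bool) → ℝ :=
  fun x => ∏ i, if x i then p i else 1 - p i

/-- `μ(A)` for a subcube (or any set given by a membership predicate). -/
def cubeMass {n : ℕ} (μ : (Fin n → Bool) → ℝ) (A : Subcube n) : ℝ :=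
  ∑ x, if memCube A x then μ x else 0

/-- `μ_z(A) = μ(A ∩ g⁻¹(z))` for a subcube `A`. -/
def cubeMassZ {n : ℕ} (μ : (Fin n → Bool) → ℝ) (g : (Fin n → Bool) → Bool)
    (z : Bool) (A : Subcube n) : ℝ :=
  ∑ x, if memCube A x ∧ g x = z then μ x else 0

/-- `μ_z = μ(g⁻¹(z))`. -/
def qTotalZ {n : ℕ} (μ : (Fin n → Bool) → ℝ) (g : (Fin n → Bool) → Bool) (z : Bool) : ℝ :=
  ∑ x, if g x = z then μ x else 0

/-- Mass of a finite set of pairs under the product measure `μA ⊗ μB`. -/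
def pairMass {X Y : Type} (μA : X → ℝ) (μB : Y → ℝ) (A : Finset (X × Y)) : ℝ :=
  ∑ q ∈ A, μA q.1 * μB q.2

end

/-!
Fix a distribution on the inputs and a protocol of information cost `I`, with its randomness. The
transcript is a function of the two inputs and, apart from a small probability, is one of the at
most `2^{O(I)}` transcripts that have probability at least `2^{-O(I)}` given either input alone.
Sampling a shared random set of transcripts thus turns the protocol into a random family of
rectangles, and LP duality removes the dependence on the distribution: each value of `f` has a
weighted cover by rectangles, of total weight `2^{O(I)}`, which covers inputs with that value to an
extent at least `3/4` and other inputs to an extent at most `1/4`. Its `k`-fold power, for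
`k = O(log I)`, separates the two values exponentially in `k`.

On a product distribution, a random rectangle of the cover of `true` is covered only sparsely by the
cover of `false`. A rectangle whose intersection with another is small must have either few of its
rows or few of its columns. Hence on a row strip or on a column strip of mass at least
`ρ = 2^{-O(I log I)}`, half of the weight of the cover of `false` covers a negligible part and can
be discarded. Peeling off such strips one after the other, the players announce in
`O(log (1 / ρ))` bits a strip containing the input. After `O(I log I)` rounds of halving no
significant weight is left and the answer is `true`.
-/

namespace Protocol

variable {X Y : Type}

/-- The protocol `P` with the roles of the two players exchanged. -/
def swap : Protocol X Y → Protocol Y X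
  | leaf b => leaf b
  | nodeA g t₀ t₁ => nodeB g t₀.swap t₁.swap
  | nodeB g t₀ t₁ => nodeA g t₀.swap t₁.swap

theorem eval_swap (P : Protocol X Y) (x : X) (y : Y) : P.swap.eval y x = P.eval x y := by
  induction P with
  | leaf b => rfl
  | nodeA g t₀ t₁ ih₀ ih₁ => simp only [swap, eval, ih₀, ih₁]
  | nodeB g t₀ t₁ ih₀ ih₁ => simp only [swap, eval, ih₀, ih₁]

theorem depth_swap (P : Protocol X Y) : P.swap.depth = P.depth := by
  induction P with
  | leaf b => rfl
  | nodeA g t₀ t₁ ih₀ ih₁ => simp only [swap, depth, ih₀, ih₁]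
  | nodeB g t₀ t₁ ih₀ ih₁ => simp only [swap, depth, ih₀, ih₁]

theorem exists_eval_eq_of_row_message {d b : ℕ} (i : X → ℕ) (Q : ℕ → Protocol X Y)
    (hi : ∀ x, i x < 2 ^ b) (hQ : ∀ k, (Q k).depth ≤ d) :
    ∃ P : Protocol X Y, P.depth ≤ d + b ∧ ∀ x y, P.eval x y = (Q (i x)).eval x y := by
  induction b generalizing i Q with
  | zero => exact ⟨Q 0, hQ 0, fun x y => by rw [Nat.lt_one_iff.1 (hi x)]⟩
  | succ b ih =>
    have hhalf (x : X) : i x / 2 < 2 ^ b := by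
      have := hi x
      rw [pow_succ] at this
      omega
    obtain ⟨P₀, hd₀, he₀⟩ := ih (fun x => i x / 2) (fun k => Q (2 * k)) hhalf fun k => hQ _
    obtain ⟨P₁, hd₁, he₁⟩ := ih (fun x => i x / 2) (fun k => Q (2 * k + 1)) hhalf fun k => hQ _
    refine ⟨nodeA (fun x => decide (i x % 2 = 1)) P₀ P₁, ?_, fun x y => ?_⟩
    · simp only [depth]
      omega
    · rcases Nat.mod_two_eq_zero_or_one (i x) with h | h
      · simp [eval, h, he₀, Nat.two_mul_div_two_of_even (Nat.even_iff.2 h)]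
      · simp [eval, h, he₁, Nat.two_mul_div_two_add_one_of_odd (Nat.odd_iff.2 h)]

theorem exists_eval_eq_of_column_message {d b : ℕ} (j : Y → ℕ) (Q : ℕ → Protocol X Y)
    (hj : ∀ y, j y < 2 ^ b) (hQ : ∀ k, (Q k).depth ≤ d) :
    ∃ P : Protocol X Y, P.depth ≤ d + b ∧ ∀ x y, P.eval x y = (Q (j y)).eval x y := by
  obtain ⟨P, hd, he⟩ := exists_eval_eq_of_row_message j (fun k => (Q k).swap) hj
    fun k => (depth_swap _).trans_le (hQ k)
  exact ⟨P.swap, (depth_swap P).trans_le hd, fun x y => by rw [eval_swap, he, eval_swap]⟩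

theorem eval_eq_of_transcript_eq (P : Protocol X Y) {x x' : X} {y y' : Y}
    (h : P.transcript x y = P.transcript x' y') : P.eval x y = P.eval x' y' := by
  induction P with
  | leaf b => rfl
  | nodeA g t₀ t₁ ih₀ ih₁ =>
    by_cases hx : g x <;> by_cases hx' : g x' <;> simp_all [transcript, eval]
  | nodeB g t₀ t₁ ih₀ ih₁ =>
    by_cases hy : g y <;> by_cases hy' : g y' <;> simp_all [transcript, eval]

theorem transcript_eq_of_transcript_eq (P : Protocol X Y) {x x' : X} {y y' : Y}
    (h : P.transcript x y = P.transcript x' y') : P.transcript x y' = P.transcript x y := by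
  induction P with
  | leaf b => rfl
  | nodeA g t₀ t₁ ih₀ ih₁ =>
    by_cases hx : g x <;> by_cases hx' : g x' <;> simp_all [transcript]
  | nodeB g t₀ t₁ ih₀ ih₁ =>
    by_cases hy : g y <;> by_cases hy' : g y' <;> simp_all [transcript]

end Protocol

/-- `F` can be computed by a protocol in which each player first announces one of `N` messages,
after which they run a protocol of depth at most `d` selected by the two messages. -/
def AnnounceComputable {X Y : Type} (N d : ℕ) (F : X → Y → Bool) : Prop :=
  ∃ (i : X → ℕ) (j : Y → ℕ) (Q : ℕ → ℕ → Protocol X Y), (∀ x, i x < N) ∧ (∀ y, j y < N) ∧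
    (∀ k l, (Q k l).depth ≤ d) ∧ ∀ x y, F x y = (Q (i x) (j y)).eval x y

namespace AnnounceComputable

variable {X Y : Type} {N d : ℕ} {F : X → Y → Bool}

theorem of_protocol {P : Protocol X Y} (hP : P.depth ≤ d) :
    AnnounceComputable (N + 1) d P.eval :=
  ⟨fun _ => 0, fun _ => 0, fun _ _ => P, fun _ => N.succ_pos, fun _ => N.succ_pos, fun _ _ => hP,
    fun _ _ => rfl⟩

theorem ite_row (hF : AnnounceComputable N d F) (S : Set X) {P : Protocol X Y}
    (hP : P.depth ≤ d) :
    AnnounceComputable (N + 1) d fun x y => if x ∈ S then P.eval x y else F x y := by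
  obtain ⟨i, j, Q, hi, hj, hQ, hF⟩ := hF
  refine ⟨fun x => if x ∈ S then N else i x, j, fun k l => if k = N then P else Q k l,
    fun x => ?_, fun y => (hj y).trans N.lt_succ_self, fun k l => ?_, fun x y => ?_⟩
  · dsimp only
    split_ifs
    exacts [N.lt_succ_self, (hi x).trans N.lt_succ_self]
  · dsimp only
    split_ifs
    exacts [hP, hQ k l]
  · by_cases hx : x ∈ S
    · simp only [hx, if_true]
    · simp only [hx, if_false, (hi x).ne, hF]

theorem ite_column (hF : AnnounceComputable N d F) (T : Set Y) {P : Protocol X Y}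
    (hP : P.depth ≤ d) :
    AnnounceComputable (N + 1) d fun x y => if y ∈ T then P.eval x y else F x y := by
  obtain ⟨i, j, Q, hi, hj, hQ, hF⟩ := hF
  refine ⟨i, fun y => if y ∈ T then N else j y, fun k l => if l = N then P else Q k l,
    fun x => (hi x).trans N.lt_succ_self, fun y => ?_, fun k l => ?_, fun x y => ?_⟩
  · dsimp only
    split_ifs
    exacts [N.lt_succ_self, (hj y).trans N.lt_succ_self]
  · dsimp only
    split_ifs
    exacts [hP, hQ k l]
  · by_cases hy : y ∈ T
    · simp only [hy, if_true]
    · simp only [hy, if_false, (hj y).ne, hF]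

theorem exists_protocol {b : ℕ} (hF : AnnounceComputable (2 ^ b) d F) :
    ∃ P : Protocol X Y, P.depth ≤ d + 2 * b ∧ P.eval = F := by
  obtain ⟨i, j, Q, hi, hj, hQ, hF⟩ := hF
  choose R hRd hRe using fun k => Protocol.exists_eval_eq_of_column_message j (Q k) hj (hQ k)
  obtain ⟨P, hPd, hPe⟩ := Protocol.exists_eval_eq_of_row_message i R hi hRd
  exact ⟨P, by omega, funext₂ fun x y => by rw [hPe, hRe, hF]⟩

end AnnounceComputable

theorem Protocol.exists_eval_eq {X Y : Type} [Finite X] [Finite Y] (F : X → Y → Bool) :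
    ∃ P : Protocol X Y, P.eval = F := by
  obtain ⟨m, ⟨eX⟩⟩ := Finite.exists_equiv_fin X
  obtain ⟨n, ⟨eY⟩⟩ := Finite.exists_equiv_fin Y
  have hF : AnnounceComputable (2 ^ (m + n)) 0 F := by
    refine ⟨fun x => eX x, fun y => eY y,
      fun k l => leaf (decide (∃ x y, (eX x : ℕ) = k ∧ (eY y : ℕ) = l ∧ F x y)),
      fun x => (eX x).2.trans ((Nat.le_add_right m n).trans_lt Nat.lt_two_pow_self),
      fun y => (eY y).2.trans ((Nat.le_add_left n m).trans_lt Nat.lt_two_pow_self),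
      fun k l => le_rfl, fun x y => ?_⟩
    simp only [eval, Fin.val_inj, eX.injective.eq_iff, eY.injective.eq_iff, exists_eq_left,
      exists_and_left, Bool.decide_eq_true]
  obtain ⟨P, -, hP⟩ := hF.exists_protocol
  exact ⟨P, hP⟩

section Rcov

variable {X Y : Type} [Fintype X] [Fintype Y] {w v : Finset X × Finset Y → ℝ}

theorem isLinearMap_rcov (x : X) (y : Y) :
    IsLinearMap ℝ fun w : Finset X × Finset Y → ℝ => rcov w x y where
  map_add w v := by simp only [rcov, Pi.add_apply, ← Finset.sum_add_distrib, ite_add_ite, add_zero]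
  map_smul c w := by simp only [rcov, Pi.smul_apply, Finset.smul_sum, smul_ite, smul_zero]

theorem rcov_mono (h : w ≤ v) (x : X) (y : Y) : rcov w x y ≤ rcov v x y :=
  Finset.sum_le_sum fun R _ => by split_ifs; exacts [h R, le_rfl]

theorem rcov_nonneg (hw : 0 ≤ w) (x : X) (y : Y) : 0 ≤ rcov w x y := by
  simpa only [(isLinearMap_rcov x y).map_zero] using rcov_mono hw x y

theorem exists_rcov_eq_sum {ι : Type*} (s : Finset ι) (R : ι → Finset X × Finset Y) {u : ι → ℝ}
    (hu : ∀ i ∈ s, 0 ≤ u i) :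
    ∃ v : Finset X × Finset Y → ℝ, 0 ≤ v ∧ ∑ Q, v Q = ∑ i ∈ s, u i ∧
      ∀ x y, rcov v x y = ∑ i ∈ s, if x ∈ (R i).1 ∧ y ∈ (R i).2 then u i else 0 := by
  refine ⟨fun Q => ∑ i ∈ s, if R i = Q then u i else 0, fun Q => ?_, ?_, fun x y => ?_⟩
  · exact Finset.sum_nonneg fun i hi => by split_ifs <;> simp [hu i hi]
  · rw [Finset.sum_comm]
    simp only [Finset.sum_ite_eq, Finset.mem_univ, if_true]
  · rw [rcov, ← Finset.sum_filter, Finset.sum_comm]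
    simp only [Finset.sum_ite_eq, Finset.mem_filter, Finset.mem_univ, true_and]

/-- Intersecting the rectangles of two weightings multiplies their coverages. -/
theorem exists_rcov_eq_mul (hw : 0 ≤ w) (hv : 0 ≤ v) :
    ∃ u : Finset X × Finset Y → ℝ, 0 ≤ u ∧ ∑ R, u R = (∑ R, w R) * ∑ R, v R ∧
      ∀ x y, rcov u x y = rcov w x y * rcov v x y := by
  obtain ⟨u, hu, hsum, hcov⟩ := exists_rcov_eq_sum Finset.univ
    (fun p : (Finset X × Finset Y) × (Finset X × Finset Y) => (p.1.1 ∩ p.2.1, p.1.2 ∩ p.2.2))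
    (u := fun p => w p.1 * v p.2) fun p _ => mul_nonneg (hw p.1) (hv p.2)
  refine ⟨u, hu, ?_, fun x y => ?_⟩
  · rw [hsum, Fintype.sum_mul_sum, Fintype.sum_prod_type]
  · rw [hcov, rcov, rcov, Fintype.sum_mul_sum, Fintype.sum_prod_type]
    refine Fintype.sum_congr _ _ fun R => Fintype.sum_congr _ _ fun R' => ?_
    simp only [Finset.mem_inter, ← ite_and, ite_mul, mul_ite, zero_mul, mul_zero]
    grind

end Rcov

/-- `w` is a feasible point of total weight at most `W` of the linear program defining the smooth
rectangle bound of `f` at the value `z`: the rectangles containing an input have total weight at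
most `1`, at least `c` on `f⁻¹(z)`, and at most `δ` off `f⁻¹(z)`. -/
structure IsRectCover {X Y : Type} [Fintype X] [Fintype Y] (f : X → Y → Bool) (z : Bool)
    (c δ W : ℝ) (w : Finset X × Finset Y → ℝ) : Prop where
  nonneg : 0 ≤ w
  sum_le : ∑ R, w R ≤ W
  rcov_le_one : ∀ x y, rcov w x y ≤ 1
  le_rcov : ∀ x y, f x y = z → c ≤ rcov w x y
  rcov_le : ∀ x y, f x y ≠ z → rcov w x y ≤ δ

namespace IsRectCover

variable {X Y : Type} [Fintype X] [Fintype Y] {f : X → Y → Bool} {z : Bool}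
  {c δ W c' δ' W' : ℝ} {w w' : Finset X × Finset Y → ℝ}

theorem exists_mul (h : IsRectCover f z c δ W w) (h' : IsRectCover f z c' δ' W' w')
    (hc' : 0 ≤ c') : ∃ v, IsRectCover f z (c * c') (δ * δ') (W * W') v := by
  obtain ⟨v, hv, hsum, hcov⟩ := exists_rcov_eq_mul h.nonneg h'.nonneg
  have hnn := rcov_nonneg h.nonneg
  have hnn' := rcov_nonneg h'.nonneg
  refine ⟨v, hv, ?_, fun x y => ?_, fun x y hf => ?_, fun x y hf => ?_⟩
  · rw [hsum]
    exact mul_le_mul h.sum_le h'.sum_le (Finset.sum_nonneg fun R _ => h'.nonneg R)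
      ((Finset.sum_nonneg fun R _ => h.nonneg R).trans h.sum_le)
  · rw [hcov]
    exact mul_le_one₀ (h.rcov_le_one x y) (hnn' x y) (h'.rcov_le_one x y)
  · rw [hcov]
    exact mul_le_mul (h.le_rcov x y hf) (h'.le_rcov x y hf) hc' (hnn x y)
  · rw [hcov]
    exact mul_le_mul (h.rcov_le x y hf) (h'.rcov_le x y hf) (hnn' x y)
      ((hnn x y).trans (h.rcov_le x y hf))

theorem exists_pow (h : IsRectCover f z c δ W w) (hc : 0 ≤ c) (k : ℕ) :
    ∃ v, IsRectCover f z (c ^ k) (δ ^ k) (W ^ k) v := by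
  induction k with
  | zero =>
    have hcov (x : X) (y : Y) : rcov (Pi.single (Finset.univ, Finset.univ) 1) x y = 1 := by
      rw [rcov, Fintype.sum_eq_single (Finset.univ, Finset.univ)] <;> simp +contextual
    exact ⟨Pi.single (Finset.univ, Finset.univ) 1, Pi.single_nonneg.2 zero_le_one, by simp,
      fun x y => (hcov x y).le, fun x y _ => by rw [hcov, pow_zero],
      fun x y _ => by rw [hcov, pow_zero]⟩
  | succ k ih =>
    obtain ⟨v, hv⟩ := ih
    simpa only [pow_succ] using hv.exists_mul h hc

end IsRectCover

section RandomSample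

variable {τ : Type*} [DecidableEq τ] {p : ℝ} {U A B : Finset τ}

/-- The probability that a random subset of `U`, containing each element independently with
probability `p`, equals `F`. -/
noncomputable def sampleProb (p : ℝ) (U F : Finset τ) : ℝ :=
  p ^ F.card * (1 - p) ^ (U \ F).card

theorem sampleProb_nonneg (hp₀ : 0 ≤ p) (hp₁ : p ≤ 1) (F : Finset τ) : 0 ≤ sampleProb p U F :=
  mul_nonneg (pow_nonneg hp₀ _) (pow_nonneg (sub_nonneg.2 hp₁) _)

theorem sum_sampleProb_of_subset (p : ℝ) (hA : A ⊆ U) :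
    ∑ F ∈ U.powerset with A ⊆ F, sampleProb p U F = p ^ A.card := by
  calc ∑ F ∈ U.powerset with A ⊆ F, sampleProb p U F
      = ∑ F ∈ U.powerset, (∏ _i ∈ F, p) * ∏ i ∈ U \ F, if i ∈ A then 0 else 1 - p := by
        rw [Finset.sum_filter]
        refine Finset.sum_congr rfl fun F _ => ?_
        split_ifs with hAF
        · rw [Finset.prod_const, Finset.prod_congr rfl fun i hi =>
            if_neg fun hiA => (Finset.mem_sdiff.1 hi).2 (hAF hiA), Finset.prod_const, sampleProb]
        · obtain ⟨i, hiA, hiF⟩ := Finset.not_subset.1 hAF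
          have hzero : (∏ i ∈ U \ F, if i ∈ A then 0 else 1 - p) = 0 :=
            Finset.prod_eq_zero (Finset.mem_sdiff.2 ⟨hA hiA, hiF⟩) (if_pos hiA)
          rw [hzero, mul_zero]
    _ = ∏ i ∈ U, if i ∈ A then p else 1 := by
        rw [← Finset.prod_add]
        exact Finset.prod_congr rfl fun i _ => by split_ifs <;> ring
    _ = p ^ A.card := by
        rw [Finset.prod_ite_mem, Finset.inter_eq_right.2 hA, Finset.prod_const]

theorem sum_sampleProb (p : ℝ) (U : Finset τ) : ∑ F ∈ U.powerset, sampleProb p U F = 1 := by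
  simpa using sum_sampleProb_of_subset p (Finset.empty_subset U)

theorem le_sum_sampleProb_of_mem (hp₀ : 0 ≤ p) (hp₁ : p ≤ 1) (hA : A ⊆ U) {t : τ}
    (htA : t ∈ A) (htB : t ∈ B) :
    p ≤ ∑ F ∈ U.powerset with (A ∩ F).Nonempty ∧ (B ∩ F).Nonempty, sampleProb p U F := by
  calc p = ∑ F ∈ U.powerset with {t} ⊆ F, sampleProb p U F := by
        rw [sum_sampleProb_of_subset p (Finset.singleton_subset_iff.2 (hA htA)),
          Finset.card_singleton, pow_one]
    _ ≤ _ := by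
        refine Finset.sum_le_sum_of_subset_of_nonneg
          (Finset.monotone_filter_right _ fun F _ htF => ?_)
          fun F _ _ => sampleProb_nonneg hp₀ hp₁ F
        have htF := Finset.singleton_subset_iff.1 htF
        exact ⟨⟨t, Finset.mem_inter.2 ⟨htA, htF⟩⟩, ⟨t, Finset.mem_inter.2 ⟨htB, htF⟩⟩⟩

theorem sum_sampleProb_inter_nonempty_le (hp₀ : 0 ≤ p) (hp₁ : p ≤ 1) (hA : A ⊆ U) (hB : B ⊆ U) :
    ∑ F ∈ U.powerset with (A ∩ F).Nonempty ∧ (B ∩ F).Nonempty, sampleProb p U F ≤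
      (A ∩ B).card * p + A.card * B.card * p ^ 2 := by
  calc ∑ F ∈ U.powerset with (A ∩ F).Nonempty ∧ (B ∩ F).Nonempty, sampleProb p U F
      ≤ ∑ F ∈ U.powerset, ∑ q ∈ A ×ˢ B, if {q.1, q.2} ⊆ F then sampleProb p U F else 0 := by
        rw [Finset.sum_filter]
        refine Finset.sum_le_sum fun F _ => ?_
        have hnn (q : τ × τ) : 0 ≤ if {q.1, q.2} ⊆ F then sampleProb p U F else 0 := by
          split_ifs
          exacts [sampleProb_nonneg hp₀ hp₁ F, le_rfl]
        split_ifs with h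
        · obtain ⟨⟨s, hs⟩, ⟨t, ht⟩⟩ := h
          rw [Finset.mem_inter] at hs ht
          refine le_trans ?_ (Finset.single_le_sum (fun q _ => hnn q)
            (Finset.mk_mem_product hs.1 ht.1))
          rw [if_pos (Finset.insert_subset hs.2 (Finset.singleton_subset_iff.2 ht.2))]
        · exact Finset.sum_nonneg fun q _ => hnn q
    _ = ∑ q ∈ A ×ˢ B, p ^ ({q.1, q.2} : Finset τ).card := by
        rw [Finset.sum_comm]
        refine Finset.sum_congr rfl fun q hq => ?_
        rw [Finset.mem_product] at hq
        rw [← Finset.sum_filter, sum_sampleProb_of_subset p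
          (Finset.insert_subset (hA hq.1) (Finset.singleton_subset_iff.2 (hB hq.2)))]
    _ ≤ ∑ q ∈ A ×ˢ B, ((if q.1 = q.2 then p else 0) + p ^ 2) := by
        refine Finset.sum_le_sum fun q _ => ?_
        split_ifs with h
        · rw [h, Finset.pair_eq_singleton, Finset.card_singleton, pow_one]
          exact le_add_of_nonneg_right (sq_nonneg p)
        · rw [Finset.card_pair h, zero_add]
    _ = (A ∩ B).card * p + A.card * B.card * p ^ 2 := by
        rw [Finset.sum_add_distrib, Finset.sum_product]
        simp [Finset.sum_ite_mem, Finset.card_product]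

theorem exists_rcov_eq_mul_sum_sampleProb {X Y : Type} [Fintype X] [Fintype Y]
    (L : X → Finset τ) (L' : Y → Finset τ) (U : Finset τ) {κ : ℝ} (hκ : 0 ≤ κ) (hp₀ : 0 ≤ p)
    (hp₁ : p ≤ 1) :
    ∃ v : Finset X × Finset Y → ℝ, 0 ≤ v ∧ ∑ R, v R = κ ∧
      ∀ x y, rcov v x y = κ * ∑ F ∈ U.powerset with
        (L x ∩ F).Nonempty ∧ (L' y ∩ F).Nonempty, sampleProb p U F := by
  obtain ⟨v, hv, hsum, hcov⟩ := exists_rcov_eq_sum U.powerset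
    (fun F => (Finset.univ.filter fun x => (L x ∩ F).Nonempty,
      Finset.univ.filter fun y => (L' y ∩ F).Nonempty))
    (u := fun F => κ * sampleProb p U F)
    fun F _ => mul_nonneg hκ (sampleProb_nonneg hp₀ hp₁ F)
  refine ⟨v, hv, by rw [hsum, ← Finset.mul_sum, sum_sampleProb, mul_one], fun x y => ?_⟩
  simp only [hcov, Finset.mem_filter, Finset.mem_univ, true_and, ← Finset.sum_filter,
    Finset.mul_sum]

end RandomSample

/-- Both players accept when their list meets a common random set of messages. A message common to
the two lists is hit with probability `p`, a pair of distinct messages only with probability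
`p ^ 2`; the weights are rescaled by `1 / p`. -/
theorem exists_rcov_le_card_inter_add {X Y : Type} {τ : Type*} [DecidableEq τ] [Fintype X]
    [Fintype Y] (L : X → Finset τ) (L' : Y → Finset τ) {p K : ℝ} (hp₀ : 0 < p) (hp₁ : p ≤ 1)
    (hK : ∀ x y, ((L x).card * (L' y).card : ℝ) ≤ K) :
    ∃ v : Finset X × Finset Y → ℝ, 0 ≤ v ∧ ∑ R, v R = 1 / p ∧
      (∀ x y, (L x ∩ L' y).Nonempty → 1 ≤ rcov v x y) ∧
      ∀ x y, rcov v x y ≤ (L x ∩ L' y).card + p * K := by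
  set U : Finset τ := Finset.univ.biUnion L ∪ Finset.univ.biUnion L'
  have hLU (x : X) : L x ⊆ U :=
    (Finset.subset_biUnion_of_mem L (Finset.mem_univ x)).trans Finset.subset_union_left
  have hLU' (y : Y) : L' y ⊆ U :=
    (Finset.subset_biUnion_of_mem L' (Finset.mem_univ y)).trans Finset.subset_union_right
  obtain ⟨v, hv, hsum, hrcov⟩ :=
    exists_rcov_eq_mul_sum_sampleProb L L' U (one_div_nonneg.2 hp₀.le) hp₀.le hp₁
  refine ⟨v, hv, hsum, fun x y ⟨t, ht⟩ => ?_, fun x y => ?_⟩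
  · rw [Finset.mem_inter] at ht
    rw [hrcov, one_div_mul_eq_div, one_le_div hp₀]
    exact le_sum_sampleProb_of_mem hp₀.le hp₁ (hLU x) ht.1 ht.2
  · rw [hrcov, one_div_mul_eq_div, div_le_iff₀ hp₀]
    refine (sum_sampleProb_inter_nonempty_le hp₀.le hp₁ (hLU x) (hLU' y)).trans ?_
    nlinarith [mul_le_mul_of_nonneg_right (hK x y) (sq_nonneg p)]

theorem exists_abs_rcov_sub_indicator_le {X Y : Type} {τ : Type*} [DecidableEq τ] [Fintype X]
    [Fintype Y] (L : X → Finset τ) (L' : Y → Finset τ) {p K : ℝ} (hp₀ : 0 < p) (hp₁ : p ≤ 1)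
    (hK₀ : 0 ≤ K) (hK : ∀ x y, ((L x).card * (L' y).card : ℝ) ≤ K)
    (hone : ∀ x y, (L x ∩ L' y).card ≤ 1) :
    ∃ v : Finset X × Finset Y → ℝ, 0 ≤ v ∧ ∑ R, v R ≤ 1 / p ∧ (∀ x y, rcov v x y ≤ 1) ∧
      ∀ x y, |rcov v x y - if (L x ∩ L' y).Nonempty then 1 else 0| ≤ p * K := by
  obtain ⟨v, hv, hsum, hlower, hupper⟩ := exists_rcov_le_card_inter_add L L' hp₀ hp₁ hK
  have hpK : 0 ≤ p * K := by positivity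
  have hscale (x : X) (y : Y) : rcov ((1 + p * K)⁻¹ • v) x y = rcov v x y / (1 + p * K) := by
    rw [(isLinearMap_rcov x y).map_smul, smul_eq_mul, inv_mul_eq_div]
  have hle_one (x : X) (y : Y) : rcov v x y / (1 + p * K) ≤ 1 := by
    refine div_le_one_of_le₀ ((hupper x y).trans ?_) (by positivity)
    gcongr
    exact_mod_cast hone x y
  refine ⟨(1 + p * K)⁻¹ • v, smul_nonneg (by positivity) hv, ?_, fun x y => ?_, fun x y => ?_⟩
  · simp only [Pi.smul_apply, smul_eq_mul, ← Finset.mul_sum, hsum]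
    exact mul_le_of_le_one_left (one_div_nonneg.2 hp₀.le) (inv_le_one_of_one_le₀ (by linarith))
  · rw [hscale]
    exact hle_one x y
  · rw [hscale]
    split_ifs with h
    · have : 1 - p * K ≤ rcov v x y / (1 + p * K) := by
        rw [le_div_iff₀ (by positivity)]
        nlinarith [hlower x y h]
      rw [abs_sub_comm, abs_of_nonneg (sub_nonneg.2 (hle_one x y))]
      linarith
    · have hcard := hupper x y
      rw [Finset.not_nonempty_iff_eq_empty.1 h, Finset.card_empty, Nat.cast_zero, zero_add] at hcard
      have hnn := rcov_nonneg hv x y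
      rw [sub_zero, abs_of_nonneg (by positivity)]
      exact (div_le_self hnn (by linarith)).trans hcard

section Entropy

variable {α : Type} [Fintype α] {τ : Type*} {p : α → ℝ} {K : ℝ}

theorem le_prOf (hp : 0 ≤ p) {q : α → Prop} {a : α} (ha : q a) : p a ≤ prOf p q := by
  have hnn (b : α) : 0 ≤ if q b then p b else 0 := by
    split_ifs
    exacts [hp b, le_rfl]
  simpa only [prOf, if_pos ha] using Finset.single_le_sum (fun b _ => hnn b) (Finset.mem_univ a)

theorem prOf_le_sum (hp : 0 ≤ p) (q : α → Prop) : prOf p q ≤ ∑ a, p a :=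
  Finset.sum_le_sum fun a _ => by split_ifs; exacts [le_rfl, hp a]

/-- The values taken by `g` with probability at least `1 / K` under the normalization of `p`. -/
noncomputable def heavyValues (K : ℝ) (p : α → ℝ) (g : α → τ) : Finset τ :=
  (Finset.univ.image g).filter fun t =>
    0 < prOf p (fun a => g a = t) ∧ ∑ a, p a ≤ K * prOf p (fun a => g a = t)

theorem exists_eq_of_mem_heavyValues {g : α → τ} {t : τ} (ht : t ∈ heavyValues K p g) :
    ∃ a, g a = t := by
  obtain ⟨a, -, ha⟩ := Finset.mem_image.1 (Finset.mem_filter.1 ht).1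
  exact ⟨a, ha⟩

theorem card_heavyValues_le (hp : 0 ≤ p) (hK : 0 ≤ K) (g : α → τ) :
    ((heavyValues K p g).card : ℝ) ≤ K := by
  have hmass : ∑ t ∈ heavyValues K p g, prOf p (fun a => g a = t) ≤ ∑ a, p a := by
    calc ∑ t ∈ heavyValues K p g, prOf p (fun a => g a = t)
        ≤ ∑ t ∈ Finset.univ.image g, prOf p (fun a => g a = t) :=
          Finset.sum_le_sum_of_subset_of_nonneg (Finset.filter_subset _ _) fun t _ _ =>
            Finset.sum_nonneg fun a _ => by split_ifs; exacts [hp a, le_rfl]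
      _ = ∑ a, p a := by
          simp only [prOf, ← Finset.sum_filter]
          exact Finset.sum_fiberwise_of_maps_to (fun a _ => Finset.mem_image_of_mem g (by simp)) p
  rcases (heavyValues K p g).eq_empty_or_nonempty with h | ⟨t, ht⟩
  · rwa [h, Finset.card_empty, Nat.cast_zero]
  have hpos : 0 < ∑ a, p a := (Finset.mem_filter.1 ht).2.1.trans_le (prOf_le_sum hp _)
  refine le_of_mul_le_mul_right ?_ hpos
  calc ((heavyValues K p g).card : ℝ) * ∑ a, p a
      ≤ ∑ t ∈ heavyValues K p g, K * prOf p (fun a => g a = t) := by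
        rw [← nsmul_eq_mul]
        exact Finset.card_nsmul_le_sum _ _ _ fun t ht => (Finset.mem_filter.1 ht).2.2
    _ ≤ K * ∑ a, p a := by
        rw [← Finset.mul_sum]
        gcongr

/-- The entropy, in bits, of `g` under `p`, scaled by the total mass of `p`. -/
noncomputable def scaledEntropy (p : α → ℝ) (g : α → τ) : ℝ :=
  ∑ a, p a * Real.logb 2 ((∑ b, p b) / prOf p (fun b => g b = g a))

/-- Markov's inequality for the surprisal of `g`. -/
theorem logb_mul_prOf_notMem_heavyValues_le (hp : 0 ≤ p) (hK : 1 ≤ K) (g : α → τ) :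
    Real.logb 2 K * prOf p (fun a => g a ∉ heavyValues K p g) ≤ scaledEntropy p g := by
  rw [prOf, Finset.mul_sum]
  refine Finset.sum_le_sum fun a _ => ?_
  rcases (hp a).eq_or_lt with ha | ha
  · simp only [← ha, Pi.zero_apply, ite_self, mul_zero, zero_mul, le_refl]
  have hpos : 0 < prOf p (fun b => g b = g a) := ha.trans_le (le_prOf hp rfl)
  split_ifs with h
  · rw [mul_zero]
    exact mul_nonneg ha.le (Real.logb_nonneg one_lt_two
      ((one_le_div hpos).2 (prOf_le_sum hp _)))
  · have hlt : K * prOf p (fun b => g b = g a) < ∑ b, p b := by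
      by_contra! hle
      exact h (Finset.mem_filter.2 ⟨Finset.mem_image_of_mem g (Finset.mem_univ a), hpos, hle⟩)
    rw [mul_comm]
    refine mul_le_mul_of_nonneg_left ?_ (hp a)
    exact Real.logb_le_logb_of_le one_lt_two (by linarith) ((lt_div_iff₀ hpos).2 hlt).le

end Entropy

section InfoCost

theorem condMI_comp_equiv {Ω Ω' α β γ : Type} [Fintype Ω] [Fintype Ω'] (e : Ω ≃ Ω') (p : Ω' → ℝ)
    (A : Ω' → α) (B : Ω' → β) (C : Ω' → γ) :
    condMI (p ∘ e) (A ∘ e) (B ∘ e) (C ∘ e) = condMI p A B C := by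
  have hprOf (q : Ω' → Prop) : prOf (p ∘ e) (fun ω => q (e ω)) = prOf p q :=
    e.sum_comp fun ω => if q ω then p ω else 0
  simp only [condMI, ← e.sum_comp, ← hprOf, Function.comp_apply]

variable {X Y : Type} [Fintype X] [Fintype Y] {m : ℕ} (μ : X → Y → ℝ) {ρ : Fin m → ℝ}

theorem prOf_mul_of_snd_fst_eq (hρ : ∑ r, ρ r = 1) (q : X → Prop) (y : Y) :
    prOf (fun ω : X × Y × Fin m => μ ω.1 ω.2.1 * ρ ω.2.2) (fun ω => q ω.1 ∧ ω.2.1 = y) =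
      prOf (fun x => μ x y) q := by
  simp only [prOf, Fintype.sum_prod_type]
  refine Finset.sum_congr rfl fun x _ => ?_
  rw [Finset.sum_eq_single y (fun y' _ h => by simp [h]) (by simp)]
  by_cases h : q x <;> simp [h, ← Finset.mul_sum, hρ]

theorem prOf_mul_of_snd_eq (ρ : Fin m → ℝ) (q : X → Prop) (y : Y) (r : Fin m) :
    prOf (fun ω : X × Y × Fin m => μ ω.1 ω.2.1 * ρ ω.2.2)
      (fun ω => q ω.1 ∧ ω.2.1 = y ∧ ω.2.2 = r) = ρ r * prOf (fun x => μ x y) q := by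
  simp only [prOf, Fintype.sum_prod_type, Finset.mul_sum]
  refine Finset.sum_congr rfl fun x _ => ?_
  rw [Finset.sum_eq_single y (fun y' _ h => by simp [h]) (by simp),
    Finset.sum_eq_single r (fun r' _ h => by simp [h]) (by simp)]
  by_cases h : q x <;> simp [h, mul_comm]

theorem condMI_fst_snd {β : Type} (hρ : ∑ r, ρ r = 1) (g : Fin m → X → Y → β) :
    condMI (fun ω : X × Y × Fin m => μ ω.1 ω.2.1 * ρ ω.2.2) (fun ω => ω.1)
      (fun ω => (ω.2.2, g ω.2.2 ω.1 ω.2.1)) (fun ω => ω.2.1) =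
      ∑ r, ρ r * ∑ y, scaledEntropy (fun x => μ x y) (fun x => g r x y) := by
  have hpoint (x : X) (y : Y) : prOf (fun x => μ x y) (· = x) = μ x y := by simp [prOf]
  have hABC (x : X) (y : Y) (r : Fin m) : prOf (fun ω : X × Y × Fin m => μ ω.1 ω.2.1 * ρ ω.2.2)
      (fun ω => ω.1 = x ∧ (ω.2.2, g ω.2.2 ω.1 ω.2.1) = (r, g r x y) ∧ ω.2.1 = y) =
      ρ r * μ x y := by
    rw [← hpoint, ← prOf_mul_of_snd_eq]
    exact congr_arg _ (funext fun ω => by grind)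
  have hC (y : Y) : prOf (fun ω : X × Y × Fin m => μ ω.1 ω.2.1 * ρ ω.2.2) (fun ω => ω.2.1 = y) =
      ∑ x, μ x y := by
    simpa only [true_and, prOf, if_true] using prOf_mul_of_snd_fst_eq μ hρ (fun _ => True) y
  have hAC (x : X) (y : Y) : prOf (fun ω : X × Y × Fin m => μ ω.1 ω.2.1 * ρ ω.2.2)
      (fun ω => ω.1 = x ∧ ω.2.1 = y) = μ x y := by
    rw [prOf_mul_of_snd_fst_eq μ hρ (· = x), hpoint]
  have hBC (y : Y) (r : Fin m) (t : β) : prOf (fun ω : X × Y × Fin m => μ ω.1 ω.2.1 * ρ ω.2.2)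
      (fun ω => (ω.2.2, g ω.2.2 ω.1 ω.2.1) = (r, t) ∧ ω.2.1 = y) =
      ρ r * prOf (fun x => μ x y) (fun x => g r x y = t) := by
    rw [← prOf_mul_of_snd_eq]
    exact congr_arg _ (funext fun ω => by grind)
  have hterm (x : X) (y : Y) (r : Fin m) (s t : ℝ) :
      μ x y * ρ r * Real.logb 2 (ρ r * μ x y * s / (μ x y * (ρ r * t))) =
        ρ r * (μ x y * Real.logb 2 (s / t)) := by
    rcases eq_or_ne (μ x y * ρ r) 0 with h | h
    · rw [h, zero_mul, ← mul_assoc, mul_comm (ρ r), h, zero_mul]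
    · rw [mul_comm (ρ r), ← mul_assoc (μ x y), mul_div_mul_left _ _ h]
      ring
  simp only [condMI, hABC, hC, hAC, hBC, hterm, Fintype.sum_prod_type_right, ← Finset.mul_sum,
    scaledEntropy]

theorem infoCost_eq_sum_scaledEntropy (hρ : ∑ r, ρ r = 1) (P : Fin m → Protocol X Y) :
    infoCost μ ρ P = ∑ r, ρ r *
      ((∑ y, scaledEntropy (fun x => μ x y) (fun x => (P r).transcript x y)) +
        ∑ x, scaledEntropy (μ x) ((P r).transcript x)) := by
  simp only [mul_add, Finset.sum_add_distrib]
  refine congr_arg₂ (· + ·) (condMI_fst_snd μ hρ fun r => (P r).transcript) ?_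
  rw [← condMI_fst_snd (fun y x => μ x y) hρ fun r y x => (P r).transcript x y]
  let e : X × Y × Fin m ≃ Y × X × Fin m :=
    ⟨fun ω => (ω.2.1, ω.1, ω.2.2), fun ω => (ω.2.1, ω.1, ω.2.2), fun _ => rfl, fun _ => rfl⟩
  exact condMI_comp_equiv e (fun ω => μ ω.2.1 ω.1 * ρ ω.2.2) (fun ω => ω.1)
    (fun ω => (ω.2.2, (P ω.2.2).transcript ω.2.1 ω.1)) (fun ω => ω.2.1)

end InfoCost

section TypicalInputs

variable {X Y : Type} [Fintype X] [Fintype Y]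

/-- The inputs on which the transcript of `P`, conditioned on `x` and conditioned on `y`, has
probability at least `1 / K`: the random variable `transcript` is heavy in the row and in the
column of the input. -/
def IsTypical (K : ℝ) (ν : X → Y → ℝ) (P : Protocol X Y) (x : X) (y : Y) : Prop :=
  P.transcript x y ∈ heavyValues K (ν x) (P.transcript x) ∧
    P.transcript x y ∈ heavyValues K (fun x' => ν x' y) (fun x' => P.transcript x' y)

theorem logb_mul_sum_not_isTypical_le_infoCost {ν : X → Y → ℝ} (hν : ∀ x y, 0 ≤ ν x y) {m : ℕ}
    {ρ : Fin m → ℝ} (hρ : IsDist ρ) (P : Fin m → Protocol X Y) {K : ℝ} (hK : 1 ≤ K) :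
    Real.logb 2 K * ∑ r, ρ r * ∑ x, ∑ y, (if IsTypical K ν (P r) x y then 0 else ν x y) ≤
      infoCost ν ρ P := by
  rw [infoCost_eq_sum_scaledEntropy ν hρ.2, Finset.mul_sum]
  refine Finset.sum_le_sum fun r _ => ?_
  rw [mul_left_comm]
  refine mul_le_mul_of_nonneg_left ?_ (hρ.1 r)
  have hsplit : ∑ x, ∑ y, (if IsTypical K ν (P r) x y then 0 else ν x y) ≤
      (∑ y, prOf (fun x => ν x y) fun x => (P r).transcript x y ∉
          heavyValues K (fun x' => ν x' y) fun x' => (P r).transcript x' y) +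
        ∑ x, prOf (ν x) fun y =>
          (P r).transcript x y ∉ heavyValues K (ν x) ((P r).transcript x) := by
    simp only [prOf]
    rw [Finset.sum_comm (s := (Finset.univ : Finset Y)), ← Finset.sum_add_distrib]
    simp only [← Finset.sum_add_distrib]
    refine Finset.sum_le_sum fun x _ => Finset.sum_le_sum fun y _ => ?_
    have := hν x y
    unfold IsTypical
    split_ifs <;> first | linarith | tauto
  refine (mul_le_mul_of_nonneg_left hsplit (Real.logb_nonneg one_lt_two hK)).trans ?_
  rw [mul_add, Finset.mul_sum, Finset.mul_sum]
  gcongr with y _ x _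
  · exact logb_mul_prOf_notMem_heavyValues_le (fun x => hν x y) hK _
  · exact logb_mul_prOf_notMem_heavyValues_le (hν x) hK _

end TypicalInputs

section RcovLoss

variable {X Y : Type} [Fintype X] [Fintype Y]

/-- The amount by which the coverage of `(x, y)` by `v` misses its target, which is `1` on
`f⁻¹(z)` and `0` elsewhere. -/
noncomputable def rcovLoss (f : X → Y → Bool) (z : Bool) (v : Finset X × Finset Y → ℝ)
    (x : X) (y : Y) : ℝ :=
  if f x y = z then 1 - rcov v x y else rcov v x y

/-- The common heavy transcripts of row `x` and column `y` with output `z`: by the rectangle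
property, the transcript of `(x, y)` is the only candidate. -/
theorem mem_inter_heavyValues_iff {K : ℝ} {ν : X → Y → ℝ} {P : Protocol X Y} {z : Bool} {x : X}
    {y : Y} {t : List Bool} :
    t ∈ (heavyValues K (ν x) (P.transcript x)).filter
          (fun t => ∃ x' y', P.transcript x' y' = t ∧ P.eval x' y' = z) ∩
        heavyValues K (fun x' => ν x' y) (fun x' => P.transcript x' y) ↔
      t = P.transcript x y ∧ IsTypical K ν P x y ∧ P.eval x y = z := by
  rw [Finset.mem_inter, Finset.mem_filter]
  constructor
  · rintro ⟨⟨hrow, x', y', ht, hz⟩, hcol⟩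
    obtain ⟨y₁, hy₁⟩ := exists_eq_of_mem_heavyValues hrow
    obtain ⟨x₁, hx₁⟩ := exists_eq_of_mem_heavyValues hcol
    obtain rfl : P.transcript x y = t :=
      (P.transcript_eq_of_transcript_eq (hy₁.trans hx₁.symm)).trans hy₁
    exact ⟨rfl, ⟨hrow, hcol⟩, (P.eval_eq_of_transcript_eq ht).symm.trans hz⟩
  · rintro ⟨rfl, ⟨hrow, hcol⟩, hz⟩
    exact ⟨⟨hrow, x, y, rfl, hz⟩, hcol⟩

theorem exists_rcovLoss_le {ν : X → Y → ℝ} (hν : ∀ x y, 0 ≤ ν x y) (f : X → Y → Bool) (z : Bool)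
    (P : Protocol X Y) {p K : ℝ} (hp₀ : 0 < p) (hp₁ : p ≤ 1) (hK : 0 ≤ K) :
    ∃ v : Finset X × Finset Y → ℝ, 0 ≤ v ∧ ∑ R, v R ≤ 1 / p ∧ (∀ x y, rcov v x y ≤ 1) ∧
      ∀ x y, rcovLoss f z v x y ≤ (if P.eval x y ≠ f x y then 1 else 0) +
        (if IsTypical K ν P x y then 0 else 1) + p * (K * K) := by
  let L (x : X) := (heavyValues K (ν x) (P.transcript x)).filter
    fun t => ∃ x' y', P.transcript x' y' = t ∧ P.eval x' y' = z
  let L' (y : Y) := heavyValues K (fun x' => ν x' y) (fun x' => P.transcript x' y)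
  have hone (x : X) (y : Y) : (L x ∩ L' y).card ≤ 1 := Finset.card_le_one.2 fun s hs t ht =>
    (mem_inter_heavyValues_iff.1 hs).1.trans (mem_inter_heavyValues_iff.1 ht).1.symm
  have hcard (x : X) (y : Y) : ((L x).card * (L' y).card : ℝ) ≤ K * K :=
    mul_le_mul ((Nat.cast_le.2 (Finset.card_filter_le _ _)).trans
      (card_heavyValues_le (hν x) hK _)) (card_heavyValues_le (fun x => hν x y) hK _)
      (Nat.cast_nonneg _) hK
  obtain ⟨v, hv, hsum, hle_one, happrox⟩ :=
    exists_abs_rcov_sub_indicator_le L L' hp₀ hp₁ (mul_self_nonneg K) hcard hone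
  refine ⟨v, hv, hsum, hle_one, fun x y => ?_⟩
  have hnonempty : (L x ∩ L' y).Nonempty ↔ IsTypical K ν P x y ∧ P.eval x y = z :=
    ⟨fun ⟨_, ht⟩ => (mem_inter_heavyValues_iff.1 ht).2,
      fun h => ⟨_, mem_inter_heavyValues_iff.2 ⟨rfl, h⟩⟩⟩
  have happrox := abs_le.1 (happrox x y)
  have hv₁ := hle_one x y
  have hpK : 0 ≤ p * (K * K) := by positivity
  simp only [hnonempty] at happrox
  unfold rcovLoss
  split_ifs at happrox ⊢ <;> grind

theorem exists_sum_rcovLoss_le {ν : X → Y → ℝ} (hν : IsDist2 ν) (f : X → Y → Bool) (z : Bool)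
    (P : Protocol X Y) {p K : ℝ} (hp₀ : 0 < p) (hp₁ : p ≤ 1) (hK : 0 ≤ K) :
    ∃ v : Finset X × Finset Y → ℝ, 0 ≤ v ∧ ∑ R, v R ≤ 1 / p ∧ (∀ x y, rcov v x y ≤ 1) ∧
      ∑ x, ∑ y, ν x y * rcovLoss f z v x y ≤ commErr ν f P +
        (∑ x, ∑ y, if IsTypical K ν P x y then 0 else ν x y) + p * (K * K) := by
  obtain ⟨v, hv, hsum, hle_one, hloss⟩ := exists_rcovLoss_le hν.1 f z P hp₀ hp₁ hK
  refine ⟨v, hv, hsum, hle_one, ?_⟩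
  calc ∑ x, ∑ y, ν x y * rcovLoss f z v x y
      ≤ ∑ x, ∑ y, ν x y * ((if P.eval x y ≠ f x y then 1 else 0) +
          (if IsTypical K ν P x y then 0 else 1) + p * (K * K)) :=
        Finset.sum_le_sum fun x _ => Finset.sum_le_sum fun y _ =>
          mul_le_mul_of_nonneg_left (hloss x y) (hν.1 x y)
    _ = _ := by
        simp only [mul_add, mul_ite, mul_one, mul_zero, Finset.sum_add_distrib, ← Finset.sum_mul,
          hν.2, one_mul, commErr]

theorem sum_mul_commErr {m : ℕ} (ν : X → Y → ℝ) (f : X → Y → Bool) (ρ : Fin m → ℝ)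
    (P : Fin m → Protocol X Y) : ∑ r, ρ r * commErr ν f (P r) = randErr ν f ρ P := by
  simp only [commErr, randErr, Finset.mul_sum, mul_ite, mul_zero, mul_comm (ν _ _)]
  rw [Finset.sum_comm]
  exact Finset.sum_congr rfl fun x _ => Finset.sum_comm

theorem IsDist.exists_le_of_sum_mul_le {α : Type} [Fintype α] {p : α → ℝ} (hp : IsDist p)
    {g : α → ℝ} {t : ℝ} (h : ∑ a, p a * g a ≤ t) : ∃ a, g a ≤ t := by
  by_contra! hlt
  obtain ⟨a, -, ha⟩ := Finset.exists_ne_zero_of_sum_ne_zero (hp.2.trans_ne one_ne_zero)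
  have hsum : ∑ a, p a * t < ∑ a, p a * g a :=
    Finset.sum_lt_sum (fun b _ => mul_le_mul_of_nonneg_left (hlt b).le (hp.1 b))
      ⟨a, Finset.mem_univ a, mul_lt_mul_of_pos_left (hlt a) ((hp.1 a).lt_of_ne' ha)⟩
  rw [← Finset.sum_mul, hp.2, one_mul] at hsum
  exact h.not_gt hsum

theorem exists_sum_rcovLoss_lt_of_infoCost {ν : X → Y → ℝ} (hν : IsDist2 ν) (f : X → Y → Bool)
    (z : Bool) {m : ℕ} {ρ : Fin m → ℝ} (hρ : IsDist ρ) {P : Fin m → Protocol X Y}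
    (herr : randErr ν f ρ P ≤ 1 / 8) {D : ℕ} (hD : 0 < D) (hinfo : 32 * infoCost ν ρ P ≤ D) :
    ∃ v : Finset X × Finset Y → ℝ, 0 ≤ v ∧ ∑ R, v R ≤ 2 ^ (2 * D + 5) ∧
      (∀ x y, rcov v x y ≤ 1) ∧ ∑ x, ∑ y, ν x y * rcovLoss f z v x y < 1 / 4 := by
  have hatypical : ∑ r, ρ r *
      ∑ x, ∑ y, (if IsTypical (2 ^ D) ν (P r) x y then 0 else ν x y) ≤ 1 / 32 := by
    have h := logb_mul_sum_not_isTypical_le_infoCost hν.1 hρ P (K := 2 ^ D) (one_le_pow₀ one_le_two)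
    rw [Real.logb_pow, Real.logb_self_eq_one one_lt_two, mul_one] at h
    exact le_of_mul_le_mul_left (by linarith) (Nat.cast_pos.2 hD : (0 : ℝ) < D)
  obtain ⟨r, hr⟩ := hρ.exists_le_of_sum_mul_le (t := 1 / 8 + 1 / 32) (g := fun r =>
      commErr ν f (P r) + ∑ x, ∑ y, if IsTypical (2 ^ D) ν (P r) x y then 0 else ν x y) (by
    simp only [mul_add, Finset.sum_add_distrib, sum_mul_commErr]
    exact add_le_add herr hatypical)
  obtain ⟨v, hv, hsum, hle_one, hloss⟩ := exists_sum_rcovLoss_le hν f z (P r)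
    (p := 1 / 2 ^ (2 * D + 5)) (K := 2 ^ D) (by positivity)
    (div_le_one_of_le₀ (one_le_pow₀ one_le_two) (by positivity)) (by positivity)
  have hpK : 1 / 2 ^ (2 * D + 5) * ((2 : ℝ) ^ D * 2 ^ D) = 1 / 32 := by
    rw [pow_add, two_mul, pow_add]
    field_simp
    norm_num
  refine ⟨v, hv, by rwa [one_div_one_div] at hsum, hle_one, ?_⟩
  linarith

theorem exists_infoCost_lt {f : X → Y → Bool} {ν : X → Y → ℝ} (hν : IsDist2 ν) {ε c : ℝ}
    (hε : 0 ≤ ε) (hIC : 0 < IC f ε) (hc : IC f ε < c) :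
    ∃ (m : ℕ) (ρ : Fin m → ℝ) (P : Fin m → Protocol X Y),
      IsDist ρ ∧ randErr ν f ρ P ≤ ε ∧ infoCost ν ρ P < c := by
  -- An unbounded set would have the junk supremum `0`.
  have hbdd : BddAbove {c : ℝ | ∃ μ : X → Y → ℝ, IsDist2 μ ∧ c = ICmu μ f ε} := by
    by_contra h
    exact hIC.ne' (Real.sSup_of_not_bddAbove h)
  have hlt : ICmu ν f ε < c := (le_csSup hbdd ⟨ν, hν, rfl⟩).trans_lt hc
  obtain ⟨P, hP⟩ := Protocol.exists_eval_eq f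
  have hne : {c : ℝ | ∃ (m : ℕ) (ρ : Fin m → ℝ) (P : Fin m → Protocol X Y),
      IsDist ρ ∧ randErr ν f ρ P ≤ ε ∧ c = infoCost ν ρ P}.Nonempty :=
    ⟨_, 1, fun _ => 1, fun _ => P, ⟨fun _ => zero_le_one, by simp⟩, by simpa [randErr, hP], rfl⟩
  obtain ⟨_, ⟨m, ρ, P, hρ, herr, rfl⟩, hinfo⟩ := exists_lt_of_csInf_lt hne hlt
  exact ⟨m, ρ, P, hρ, herr, hinfo⟩

end RcovLoss

section Minimax

theorem convexOn_sum {E ι : Type*} [AddCommGroup E] [Module ℝ E] {V : Set E} (hV : Convex ℝ V)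
    (s : Finset ι) {g : ι → E → ℝ} (hg : ∀ i ∈ s, ConvexOn ℝ V (g i)) :
    ConvexOn ℝ V fun v => ∑ i ∈ s, g i v := by
  simpa only [Finset.sum_fn] using
    Finset.sum_induction g (ConvexOn ℝ V) (fun _ _ => ConvexOn.add) (convexOn_const 0 hV) hg

theorem exists_forall_lt_of_forall_stdSimplex {E Ω : Type*} [AddCommGroup E] [Module ℝ E]
    [TopologicalSpace E] [IsTopologicalAddGroup E] [ContinuousSMul ℝ E] [Fintype Ω] {V : Set E}
    (hVne : V.Nonempty) (hVcompact : IsCompact V) (hVconvex : Convex ℝ V) {ℓ : Ω → E → ℝ}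
    (hconvex : ∀ ω, ConvexOn ℝ V (ℓ ω)) (hcont : ∀ ω, ContinuousOn (ℓ ω) V) {a : ℝ}
    (H : ∀ ν ∈ stdSimplex ℝ Ω, ∃ v ∈ V, ∑ ω, ν ω * ℓ ω v < a) :
    ∃ v ∈ V, ∀ ω, ℓ ω v < a := by
  cases isEmpty_or_nonempty Ω with
  | inl _ => exact hVne.imp fun v hv => ⟨hv, isEmptyElim⟩
  | inr _ =>
    have hsimplex : Convex ℝ (stdSimplex ℝ Ω) := convex_stdSimplex ℝ Ω
    obtain ⟨v₀, hv₀, ν₀, hν₀, hsaddle⟩ := Sion.exists_isSaddlePointOn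
      (f := fun v (ν : Ω → ℝ) => ∑ ω, ν ω * ℓ ω v) hVne hVconvex hVcompact
      (fun ν _ => (continuousOn_finsetSum _ fun ω _ =>
        continuousOn_const.mul (hcont ω)).lowerSemicontinuousOn)
      (fun ν hν => (convexOn_sum hVconvex Finset.univ fun ω _ =>
        (hconvex ω).smul (hν.1 ω)).quasiconvexOn)
      hsimplex ⟨_, single_mem_stdSimplex ℝ (Classical.arbitrary Ω)⟩ (isCompact_stdSimplex ℝ Ω)
      (fun v _ => Continuous.upperSemicontinuous (by fun_prop) |>.upperSemicontinuousOn _)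
      (fun v _ => ((Fintype.linearCombination ℝ fun ω => ℓ ω v).concaveOn hsimplex).quasiconcaveOn)
    obtain ⟨v, hv, hlt⟩ := H ν₀ hν₀
    refine ⟨v₀, hv₀, fun ω => ?_⟩
    have hpure : ∑ ω', (Pi.single ω 1 : Ω → ℝ) ω' * ℓ ω' v₀ = ℓ ω v₀ := by
      simp [Pi.single_apply]
    exact hpure ▸ (hsaddle v hv _ (single_mem_stdSimplex ℝ ω)).trans_lt hlt

end Minimax

section RectCoverExistence

variable {X Y : Type} [Fintype X] [Fintype Y]

/-- The weightings of rectangles of total weight at most `W` under which no input is covered more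
than once. -/
def rectPackings (X Y : Type) [Fintype X] [Fintype Y] (W : ℝ) : Set (Finset X × Finset Y → ℝ) :=
  {v | 0 ≤ v ∧ ∑ R, v R ≤ W ∧ ∀ x y, rcov v x y ≤ 1}

theorem continuous_rcov (x : X) (y : Y) :
    Continuous fun v : Finset X × Finset Y → ℝ => rcov v x y :=
  LinearMap.continuous_on_pi (isLinearMap_rcov x y).mk'

theorem zero_mem_rectPackings {W : ℝ} (hW : 0 ≤ W) : 0 ∈ rectPackings X Y W :=
  ⟨le_rfl, by simpa, fun x y => by simp [(isLinearMap_rcov x y).map_zero]⟩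

theorem convex_rectPackings (W : ℝ) : Convex ℝ (rectPackings X Y W) := by
  simp only [rectPackings, Set.ofPred_and, Set.ofPred_forall]
  refine (convex_Ici 0).inter (Convex.inter ?_ (convex_iInter₂ fun x y => ?_))
  · exact convex_halfSpace_le ⟨fun _ _ => Finset.sum_add_distrib, fun c v => by
      simp only [Pi.smul_apply, Finset.smul_sum]⟩ W
  · exact convex_halfSpace_le (isLinearMap_rcov x y) 1

theorem isCompact_rectPackings (W : ℝ) : IsCompact (rectPackings X Y W) := by
  refine (isCompact_Icc (a := 0) (b := fun _ => W)).of_isClosed_subset ?_ fun v hv =>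
    ⟨hv.1, fun R => (Finset.single_le_sum (fun Q _ => hv.1 Q) (Finset.mem_univ R)).trans hv.2.1⟩
  simp only [rectPackings, Set.ofPred_and, Set.ofPred_forall]
  refine isClosed_Ici.inter (.inter ?_ (isClosed_iInter fun x => isClosed_iInter fun y => ?_))
  · exact isClosed_le (by fun_prop) continuous_const
  · exact isClosed_le (continuous_rcov x y) continuous_const

theorem continuous_rcovLoss (f : X → Y → Bool) (z : Bool) (x : X) (y : Y) :
    Continuous fun v => rcovLoss f z v x y := by
  unfold rcovLoss
  split_ifs
  exacts [continuous_const.sub (continuous_rcov x y), continuous_rcov x y]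

theorem convexOn_rcovLoss {V : Set (Finset X × Finset Y → ℝ)} (hV : Convex ℝ V)
    (f : X → Y → Bool) (z : Bool) (x : X) (y : Y) :
    ConvexOn ℝ V fun v => rcovLoss f z v x y := by
  unfold rcovLoss
  split_ifs
  · exact (convexOn_const 1 hV).sub ((isLinearMap_rcov x y).mk'.concaveOn hV)
  · exact (isLinearMap_rcov x y).mk'.convexOn hV

theorem exists_isRectCover_of_IC_lt {f : X → Y → Bool} (z : Bool) (hIC : 0 < IC f (1 / 8)) {D : ℕ}
    (hD : 32 * IC f (1 / 8) < D) :
    ∃ w, IsRectCover f z (3 / 4) (1 / 4) (2 ^ (2 * D + 5)) w := by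
  have hD₀ : 0 < D := Nat.cast_pos.1 ((by positivity : 0 < 32 * IC f (1 / 8)).trans hD)
  have hW : (0 : ℝ) ≤ 2 ^ (2 * D + 5) := by positivity
  have hV := convex_rectPackings (X := X) (Y := Y) (2 ^ (2 * D + 5))
  obtain ⟨w, ⟨hw, hsum, hle_one⟩, hloss⟩ := exists_forall_lt_of_forall_stdSimplex
    (ℓ := fun (ω : X × Y) v => rcovLoss f z v ω.1 ω.2) (a := 1 / 4)
    ⟨0, zero_mem_rectPackings hW⟩ (isCompact_rectPackings _) hV
    (fun ω => convexOn_rcovLoss hV f z ω.1 ω.2)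
    (fun ω => (continuous_rcovLoss f z ω.1 ω.2).continuousOn) fun ν hν => by
      have hdist : IsDist2 fun x y => ν (x, y) :=
        ⟨fun x y => hν.1 (x, y), by rw [← Fintype.sum_prod_type']; exact hν.2⟩
      obtain ⟨m, ρ, P, hρ, herr, hinfo⟩ := exists_infoCost_lt hdist (by norm_num) hIC
        (c := D / 32) (by linarith)
      obtain ⟨v, hv, hsum, hle_one, hlt⟩ := exists_sum_rcovLoss_lt_of_infoCost hdist f z hρ herr hD₀
        (by linarith)
      exact ⟨v, ⟨hv, hsum, hle_one⟩, by rwa [Fintype.sum_prod_type]⟩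
  refine ⟨w, hw, hsum, hle_one, fun x y hf => ?_, fun x y hf => ?_⟩
  · have h := hloss (x, y)
    simp only [rcovLoss, hf, if_true] at h
    linarith
  · have h := hloss (x, y)
    simp only [rcovLoss, hf, if_false] at h
    exact h.le

end RectCoverExistence

section ProdIntegral

variable {X Y : Type*} [Fintype X] [Fintype Y]

/-- The integral of `φ` against the product `a ⊗ b` of two weight functions. -/
noncomputable def prodIntegral (a : X → ℝ) (b : Y → ℝ) (φ : X → Y → ℝ) : ℝ :=
  ∑ x, ∑ y, a x * b y * φ x y

/-- The mass under `a ⊗ b` of the inputs on which `F` disagrees with `f`. -/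
noncomputable def prodErr (a : X → ℝ) (b : Y → ℝ) (f F : X → Y → Bool) : ℝ :=
  prodIntegral a b fun x y => if F x y ≠ f x y then 1 else 0

variable {a : X → ℝ} {b : Y → ℝ}

theorem prodIntegral_add (φ ψ : X → Y → ℝ) :
    prodIntegral a b (fun x y => φ x y + ψ x y) = prodIntegral a b φ + prodIntegral a b ψ := by
  simp only [prodIntegral, mul_add, Finset.sum_add_distrib]

theorem prodIntegral_const_mul (c : ℝ) (φ : X → Y → ℝ) :
    prodIntegral a b (fun x y => c * φ x y) = c * prodIntegral a b φ := by
  simp only [prodIntegral, Finset.mul_sum, mul_left_comm _ c]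

theorem prodIntegral_const (c : ℝ) :
    prodIntegral a b (fun _ _ => c) = c * ((∑ x, a x) * ∑ y, b y) := by
  simp only [prodIntegral, Finset.sum_mul_sum, ← Finset.sum_mul, mul_comm c]

theorem prodIntegral_mono (ha : 0 ≤ a) (hb : 0 ≤ b) {φ ψ : X → Y → ℝ} (h : ∀ x y, φ x y ≤ ψ x y) :
    prodIntegral a b φ ≤ prodIntegral a b ψ :=
  Finset.sum_le_sum fun x _ => Finset.sum_le_sum fun y _ =>
    mul_le_mul_of_nonneg_left (h x y) (mul_nonneg (ha x) (hb y))

theorem prodIntegral_nonneg (ha : 0 ≤ a) (hb : 0 ≤ b) {φ : X → Y → ℝ} (h : ∀ x y, 0 ≤ φ x y) :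
    0 ≤ prodIntegral a b φ := by
  simpa [prodIntegral_const] using prodIntegral_mono ha hb h

theorem prodErr_le_mul (ha : 0 ≤ a) (hb : 0 ≤ b) (f F : X → Y → Bool) :
    prodErr a b f F ≤ (∑ x, a x) * ∑ y, b y := by
  refine (prodIntegral_mono ha hb fun x y => ?_).trans_eq ((prodIntegral_const 1).trans (one_mul _))
  split_ifs
  exacts [le_rfl, zero_le_one]

theorem prodIntegral_ite_row (S : Set X) (φ ψ : X → Y → ℝ) :
    prodIntegral a b (fun x y => if x ∈ S then φ x y else ψ x y) =
      prodIntegral (S.indicator a) b φ + prodIntegral (Sᶜ.indicator a) b ψ := by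
  simp only [prodIntegral, ← Finset.sum_add_distrib]
  refine Fintype.sum_congr _ _ fun x => Fintype.sum_congr _ _ fun y => ?_
  by_cases hx : x ∈ S <;> simp [hx]

theorem prodIntegral_ite_column (T : Set Y) (φ ψ : X → Y → ℝ) :
    prodIntegral a b (fun x y => if y ∈ T then φ x y else ψ x y) =
      prodIntegral a (T.indicator b) φ + prodIntegral a (Tᶜ.indicator b) ψ := by
  simp only [prodIntegral, ← Finset.sum_add_distrib]
  refine Fintype.sum_congr _ _ fun x => Fintype.sum_congr _ _ fun y => ?_
  by_cases hy : y ∈ T <;> simp [hy]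

theorem prodIntegral_indicator_row_add_compl (S : Set X) (φ : X → Y → ℝ) :
    prodIntegral (S.indicator a) b φ + prodIntegral (Sᶜ.indicator a) b φ = prodIntegral a b φ := by
  simp only [← prodIntegral_ite_row, ite_self]

theorem prodErr_ite_row (S : Set X) (f F G : X → Y → Bool) :
    prodErr a b f (fun x y => if x ∈ S then F x y else G x y) =
      prodErr (S.indicator a) b f F + prodErr (Sᶜ.indicator a) b f G := by
  rw [prodErr, prodErr, prodErr, ← prodIntegral_ite_row]
  congr! 3 with x y
  by_cases hx : x ∈ S <;> simp [hx]

theorem prodIntegral_indicator_column_add_compl (T : Set Y) (φ : X → Y → ℝ) :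
    prodIntegral a (T.indicator b) φ + prodIntegral a (Tᶜ.indicator b) φ = prodIntegral a b φ := by
  simp only [← prodIntegral_ite_column, ite_self]

theorem prodErr_ite_column (T : Set Y) (f F G : X → Y → Bool) :
    prodErr a b f (fun x y => if y ∈ T then F x y else G x y) =
      prodErr a (T.indicator b) f F + prodErr a (Tᶜ.indicator b) f G := by
  rw [prodErr, prodErr, prodErr, ← prodIntegral_ite_column]
  congr! 3 with x y
  by_cases hy : y ∈ T <;> simp [hy]

theorem sum_indicator_compl_le {S : Set X} {ρ : ℝ} (hS : ρ * ∑ x, a x ≤ ∑ x, S.indicator a x) :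
    ∑ x, Sᶜ.indicator a x ≤ (1 - ρ) * ∑ x, a x := by
  have hsplit : ∑ x, S.indicator a x + ∑ x, Sᶜ.indicator a x = ∑ x, a x := by
    simp only [← Finset.sum_add_distrib, Set.indicator_self_add_compl_apply]
  linarith

end ProdIntegral

theorem prodIntegral_rcov_mul {X Y : Type} [Fintype X] [Fintype Y] {a : X → ℝ} {b : Y → ℝ}
    (w : Finset X × Finset Y → ℝ) (φ : X → Y → ℝ) :
    prodIntegral a b (fun x y => rcov w x y * φ x y) = ∑ R, w R *
      prodIntegral ((R.1 : Set X).indicator a) ((R.2 : Set Y).indicator b) φ := by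
  simp only [prodIntegral, rcov, Finset.mul_sum, Finset.sum_mul]
  rw [Finset.sum_comm_cycle]
  refine Fintype.sum_congr _ _ fun R => Fintype.sum_congr _ _ fun x =>
    Fintype.sum_congr _ _ fun y => ?_
  by_cases hx : x ∈ R.1 <;> by_cases hy : y ∈ R.2 <;> simp [hx, hy]
  ring

theorem prodIntegral_rcov {X Y : Type} [Fintype X] [Fintype Y] {a : X → ℝ} {b : Y → ℝ}
    (w : Finset X × Finset Y → ℝ) :
    prodIntegral a b (rcov w) = ∑ R, w R *
      ((∑ x, (R.1 : Set X).indicator a x) * ∑ y, (R.2 : Set Y).indicator b y) := by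
  simpa only [mul_one, prodIntegral_const, one_mul] using
    prodIntegral_rcov_mul (a := a) (b := b) w fun _ _ => 1

/-- On the product `a ⊗ b`, some protocol of depth at most `d` computes `f` with error at most
the integral of `φ`. -/
def AchievesError {X Y : Type} [Fintype X] [Fintype Y] (f : X → Y → Bool) (d : ℕ) (φ : X → Y → ℝ)
    (a : X → ℝ) (b : Y → ℝ) : Prop :=
  ∃ P : Protocol X Y, P.depth ≤ d ∧ prodErr a b f P.eval ≤ prodIntegral a b φ

/-- Solved strips of at least a `ρ` fraction of the rows or of the columns are split off one after
the other; a player announces the first of their strips that contains their input. -/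
theorem exists_announceComputable_prodErr_le {X Y : Type} [Fintype X] [Fintype Y]
    {f : X → Y → Bool} {d : ℕ} {φ : X → Y → ℝ} (hφ : ∀ x y, 0 ≤ φ x y) {ρ : ℝ} (hρ : ρ ≤ 1)
    (hstrip : ∀ (a : X → ℝ) (b : Y → ℝ), 0 ≤ a → 0 ≤ b → AchievesError f d φ a b ∨
      (∃ S : Set X, ρ * ∑ x, a x ≤ ∑ x, S.indicator a x ∧ AchievesError f d φ (S.indicator a) b) ∨
      ∃ T : Set Y, ρ * ∑ y, b y ≤ ∑ y, T.indicator b y ∧ AchievesError f d φ a (T.indicator b))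
    (n : ℕ) {a : X → ℝ} {b : Y → ℝ} (ha : 0 ≤ a) (hb : 0 ≤ b) :
    ∃ F, AnnounceComputable (n + 1) d F ∧
      prodErr a b f F ≤ prodIntegral a b φ + (1 - ρ) ^ n * ((∑ x, a x) * ∑ y, b y) := by
  have hρ' : 0 ≤ 1 - ρ := sub_nonneg.2 hρ
  induction n generalizing a b with
  | zero =>
    refine ⟨_, .of_protocol (P := .leaf true) d.zero_le, ?_⟩
    have hint := prodIntegral_nonneg ha hb hφ
    have herr := prodErr_le_mul ha hb f (Protocol.leaf true).eval
    rw [pow_zero, one_mul]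
    linarith
  | succ n ih =>
    have hsum_a : 0 ≤ ∑ x, a x := Finset.sum_nonneg fun x _ => ha x
    have hsum_b : 0 ≤ ∑ y, b y := Finset.sum_nonneg fun y _ => hb y
    rcases hstrip a b ha hb with ⟨P, hP, herr⟩ | ⟨S, hS, P, hP, herr⟩ | ⟨T, hT, P, hP, herr⟩
    · exact ⟨_, .of_protocol hP, herr.trans (le_add_of_nonneg_right (by positivity))⟩
    · obtain ⟨F, hF, hFerr⟩ := ih (a := Sᶜ.indicator a) (Set.indicator_nonneg fun x _ => ha x) hb
      refine ⟨_, hF.ite_row S hP, ?_⟩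
      have hsplit := prodIntegral_indicator_row_add_compl (a := a) (b := b) S φ
      have hrem := mul_le_mul_of_nonneg_left
        (mul_le_mul_of_nonneg_right (sum_indicator_compl_le hS) hsum_b) (pow_nonneg hρ' n)
      rw [prodErr_ite_row, pow_succ]
      linarith
    · obtain ⟨F, hF, hFerr⟩ := ih (b := Tᶜ.indicator b) ha (Set.indicator_nonneg fun y _ => hb y)
      refine ⟨_, hF.ite_column T hP, ?_⟩
      have hsplit := prodIntegral_indicator_column_add_compl (a := a) (b := b) T φ
      have hrem := mul_le_mul_of_nonneg_left
        (mul_le_mul_of_nonneg_left (sum_indicator_compl_le hT) hsum_a) (pow_nonneg hρ' n)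
      rw [prodErr_ite_column, pow_succ]
      linarith

theorem AchievesError.mono {X Y : Type} [Fintype X] [Fintype Y] {f : X → Y → Bool} {d : ℕ}
    {φ ψ : X → Y → ℝ} {a : X → ℝ} {b : Y → ℝ} (h : AchievesError f d φ a b)
    (hle : prodIntegral a b φ ≤ prodIntegral a b ψ) : AchievesError f d ψ a b :=
  let ⟨P, hP, herr⟩ := h
  ⟨P, hP, herr.trans hle⟩

theorem achievesError_add_of_strips {X Y : Type} [Fintype X] [Fintype Y]
    {f : X → Y → Bool} {d : ℕ} {φ : X → Y → ℝ} (hφ : ∀ x y, 0 ≤ φ x y) {ρ : ℝ} (hρ : ρ ≤ 1)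
    (hstrip : ∀ (a : X → ℝ) (b : Y → ℝ), 0 ≤ a → 0 ≤ b → AchievesError f d φ a b ∨
      (∃ S : Set X, ρ * ∑ x, a x ≤ ∑ x, S.indicator a x ∧ AchievesError f d φ (S.indicator a) b) ∨
      ∃ T : Set Y, ρ * ∑ y, b y ≤ ∑ y, T.indicator b y ∧ AchievesError f d φ a (T.indicator b))
    (r : ℕ) {a : X → ℝ} {b : Y → ℝ} (ha : 0 ≤ a) (hb : 0 ≤ b) :
    AchievesError f (d + 2 * r) (fun x y => φ x y + (1 - ρ) ^ (2 ^ r - 1)) a b := by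
  obtain ⟨F, hF, herr⟩ :=
    exists_announceComputable_prodErr_le hφ hρ hstrip (2 ^ r - 1) ha hb
  rw [Nat.sub_add_cancel Nat.one_le_two_pow] at hF
  obtain ⟨P, hP, rfl⟩ := hF.exists_protocol
  exact ⟨P, hP, by rwa [prodIntegral_add, prodIntegral_const]⟩

section RectangleStep

variable {X Y : Type} [Fintype X] [Fintype Y] {f : X → Y → Bool} {c δ W ε κ : ℝ}
  {w : Finset X × Finset Y → ℝ} {a a' : X → ℝ} {b b' : Y → ℝ}

theorem sum_indicator_le {ι : Type*} [Fintype ι] {g : ι → ℝ} (hg : 0 ≤ g) (S : Set ι) :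
    ∑ i, S.indicator g i ≤ ∑ i, g i :=
  Finset.sum_le_sum fun i _ => Set.indicator_le_self' (fun i _ => hg i) i

theorem sum_indicator_nonneg {ι : Type*} [Fintype ι] {g : ι → ℝ} (hg : 0 ≤ g) (S : Set ι) :
    0 ≤ ∑ i, S.indicator g i :=
  Finset.sum_nonneg fun i _ => Set.indicator_nonneg (fun i _ => hg i) i

theorem prodIntegral_rcov_le_sum_mul (hw : 0 ≤ w) (ha : 0 ≤ a) (hb : 0 ≤ b) :
    prodIntegral a b (rcov w) ≤ (∑ R, w R) * ((∑ x, a x) * ∑ y, b y) := by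
  rw [prodIntegral_rcov, Finset.sum_mul]
  exact Finset.sum_le_sum fun R _ => mul_le_mul_of_nonneg_left (mul_le_mul (sum_indicator_le ha R.1)
    (sum_indicator_le hb R.2) (sum_indicator_nonneg hb R.2) (Finset.sum_nonneg fun x _ => ha x))
    (hw R)

theorem prodIntegral_rcov_le_mul (hw : ∀ x y, rcov w x y ≤ 1) (ha : 0 ≤ a) (hb : 0 ≤ b) :
    prodIntegral a b (rcov w) ≤ (∑ x, a x) * ∑ y, b y :=
  (prodIntegral_mono ha hb hw).trans_eq ((prodIntegral_const 1).trans (one_mul _))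

theorem sum_pos_of_lt_prodIntegral (hε : 0 ≤ ε) (ha : 0 ≤ a) (hb : 0 ≤ b) {φ : X → Y → ℝ}
    (hφ : ∀ x y, φ x y ≤ 1) (h : ε * ((∑ x, a x) * ∑ y, b y) < prodIntegral a b φ) :
    0 < ∑ x, a x ∧ 0 < ∑ y, b y := by
  have hsum_a : 0 ≤ ∑ x, a x := Finset.sum_nonneg fun x _ => ha x
  have hsum_b : 0 ≤ ∑ y, b y := Finset.sum_nonneg fun y _ => hb y
  have hlt : 0 < (∑ x, a x) * ∑ y, b y := calc
    0 ≤ ε * ((∑ x, a x) * ∑ y, b y) := by positivity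
    _ < prodIntegral a b φ := h
    _ ≤ prodIntegral a b fun _ _ => 1 := prodIntegral_mono ha hb hφ
    _ = (∑ x, a x) * ∑ y, b y := by rw [prodIntegral_const, one_mul]
  exact (mul_pos_iff.1 hlt).resolve_right fun hneg => hneg.1.not_ge hsum_a

theorem IsRectCover.prodIntegral_rcov_le {z z' : Bool} (h : IsRectCover f z c δ W w)
    (hz : z' ≠ z) (hδ : 0 ≤ δ) (ha : 0 ≤ a) (hb : 0 ≤ b) :
    prodIntegral a b (rcov w) ≤ δ * ((∑ x, a x) * ∑ y, b y) +
      prodIntegral a b fun x y => if f x y ≠ z' then 1 else 0 := by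
  rw [← prodIntegral_const, ← prodIntegral_add]
  refine prodIntegral_mono ha hb fun x y => ?_
  split_ifs with hf
  · exact (h.rcov_le_one x y).trans (le_add_of_nonneg_left hδ)
  · exact (h.rcov_le x y (not_not.1 hf ▸ hz)).trans_eq (add_zero δ).symm

theorem IsRectCover.mul_prodIntegral_le {z : Bool} (h : IsRectCover f z c δ W w) (ha : 0 ≤ a)
    (hb : 0 ≤ b) :
    c * prodIntegral a b (fun x y => if f x y = z then 1 else 0) ≤ prodIntegral a b (rcov w) := by
  rw [← prodIntegral_const_mul]
  refine prodIntegral_mono ha hb fun x y => ?_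
  split_ifs with hf
  · simpa only [mul_one] using h.le_rcov x y hf
  · simpa only [mul_zero] using rcov_nonneg h.nonneg x y

theorem IsRectCover.prodIntegral_rcov_mul_le {z : Bool} (h : IsRectCover f z c δ W w) (hδ : 0 ≤ δ)
    (ha : 0 ≤ a) (hb : 0 ≤ b) :
    prodIntegral a b (fun x y => rcov w x y * if f x y ≠ z then 1 else 0) ≤
      δ * ((∑ x, a x) * ∑ y, b y) := by
  rw [← prodIntegral_const]
  refine prodIntegral_mono ha hb fun x y => ?_
  split_ifs with hf
  · simpa only [mul_one] using h.rcov_le x y hf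
  · simpa only [mul_zero] using hδ

/-- An index drawn with probability proportional to `w` has large `M` on average, and rarely a
large ratio `E / M`. -/
theorem exists_le_and_mul_le_of_sum_mul_lt {ι : Type*} [Fintype ι] {w M E : ι → ℝ} {W s t : ℝ}
    (hw : 0 ≤ w) (hE : 0 ≤ E) (hW : 0 < W) (hs : 0 ≤ s) (ht : 0 < t) (hsum : ∑ i, w i ≤ W)
    (hM : s < ∑ i, w i * M i) (hEt : ∑ i, w i * E i ≤ t) :
    ∃ i, s / (2 * W) ≤ M i ∧ s * E i ≤ 2 * t * M i := by
  by_contra! hno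
  have hpoint (i : ι) : 2 * t * M i ≤ 2 * t * (s / (2 * W)) + s * E i := by
    rcases lt_or_ge (M i) (s / (2 * W)) with hlt | hge
    · linarith [mul_le_mul_of_nonneg_left hlt.le (by positivity : 0 ≤ 2 * t),
        mul_nonneg hs (hE i)]
    · exact (hno i hge).le.trans (le_add_of_nonneg_left (by positivity))
  have hsum_le : 2 * t * ∑ i, w i * M i ≤ 2 * t * s := calc
    2 * t * ∑ i, w i * M i = ∑ i, w i * (2 * t * M i) := by
      simp only [Finset.mul_sum, mul_left_comm]
    _ ≤ ∑ i, w i * (2 * t * (s / (2 * W)) + s * E i) :=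
      Finset.sum_le_sum fun i _ => mul_le_mul_of_nonneg_left (hpoint i) (hw i)
    _ = (∑ i, w i) * (2 * t * (s / (2 * W))) + s * ∑ i, w i * E i := by
      simp only [mul_add, Finset.sum_add_distrib, Finset.sum_mul, Finset.mul_sum, mul_left_comm]
    _ ≤ W * (2 * t * (s / (2 * W))) + s * t := by gcongr
    _ = 2 * t * s := by field_simp; ring
  exact hsum_le.not_gt (mul_lt_mul_of_pos_left hM (by positivity))

theorem IsRectCover.exists_biased_rect {z : Bool} (h : IsRectCover f z c δ W w) (hc : 0 < c)
    (hδ : 0 < δ) (hW : 0 < W) (hε : 0 ≤ ε) (ha : 0 ≤ a) (hb : 0 ≤ b)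
    (hz : ε * ((∑ x, a x) * ∑ y, b y) < prodIntegral a b fun x y => if f x y = z then 1 else 0) :
    ∃ (S : Set X) (T : Set Y),
      c * ε / (2 * W) * ∑ x, a x ≤ ∑ x, S.indicator a x ∧
      c * ε / (2 * W) * ∑ y, b y ≤ ∑ y, T.indicator b y ∧
      c * ε * prodIntegral (S.indicator a) (T.indicator b)
          (fun x y => if f x y ≠ z then 1 else 0) ≤
        2 * δ * ((∑ x, S.indicator a x) * ∑ y, T.indicator b y) := by
  obtain ⟨hsum_a, hsum_b⟩ := sum_pos_of_lt_prodIntegral hε ha hb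
    (fun x y => by split_ifs <;> simp) hz
  have hcover := (mul_lt_mul_of_pos_left hz hc).trans_le (h.mul_prodIntegral_le ha hb)
  have hleak := h.prodIntegral_rcov_mul_le hδ.le ha hb
  rw [prodIntegral_rcov] at hcover
  rw [prodIntegral_rcov_mul] at hleak
  obtain ⟨R, hlarge, hbiased⟩ := exists_le_and_mul_le_of_sum_mul_lt h.nonneg
    (fun R => prodIntegral_nonneg (Set.indicator_nonneg fun x _ => ha x)
      (Set.indicator_nonneg fun y _ => hb y) fun x y => by positivity)
    hW (by positivity) (mul_pos hδ (mul_pos hsum_a hsum_b)) h.sum_le hcover hleak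
  refine ⟨R.1, R.2, le_of_mul_le_mul_right ?_ hsum_b, le_of_mul_le_mul_right ?_ hsum_a,
    le_of_mul_le_mul_left ?_ (mul_pos hsum_a hsum_b)⟩
  · linear_combination hlarge +
      mul_le_mul_of_nonneg_left (sum_indicator_le hb R.2) (sum_indicator_nonneg ha R.1)
  · linear_combination hlarge +
      mul_le_mul_of_nonneg_right (sum_indicator_le ha R.1) (sum_indicator_nonneg hb R.2)
  · linear_combination hbiased

theorem exists_add_eq_and_mul_le {ι : Type*} {w p q : ι → ℝ} (hw : 0 ≤ w) (hp : 0 ≤ p)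
    (hq : 0 ≤ q) :
    ∃ w₁ w₂ : ι → ℝ, 0 ≤ w₁ ∧ 0 ≤ w₂ ∧ w₁ + w₂ = w ∧
      (∀ i, w₁ i * p i ≤ w i * q i) ∧ ∀ i, w₂ i * q i ≤ w i * p i := by
  refine ⟨{i | p i ≤ q i}.indicator w, {i | p i ≤ q i}ᶜ.indicator w,
    Set.indicator_nonneg fun i _ => hw i, Set.indicator_nonneg fun i _ => hw i,
    Set.indicator_self_add_compl _ _, fun i => ?_, fun i => ?_⟩ <;>
  have hwp := mul_nonneg (hw i) (hp i) <;> have hwq := mul_nonneg (hw i) (hq i) <;>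
  by_cases hi : p i ≤ q i
  · simpa [hi] using mul_le_mul_of_nonneg_left hi (hw i)
  · simpa [hi] using hwq
  · simpa [hi] using hwp
  · simpa [hi] using mul_le_mul_of_nonneg_left (le_of_not_ge hi) (hw i)

/-- The weighting `w` is split according to whether the rows of a rectangle have a smaller share of
`a'` than `κ` times their share of `a`. -/
theorem exists_add_eq_of_prodIntegral_rcov_le (hw : 0 ≤ w) (hone : ∀ x y, rcov w x y ≤ 1)
    (ha : 0 ≤ a) (ha' : 0 ≤ a') (hb : 0 ≤ b) (hb' : 0 ≤ b') (hsum_a : 0 < ∑ x, a x)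
    (hsum_a' : 0 < ∑ x, a' x) (hκ : 0 < κ)
    (h : prodIntegral a' b' (rcov w) ≤ κ ^ 2 * ((∑ x, a' x) * ∑ y, b' y)) :
    ∃ w₁ w₂ : Finset X × Finset Y → ℝ, 0 ≤ w₁ ∧ 0 ≤ w₂ ∧ w₁ + w₂ = w ∧
      prodIntegral a' b (rcov w₁) ≤ κ * ((∑ x, a' x) * ∑ y, b y) ∧
      prodIntegral a b' (rcov w₂) ≤ κ * ((∑ x, a x) * ∑ y, b' y) := by
  obtain ⟨w₁, w₂, hw₁, hw₂, hadd, hle₁, hle₂⟩ := exists_add_eq_and_mul_le hw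
    (p := fun R => (∑ x, a x) * ∑ x, (R.1 : Set X).indicator a' x)
    (q := fun R => κ * (∑ x, a' x) * ∑ x, (R.1 : Set X).indicator a x)
    (fun R => mul_nonneg hsum_a.le (sum_indicator_nonneg ha' R.1))
    (fun R => mul_nonneg (mul_pos hκ hsum_a').le (sum_indicator_nonneg ha R.1))
  refine ⟨w₁, w₂, hw₁, hw₂, hadd, le_of_mul_le_mul_left ?_ hsum_a,
    le_of_mul_le_mul_left ?_ (mul_pos hκ hsum_a')⟩
  · calc (∑ x, a x) * prodIntegral a' b (rcov w₁)
        ≤ κ * (∑ x, a' x) * prodIntegral a b (rcov w) := by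
          rw [prodIntegral_rcov, prodIntegral_rcov, Finset.mul_sum, Finset.mul_sum]
          exact Finset.sum_le_sum fun R _ => by
            linear_combination mul_le_mul_of_nonneg_right (hle₁ R) (sum_indicator_nonneg hb R.2)
      _ ≤ κ * (∑ x, a' x) * ((∑ x, a x) * ∑ y, b y) :=
          mul_le_mul_of_nonneg_left (prodIntegral_rcov_le_mul hone ha hb) (mul_pos hκ hsum_a').le
      _ = _ := by ring
  · calc κ * (∑ x, a' x) * prodIntegral a b' (rcov w₂)
        ≤ (∑ x, a x) * prodIntegral a' b' (rcov w) := by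
          rw [prodIntegral_rcov, prodIntegral_rcov, Finset.mul_sum _ _ (κ * _),
            Finset.mul_sum _ _ (∑ x, a x)]
          exact Finset.sum_le_sum fun R _ => by
            linear_combination mul_le_mul_of_nonneg_right (hle₂ R) (sum_indicator_nonneg hb' R.2)
      _ ≤ (∑ x, a x) * (κ ^ 2 * ((∑ x, a' x) * ∑ y, b' y)) :=
          mul_le_mul_of_nonneg_left h hsum_a.le
      _ = _ := by ring

end RectangleStep

section CoverHalving

variable {X Y : Type} [Fintype X] [Fintype Y] {f : X → Y → Bool} {c δ W ε κ : ℝ}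
  {u w w₀ : Finset X × Finset Y → ℝ} {a : X → ℝ} {b : Y → ℝ}

/-- On a `true`-biased rectangle a `false`-cover has small coverage, so that half of its weight is
negligible on one of the two strips through the rectangle. -/
theorem IsRectCover.exists_halved_cover (hu : IsRectCover f true c δ W u)
    (hw₀ : IsRectCover f false c δ W w₀) (hc : 0 < c) (hδ : 0 < δ) (hW : 0 < W) (hε : 0 < ε)
    (hκ : 0 < κ) (hδκ : δ + 2 * δ / (c * ε) ≤ κ ^ 2) (hw : 0 ≤ w) (hww₀ : w ≤ w₀) (ha : 0 ≤ a)
    (hb : 0 ≤ b)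
    (htrue : ε * ((∑ x, a x) * ∑ y, b y) <
      prodIntegral a b fun x y => if f x y = true then 1 else 0) :
    ∃ v, 0 ≤ v ∧ v ≤ w ∧ ∑ R, v R ≤ (∑ R, w R) / 2 ∧
      ((∃ S : Set X, c * ε / (2 * W) * ∑ x, a x ≤ ∑ x, S.indicator a x ∧
          prodIntegral (S.indicator a) b (rcov (w - v)) ≤
            κ * ((∑ x, S.indicator a x) * ∑ y, b y)) ∨
        ∃ T : Set Y, c * ε / (2 * W) * ∑ y, b y ≤ ∑ y, T.indicator b y ∧
          prodIntegral a (T.indicator b) (rcov (w - v)) ≤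
            κ * ((∑ x, a x) * ∑ y, T.indicator b y)) := by
  obtain ⟨S, T, hS, hT, hbiased⟩ := hu.exists_biased_rect hc hδ hW hε.le ha hb htrue
  have hsum_a := (sum_pos_of_lt_prodIntegral hε.le ha hb
    (fun x y => by split_ifs <;> simp) htrue).1
  have hSa : 0 ≤ S.indicator a := Set.indicator_nonneg fun x _ => ha x
  have hTb : 0 ≤ T.indicator b := Set.indicator_nonneg fun y _ => hb y
  have hjoint : prodIntegral (S.indicator a) (T.indicator b) (rcov w) ≤
      κ ^ 2 * ((∑ x, S.indicator a x) * ∑ y, T.indicator b y) := by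
    refine (prodIntegral_mono hSa hTb (rcov_mono hww₀)).trans
      ((hw₀.prodIntegral_rcov_le (z' := true) (by decide) hδ.le hSa hTb).trans ?_)
    have hfalse := (le_div_iff₀' (mul_pos hc hε)).2 hbiased
    linear_combination hfalse + mul_le_mul_of_nonneg_right hδκ
      (mul_nonneg (sum_indicator_nonneg ha S) (sum_indicator_nonneg hb T))
  obtain ⟨w₁, w₂, hw₁, hw₂, rfl, hle₁, hle₂⟩ := exists_add_eq_of_prodIntegral_rcov_le hw
    (fun x y => (rcov_mono hww₀ x y).trans (hw₀.rcov_le_one x y)) ha hSa hb hTb hsum_a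
    (lt_of_lt_of_le (by positivity) hS) hκ hjoint
  have hsum : ∑ R, (w₁ + w₂) R = ∑ R, w₁ R + ∑ R, w₂ R := Finset.sum_add_distrib
  rcases le_total (∑ R, w₁ R) (∑ R, w₂ R) with hhalf | hhalf
  · exact ⟨w₁, hw₁, le_add_of_nonneg_right hw₂, by linarith, .inr ⟨T, hT, by
      rwa [add_sub_cancel_left]⟩⟩
  · exact ⟨w₂, hw₂, le_add_of_nonneg_left hw₁, by linarith, .inl ⟨S, hS, by
      rwa [add_sub_cancel_right]⟩⟩

end CoverHalving

section ProtocolOfCovers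

variable {X Y : Type} [Fintype X] [Fintype Y] {f : X → Y → Bool} {c δ W ε κ τ : ℝ}
  {u v w w₀ : Finset X × Finset Y → ℝ} {a : X → ℝ} {b : Y → ℝ}

theorem prodErr_leaf (z : Bool) :
    prodErr a b f (Protocol.leaf z).eval =
      prodIntegral a b fun x y => if f x y = !z then 1 else 0 := by
  rw [prodErr]
  congr! 4 with x y
  cases z <;> cases f x y <;> simp [Protocol.eval]

theorem prodIntegral_rcov_sub_add_prodIntegral_rcov_sub :
    prodIntegral a b (rcov (w₀ - w)) + prodIntegral a b (rcov (w - v)) =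
      prodIntegral a b (rcov (w₀ - v)) := by
  rw [← prodIntegral_add]
  congr! 3 with x y
  rw [← (isLinearMap_rcov x y).map_add, sub_add_sub_cancel]

theorem AchievesError.of_prodIntegral_rcov_le {d : ℕ} {t : ℝ} (hc : 0 < c)
    (h : AchievesError f d (fun x y => c⁻¹ * rcov (w₀ - v) x y + t) a b)
    (hle : prodIntegral a b (rcov (w - v)) ≤ κ * ((∑ x, a x) * ∑ y, b y)) :
    AchievesError f d (fun x y => c⁻¹ * rcov (w₀ - w) x y + (t + κ / c)) a b := by
  refine h.mono ?_
  rw [prodIntegral_add, prodIntegral_add, prodIntegral_const_mul, prodIntegral_const_mul,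
    prodIntegral_const, prodIntegral_const,
    ← prodIntegral_rcov_sub_add_prodIntegral_rcov_sub (w := w)]
  linear_combination mul_le_mul_of_nonneg_left hle (inv_nonneg.2 hc.le)

/-- When the weight of `w` is negligible, so is `f⁻¹(false)` beyond the coverage already lost. -/
theorem IsRectCover.achievesError_zero (hw₀ : IsRectCover f false c δ W w₀) (hc : 0 < c)
    (hw : 0 ≤ w) (hsum : ∑ R, w R ≤ c * ε) (ha : 0 ≤ a) (hb : 0 ≤ b) :
    AchievesError f 0 (fun x y => c⁻¹ * rcov (w₀ - w) x y + ε) a b := by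
  refine ⟨.leaf true, le_rfl, le_of_mul_le_mul_left ?_ hc⟩
  have hmass : 0 ≤ (∑ x, a x) * ∑ y, b y :=
    mul_nonneg (Finset.sum_nonneg fun x _ => ha x) (Finset.sum_nonneg fun y _ => hb y)
  have hrest := (prodIntegral_rcov_le_sum_mul hw ha hb).trans
    (mul_le_mul_of_nonneg_right hsum hmass)
  have hsplit := prodIntegral_rcov_sub_add_prodIntegral_rcov_sub (a := a) (b := b) (w₀ := w₀)
    (w := w) (v := 0)
  have hfalse : c * prodIntegral a b (fun x y => if f x y = !true then 1 else 0) ≤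
      prodIntegral a b (rcov w₀) := hw₀.mul_prodIntegral_le ha hb
  rw [sub_zero, sub_zero] at hsplit
  rw [prodErr_leaf, prodIntegral_add, prodIntegral_const_mul, prodIntegral_const, mul_add,
    mul_inv_cancel_left₀ hc.ne']
  linarith

theorem IsRectCover.achievesError (hu : IsRectCover f true c δ W u)
    (hw₀ : IsRectCover f false c δ W w₀) (hc : 0 < c) (hδ : 0 < δ) (hW : 0 < W) (hε : 0 < ε)
    (hκ : 0 < κ) (hδκ : δ + 2 * δ / (c * ε) ≤ κ ^ 2) (hρ : c * ε / (2 * W) ≤ 1) {r : ℕ}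
    (hτ : (1 - c * ε / (2 * W)) ^ (2 ^ r - 1) ≤ τ) (m : ℕ) (hw : 0 ≤ w) (hww₀ : w ≤ w₀)
    (hsum : ∑ R, w R ≤ c * ε * 2 ^ m) (ha : 0 ≤ a) (hb : 0 ≤ b) :
    AchievesError f (m * (2 * r))
      (fun x y => c⁻¹ * rcov (w₀ - w) x y + (ε + m * (κ / c + τ))) a b := by
  have hτ₀ : 0 ≤ τ := (pow_nonneg (sub_nonneg.2 hρ) _).trans hτ
  induction m generalizing w a b with
  | zero =>
    simpa using hw₀.achievesError_zero hc hw (by simpa using hsum) ha hb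
  | succ m ih =>
    have hlost (x : X) (y : Y) : 0 ≤ c⁻¹ * rcov (w₀ - w) x y :=
      mul_nonneg (inv_nonneg.2 hc.le) (rcov_nonneg (sub_nonneg.2 hww₀) x y)
    have hstrips := achievesError_add_of_strips (f := f) (d := m * (2 * r))
      (φ := fun x y => c⁻¹ * rcov (w₀ - w) x y + (ε + m * (κ / c + τ) + κ / c))
      (fun x y => add_nonneg (hlost x y) (by positivity)) hρ (fun a b ha hb => by
        rcases le_or_gt (prodIntegral a b fun x y => if f x y = true then 1 else 0)
          (ε * ((∑ x, a x) * ∑ y, b y)) with hfew | hmany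
        · refine .inl ⟨.leaf false, Nat.zero_le _, ?_⟩
          rw [prodErr_leaf]
          refine hfew.trans ?_
          rw [← prodIntegral_const]
          exact prodIntegral_mono ha hb fun x y => by
            have : 0 ≤ m * (κ / c + τ) + κ / c := by positivity
            linarith [hlost x y]
        · obtain ⟨v, hv, hvw, hhalf, hstrip⟩ :=
            hu.exists_halved_cover hw₀ hc hδ hW hε hκ hδκ hw hww₀ ha hb hmany
          have hvsum : ∑ R, v R ≤ c * ε * 2 ^ m := by
            rw [pow_succ] at hsum
            linarith
          rcases hstrip with ⟨S, hS, hle⟩ | ⟨T, hT, hle⟩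
          · exact .inr (.inl ⟨S, hS, (ih hv (hvw.trans hww₀) hvsum
              (Set.indicator_nonneg fun x _ => ha x) hb).of_prodIntegral_rcov_le hc hle⟩)
          · exact .inr (.inr ⟨T, hT, (ih hv (hvw.trans hww₀) hvsum ha
              (Set.indicator_nonneg fun y _ => hb y)).of_prodIntegral_rcov_le hc hle⟩)) r ha hb
    rw [Nat.succ_mul]
    refine hstrips.mono (prodIntegral_mono ha hb fun x y => ?_)
    push_cast
    linarith

end ProtocolOfCovers

section Parameters

theorem one_sub_pow_le_one_div {ρ t : ℝ} {n : ℕ} (hρ : 0 ≤ ρ) (hρ_one : ρ ≤ 1) (ht : 0 < t)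
    (h : t ≤ 1 + n * ρ) : (1 - ρ) ^ n ≤ 1 / t := by
  rw [le_div_iff₀ ht]
  calc (1 - ρ) ^ n * t ≤ (1 - ρ) ^ n * (1 + ρ) ^ n :=
        mul_le_mul_of_nonneg_left (h.trans (one_add_mul_le_pow (by linarith) n))
          (pow_nonneg (sub_nonneg.2 hρ_one) n)
    _ = (1 - ρ ^ 2) ^ n := by rw [← mul_pow]; ring
    _ ≤ 1 := pow_le_one₀ (by nlinarith) (by nlinarith)

variable {X Y : Type} [Fintype X] [Fintype Y] {f : X → Y → Bool} {μA : X → ℝ} {μB : Y → ℝ}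

theorem commErr_mul_eq_prodErr (P : Protocol X Y) :
    commErr (fun x y => μA x * μB y) f P = prodErr μA μB f P.eval := by
  simp only [commErr, prodErr, prodIntegral, mul_ite, mul_one, mul_zero]

theorem IsRectCover.exists_commErr_le {c δ W ε κ : ℝ} {u w : Finset X × Finset Y → ℝ}
    (hu : IsRectCover f true c δ W u) (hw : IsRectCover f false c δ W w) (hc : 0 < c) (hδ : 0 < δ)
    (hW : 0 < W) (hε : 0 < ε) (hκ : 0 < κ) (hδκ : δ + 2 * δ / (c * ε) ≤ κ ^ 2)
    (hcW : c * ε ≤ 2 * W) {m : ℕ} (hWm : W ≤ c * ε * 2 ^ m) (hA : IsDist μA) (hB : IsDist μB) :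
    ∃ P : Protocol X Y, P.depth ≤ m * (2 * (2 * m + 5)) ∧
      commErr (fun x y => μA x * μB y) f P ≤ ε + 1 / 16 + m * (κ / c) := by
  have hρ : c * ε / (2 * W) ≤ 1 := div_le_one_of_le₀ hcW (by positivity)
  have hρ_ge : 1 / 2 ^ (m + 1) ≤ c * ε / (2 * W) := by
    rw [div_le_div_iff₀ (by positivity) (by positivity), pow_succ]
    linarith
  have hτ : (1 - c * ε / (2 * W)) ^ (2 ^ (2 * m + 5) - 1) ≤ 1 / 2 ^ (m + 4) := by
    refine one_sub_pow_le_one_div (by positivity) hρ (by positivity) ?_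
    calc (2 ^ (m + 4) : ℝ) = 2 ^ (2 * m + 5) * (1 / 2 ^ (m + 1)) := by field_simp; ring
      _ ≤ 2 ^ (2 * m + 5) * (c * ε / (2 * W)) := by gcongr
      _ ≤ 1 + (2 ^ (2 * m + 5) - 1 : ℕ) * (c * ε / (2 * W)) := by
        rw [Nat.cast_pred (by positivity)]
        push_cast
        linarith
  obtain ⟨P, hdepth, herr⟩ := hu.achievesError hw hc hδ hW hε hκ hδκ hρ hτ m hw.nonneg le_rfl
    (hw.sum_le.trans hWm) hA.1 hB.1
  refine ⟨P, hdepth, ?_⟩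
  have hmτ : m * (1 / 2 ^ (m + 4)) ≤ (1 / 16 : ℝ) := by
    rw [mul_one_div, div_le_iff₀ (by positivity), pow_add]
    linarith [show (m : ℝ) ≤ 2 ^ m by exact_mod_cast Nat.lt_two_pow_self.le]
  rw [sub_self, prodIntegral_add, prodIntegral_const_mul, prodIntegral_const, prodIntegral_rcov,
    hA.2, hB.2] at herr
  rw [commErr_mul_eq_prodErr]
  simp only [Pi.zero_apply, zero_mul, Finset.sum_const_zero, mul_zero, zero_add, mul_one] at herr
  linarith

/-- Amplifying the covers `k`-fold makes `δ / c = (1/3)^k` small against `κ² = 25 (9/25)^k`, while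
`κ / c = 5 (4/5)^k` still decays. -/
theorem exists_commErr_le_of_isRectCover {s k : ℕ}
    (hcover : ∀ z, ∃ w, IsRectCover f z (3 / 4) (1 / 4) (2 ^ s) w)
    (hA : IsDist μA) (hB : IsDist μB) {m : ℕ} (hm : m = s * k + 4 + k) :
    ∃ P : Protocol X Y, P.depth ≤ m * (2 * (2 * m + 5)) ∧
      commErr (fun x y => μA x * μB y) f P ≤ 1 / 5 + m * (5 * (4 / 5) ^ k) := by
  obtain ⟨w₁, h₁⟩ := hcover true
  obtain ⟨w₀, h₀⟩ := hcover false
  obtain ⟨u, hu⟩ := h₁.exists_pow (by norm_num) k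
  obtain ⟨w, hw⟩ := h₀.exists_pow (by norm_num) k
  have hδκ : (1 / 4 : ℝ) ^ k + 2 * (1 / 4) ^ k / ((3 / 4) ^ k * (1 / 10)) ≤
      (5 * (3 / 5) ^ k) ^ 2 := by
    have hquot : (1 / 4 : ℝ) ^ k / (3 / 4) ^ k = (1 / 3) ^ k := by rw [← div_pow]; norm_num
    calc (1 / 4 : ℝ) ^ k + 2 * (1 / 4) ^ k / ((3 / 4) ^ k * (1 / 10))
        = (1 / 4) ^ k + 20 * (1 / 3) ^ k := by rw [← hquot]; ring
      _ ≤ (9 / 25) ^ k + 20 * (9 / 25) ^ k :=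
        add_le_add (pow_le_pow_left₀ (by norm_num) (by norm_num) k) (mul_le_mul_of_nonneg_left
          (pow_le_pow_left₀ (by norm_num) (by norm_num) k) (by norm_num))
      _ ≤ 25 * (9 / 25) ^ k := by linarith [pow_pos (show (0 : ℝ) < 9 / 25 by norm_num) k]
      _ = (5 * (3 / 5) ^ k) ^ 2 := by rw [mul_pow, pow_right_comm]; norm_num
  have hcW : (3 / 4 : ℝ) ^ k * (1 / 10) ≤ 2 * (2 ^ s) ^ k := by
    have hc : (3 / 4 : ℝ) ^ k ≤ 1 := pow_le_one₀ (by norm_num) (by norm_num)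
    have hW : (1 : ℝ) ≤ (2 ^ s) ^ k := one_le_pow₀ (one_le_pow₀ one_le_two)
    linarith
  have hWm : ((2 : ℝ) ^ s) ^ k ≤ (3 / 4) ^ k * (1 / 10) * 2 ^ m := by
    have hgrow : (1 : ℝ) ≤ (3 / 2) ^ k := one_le_pow₀ (by norm_num)
    calc ((2 : ℝ) ^ s) ^ k ≤ (2 ^ s) ^ k * ((8 / 5) * (3 / 4 * 2) ^ k) :=
          le_mul_of_one_le_right (by positivity) (by norm_num; linarith)
      _ = (3 / 4) ^ k * (1 / 10) * 2 ^ m := by rw [hm, pow_add, pow_add, pow_mul, mul_pow]; ring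
  have hκc : 5 * (3 / 5 : ℝ) ^ k / (3 / 4) ^ k = 5 * (4 / 5) ^ k := by
    rw [mul_div_assoc, ← div_pow]
    norm_num
  obtain ⟨P, hdepth, herr⟩ := hu.exists_commErr_le hw (by positivity) (by positivity)
    (by positivity) (by norm_num) (by positivity) hδκ hcW hWm hA hB
  rw [hκc] at herr
  exact ⟨P, hdepth, herr.trans (by linarith)⟩

theorem mul_four_fifths_pow_le {I : ℝ} {l : ℕ} (hl : 1 ≤ l) (hI : I ≤ 2 ^ l) :
    71 * I * (100 * l) * (5 * (4 / 5) ^ (100 * l)) ≤ 1 / 10 := by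
  have hl_le : (l : ℝ) ≤ 2 ^ l := by exact_mod_cast Nat.lt_two_pow_self.le
  calc 71 * I * (100 * l) * (5 * (4 / 5) ^ (100 * l))
      ≤ 71 * 2 ^ l * (100 * 2 ^ l) * (5 * (4 / 5) ^ (100 * l)) := by gcongr
    _ = 35500 * (2 * 2 * (4 / 5) ^ 100) ^ l := by
        rw [mul_pow, mul_pow, ← pow_mul]
        ring
    _ ≤ 35500 * (2 * 2 * (4 / 5) ^ 100) ^ 1 := by
        gcongr ?_ * ?_
        exact pow_le_pow_of_le_one (by norm_num) (by norm_num) hl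
    _ ≤ 1 / 10 := by norm_num

theorem exists_commErr_le_of_IC_le_two_pow (hA : IsDist μA) (hB : IsDist μB)
    (hIC : 2 ≤ IC f (1 / 8)) {l : ℕ} (hl : 1 ≤ l) (hIC_le : IC f (1 / 8) ≤ 2 ^ l) :
    ∃ P : Protocol X Y, (P.depth : ℝ) ≤ 14 * (71 * IC f (1 / 8) * (100 * l)) ^ 2 ∧
      commErr (fun x y => μA x * μB y) f P ≤ 0.49 := by
  set I := IC f (1 / 8)
  obtain ⟨D, hD⟩ : ∃ D, D = ⌊32 * I⌋₊ + 1 := ⟨_, rfl⟩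
  have hD_gt : 32 * I < D := by
    rw [hD]
    exact_mod_cast Nat.lt_floor_add_one (32 * I)
  have hD_le : (D : ℝ) ≤ 32 * I + 1 := by
    rw [hD, Nat.cast_add_one]
    linarith [Nat.floor_le (show 0 ≤ 32 * I by linarith)]
  obtain ⟨m, hm⟩ : ∃ m, m = (2 * D + 5) * (100 * l) + 4 + 100 * l := ⟨_, rfl⟩
  have hm_le : (m : ℝ) ≤ 71 * I * (100 * l) := by
    calc (m : ℝ) ≤ ((2 * D + 10) * (100 * l) : ℕ) := Nat.cast_le.2 (by lia)
      _ ≤ 71 * I * (100 * l) := by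
        push_cast
        gcongr
        linarith
  obtain ⟨P, hdepth, herr⟩ := exists_commErr_le_of_isRectCover
    (fun z => exists_isRectCover_of_IC_lt z (by linarith) hD_gt) hA hB hm
  have hm_ge : 5 ≤ m := by lia
  have hdepth_le : P.depth ≤ 14 * m ^ 2 := by nlinarith
  have hfew : (m : ℝ) * (5 * (4 / 5) ^ (100 * l)) ≤ 1 / 10 :=
    (mul_le_mul_of_nonneg_right hm_le (by positivity)).trans (mul_four_fifths_pow_le hl hIC_le)
  refine ⟨P, ?_, herr.trans ?_⟩
  · calc (P.depth : ℝ) ≤ 14 * (m : ℝ) ^ 2 := by exact_mod_cast hdepth_le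
      _ ≤ 14 * (71 * I * (100 * l)) ^ 2 := by gcongr
  · norm_num at hfew ⊢
    linarith

end Parameters

theorem cc_le_IC_sq_general :
    ∃ C : ℝ, 0 < C ∧
      ∀ (X Y : Type) [Fintype X] [Fintype Y] (f : X → Y → Bool) (μA : X → ℝ) (μB : Y → ℝ),
        IsDist μA → IsDist μB → 2 ≤ IC f (1 / 8) →
        (CCdist (fun x y => μA x * μB y) f 0.49 : ℝ) ≤
          C * (IC f (1 / 8) * Real.logb 2 (IC f (1 / 8))) ^ 2 := by
  refine ⟨14 * 14200 ^ 2, by norm_num, fun X Y _ _ f μA μB hA hB hIC => ?_⟩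
  set I := IC f (1 / 8)
  have hlog : 1 ≤ Real.logb 2 I := by
    rwa [Real.le_logb_iff_rpow_le one_lt_two (by linarith), Real.rpow_one]
  have hceil : (⌈Real.logb 2 I⌉₊ : ℝ) ≤ 2 * Real.logb 2 I := by
    linarith [Nat.ceil_lt_add_one (zero_le_one.trans hlog)]
  have hI_le : I ≤ 2 ^ ⌈Real.logb 2 I⌉₊ := by
    rw [← Real.rpow_natCast, ← Real.logb_le_iff_le_rpow one_lt_two (by linarith)]
    exact Nat.le_ceil _
  obtain ⟨P, hdepth, herr⟩ := exists_commErr_le_of_IC_le_two_pow hA hB hIC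
    (Nat.one_le_ceil_iff.2 (by linarith)) hI_le
  have hCC : CCdist (fun x y => μA x * μB y) f 0.49 ≤ P.depth := Nat.sInf_le ⟨P, le_rfl, herr⟩
  calc (CCdist (fun x y => μA x * μB y) f 0.49 : ℝ) ≤ P.depth := Nat.cast_le.2 hCC
    _ ≤ 14 * (71 * I * (100 * ⌈Real.logb 2 I⌉₊)) ^ 2 := hdepth
    _ ≤ 14 * (71 * I * (100 * (2 * Real.logb 2 I))) ^ 2 := by gcongr
    _ = 14 * 14200 ^ 2 * (I * Real.logb 2 I) ^ 2 := by ring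

/-- **CC vs information complexity (Theorem 1.1, eq. (1)).** There is a universal constant
`C > 0` such that for every `n`, every total `f : {0,1}ⁿ × {0,1}ⁿ → {0,1}` and every
product distribution `μ = μA ⊗ μB` on `{0,1}ⁿ × {0,1}ⁿ` (with `IC_{1/8}(f) ≥ 2`),
`CC^μ_{0.49}(f) ≤ C · (IC_{1/8}(f) · log IC_{1/8}(f))²`. -/
theorem cc_le_IC_sq :
    ∃ C : ℝ, 0 < C ∧
      ∀ (n : ℕ) (f : (Fin n → Bool) → (Fin n → Bool) → Bool)
        (μA μB : (Fin n → Bool) → ℝ), IsDist μA → IsDist μB →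
        2 ≤ IC f (1/8) →
        (CCdist (fun x y => μA x * μB y) f 0.49 : ℝ) ≤
          C * (IC f (1/8) * Real.logb 2 (IC f (1/8))) ^ 2 := by
  obtain ⟨C, hC, hle⟩ := cc_le_IC_sq_general
  exact ⟨C, hC, fun n f μA μB hA hB hIC => hle _ _ f μA μB hA hB hIC⟩
end

section
/- Let f : {0,1}^n × {0,1}^n → {0,1} be a total Boolean function and let μ be a product distribution on {0,1}^n × {0,1}^n. Then there exists a universal constant C > 0 such that the distributional communication complexity of f with error 0.49 under μ satisfies CC^μ_{0.49}(f) ≤ C · (log prt_{1/8}(f) · log log prt_{1/8}(f))^2 (for log prt_{1/8}(f) ≥ 2). -/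
open scoped BigOperators
open scoped Classical

/-!
A fractional partition of total weight `prt f δ` is amplified by taking `2 * l` rectangles
independently and intersecting them. This gives a weighted family of rectangles, each labelled by
the majority of its labels, whose total weight is the `2 * l`-th power of the original one. Let `E`
be the subfamily of label `1` and `D` that of label `0`. By a Chernoff bound, `E` covers the zeros
of `f` and `D` covers the ones of `f` only by an exponentially small amount `α`.

If `f` is not almost constantly `0` on a rectangle `A × B`, then averaging over `E` yields a
subrectangle `S × T` that is not too small and on which `D` has average coverage at most `τ ^ 2`.
For a product distribution, the fraction of `A × B` that a rectangle of `D` covers is the product of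
the fractions of the two sides, so each rectangle of `D` can be assigned to one of the strips
`S × B` and `A × T` in such a way that, by Cauchy–Schwarz, the rectangles assigned to a strip cover
it by at most the geometric mean of the coverages of `S × T` and `A × B`, that is, by at most `τ`.
One of the two classes has at least half of the weight of `D`, and on its strip it can be discarded.

The protocol peels off such strips one after another and recurses on each of them with a family `D`
of half the weight; once that weight is below `1 / 2`, the zeros of `f` are mostly uncovered and the
answer `1` is safe. The resulting tree is deep but has quasi-polynomially many leaves in `prt f δ`,
so balancing it gives depth quadratic in `log (prt f δ)` up to `log log` factors.
-/

namespace Protocol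

variable {X Y : Type}

theorem leavesCount_pos (P : Protocol X Y) : 0 < P.leavesCount := by
  induction P with
  | leaf => exact Nat.one_pos
  | nodeA _ _ _ ih₀ | nodeB _ _ _ ih₀ => exact Nat.add_pos_left ih₀ _

theorem exists_heavy_child (P : Protocol X Y) (hP : 1 < P.leavesCount) :
    ∃ (p : X → Bool) (q : Y → Bool) (H L : Protocol X Y) (graft : Protocol X Y → Protocol X Y),
      P = graft H ∧ L.leavesCount ≤ H.leavesCount ∧
      (∀ Q, (graft Q).leavesCount = Q.leavesCount + L.leavesCount) ∧
      ∀ Q x y, (graft Q).eval x y = if p x && q y then Q.eval x y else L.eval x y := by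
  cases P with
  | leaf b => exact absurd hP (lt_irrefl 1)
  | nodeA g t₀ t₁ =>
    rcases le_total t₀.leavesCount t₁.leavesCount with h | h
    · exact ⟨g, fun _ => true, t₁, t₀, nodeA g t₀, rfl, h, fun _ => Nat.add_comm _ _,
        fun Q x y => by simp [eval]⟩
    · exact ⟨fun x => !g x, fun _ => true, t₀, t₁, (nodeA g · t₁), rfl, h, fun _ => rfl,
        fun Q x y => by cases hg : g x <;> simp [eval, hg]⟩
  | nodeB g t₀ t₁ =>
    rcases le_total t₀.leavesCount t₁.leavesCount with h | h
    · exact ⟨fun _ => true, g, t₁, t₀, nodeB g t₀, rfl, h, fun _ => Nat.add_comm _ _,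
        fun Q x y => by simp [eval]⟩
    · exact ⟨fun _ => true, fun y => !g y, t₀, t₁, (nodeB g · t₁), rfl, h, fun _ => rfl,
        fun Q x y => by cases hg : g y <;> simp [eval, hg]⟩

theorem exists_subtree_leavesCount_le (t : ℕ) (ht : 1 ≤ t) (P : Protocol X Y)
    (hP : t < P.leavesCount) :
    ∃ (p : X → Bool) (q : Y → Bool) (P₁ P₂ : Protocol X Y),
      (∀ x y, P.eval x y = if p x && q y then P₁.eval x y else P₂.eval x y) ∧
      P₁.leavesCount + P₂.leavesCount = P.leavesCount ∧
      P₁.leavesCount ≤ t ∧ t < 2 * P₁.leavesCount := by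
  induction hn : P.leavesCount using Nat.strong_induction_on generalizing P with
  | _ n ih =>
    subst hn
    obtain ⟨p, q, H, L, graft, rfl, hLH, hcount, heval⟩ :=
      P.exists_heavy_child (ht.trans_lt hP)
    have hL := L.leavesCount_pos
    rw [hcount] at hP ih ⊢
    by_cases hH : H.leavesCount ≤ t
    · exact ⟨p, q, H, L, heval H, rfl, hH, by omega⟩
    · obtain ⟨p', q', P₁, P₂, heval', hcount', hle, hlt⟩ := ih _ (by omega) H (by omega) rfl
      refine ⟨fun x => p x && p' x, fun y => q y && q' y, P₁, graft P₂, fun x y => ?_, ?_, hle, hlt⟩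
      · rw [heval, heval, heval']
        cases hp : p x <;> cases hq : q y <;> simp [hp, hq]
      · rw [hcount]
        omega

theorem exists_depth_le_of_three_pow_mul_leavesCount_le (k : ℕ) (P : Protocol X Y)
    (hP : 3 ^ k * P.leavesCount ≤ 4 ^ k) :
    ∃ Q : Protocol X Y, Q.depth ≤ 2 * k ∧ ∀ x y, Q.eval x y = P.eval x y := by
  induction k generalizing P with
  | zero =>
    cases P with
    | leaf b => exact ⟨leaf b, le_rfl, fun _ _ => rfl⟩
    | nodeA g t₀ t₁ | nodeB g t₀ t₁ =>
      have h₀ := t₀.leavesCount_pos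
      have h₁ := t₁.leavesCount_pos
      simp only [leavesCount] at hP
      omega
  | succ k ih =>
    rw [pow_succ, pow_succ] at hP
    by_cases h1 : P.leavesCount ≤ 1
    · obtain ⟨Q, hdepth, heval⟩ := ih P <|
        calc 3 ^ k * P.leavesCount ≤ 3 ^ k * 1 := Nat.mul_le_mul_left _ h1
          _ ≤ 4 ^ k := by rw [mul_one]; exact Nat.pow_le_pow_left (by norm_num) k
      exact ⟨Q, by omega, heval⟩
    · obtain ⟨p, q, P₁, P₂, heval, hcount, hle, hlt⟩ :=
        P.exists_subtree_leavesCount_le (P.leavesCount / 2) (by omega) (by omega)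
      have small (Q : Protocol X Y) (hQ : 4 * Q.leavesCount ≤ 3 * P.leavesCount) :
          3 ^ k * Q.leavesCount ≤ 4 ^ k := by
        have := Nat.mul_le_mul_left (3 ^ k) hQ
        linarith
      obtain ⟨Q₁, hdepth₁, heval₁⟩ := ih P₁ (small _ (by omega))
      obtain ⟨Q₂, hdepth₂, heval₂⟩ := ih P₂ (small _ (by omega))
      refine ⟨nodeA p Q₂ (nodeB q Q₂ Q₁), by simp only [depth]; omega, fun x y => ?_⟩
      cases hp : p x <;> cases hq : q y <;> simp [eval, hp, hq, heval, heval₁, heval₂]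

theorem exists_depth_le_of_leavesCount_le_two_pow {m : ℕ} (P : Protocol X Y)
    (hP : P.leavesCount ≤ 2 ^ m) :
    ∃ Q : Protocol X Y, Q.depth ≤ 6 * m ∧ ∀ x y, Q.eval x y = P.eval x y := by
  obtain ⟨Q, hdepth, heval⟩ := P.exists_depth_le_of_three_pow_mul_leavesCount_le (3 * m) <|
    calc 3 ^ (3 * m) * P.leavesCount ≤ 3 ^ (3 * m) * 2 ^ m := Nat.mul_le_mul_left _ hP
      _ = 54 ^ m := by rw [pow_mul, ← mul_pow]; norm_num
      _ ≤ 64 ^ m := Nat.pow_le_pow_left (by norm_num) m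
      _ = 4 ^ (3 * m) := by rw [pow_mul]; norm_num
  exact ⟨Q, by omega, heval⟩

end Protocol

section Rectangles

variable {X Y ι : Type*}

/-- The total mass of a finite set under a weight function. -/
noncomputable def mass (μ : X → ℝ) (A : Finset X) : ℝ := ∑ x ∈ A, μ x

/-- The fraction of the mass of `A` that lies in `S`, that is, the conditional probability
`μ(S | A)`; it is `0` if `A` has mass `0`. -/
noncomputable def relMass (μ : X → ℝ) (A S : Finset X) : ℝ := mass μ (A ∩ S) / mass μ A

/-- The integral of `φ` over the rectangle `A × B` with respect to the product weight `μ ⊗ ν`. -/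
noncomputable def rectInt (μ : X → ℝ) (ν : Y → ℝ) (A : Finset X) (B : Finset Y)
    (φ : X → Y → ℝ) : ℝ :=
  ∑ x ∈ A, ∑ y ∈ B, φ x y * (μ x * ν y)

/-- The average of `φ` over the rectangle `A × B` with respect to the product weight `μ ⊗ ν`; it
is `0` if the rectangle has mass `0`. -/
noncomputable def rectAvg (μ : X → ℝ) (ν : Y → ℝ) (A : Finset X) (B : Finset Y)
    (φ : X → Y → ℝ) : ℝ :=
  rectInt μ ν A B φ / (mass μ A * mass ν B)

/-- The total `w`-weight of the rectangles `R i`, `i ∈ D`, that contain `(x, y)`: the fractional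
coverage of `(x, y)` by the subfamily `D`. -/
noncomputable def coverage (R : ι → Finset X × Finset Y) (w : ι → ℝ) (D : Finset ι) (x : X)
    (y : Y) : ℝ :=
  ∑ i ∈ D with x ∈ (R i).1 ∧ y ∈ (R i).2, w i

variable {μ : X → ℝ} {ν : Y → ℝ} {A S : Finset X} {B T : Finset Y} {φ ψ : X → Y → ℝ}

theorem mass_nonneg (hμ : ∀ x, 0 ≤ μ x) (A : Finset X) : 0 ≤ mass μ A :=
  Finset.sum_nonneg fun x _ => hμ x

theorem mass_mono (hμ : ∀ x, 0 ≤ μ x) (h : S ⊆ A) : mass μ S ≤ mass μ A :=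
  Finset.sum_le_sum_of_subset_of_nonneg h fun x _ _ => hμ x

theorem mass_sdiff_add (h : S ⊆ A) : mass μ (A \ S) + mass μ S = mass μ A :=
  Finset.sum_sdiff h

theorem relMass_nonneg (hμ : ∀ x, 0 ≤ μ x) (A S : Finset X) : 0 ≤ relMass μ A S :=
  div_nonneg (mass_nonneg hμ _) (mass_nonneg hμ _)

theorem rectInt_const (A : Finset X) (B : Finset Y) (c : ℝ) :
    rectInt μ ν A B (fun _ _ => c) = c * (mass μ A * mass ν B) := by
  simp only [rectInt, mass, Finset.sum_mul_sum, ← Finset.mul_sum]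

theorem rectInt_add : rectInt μ ν A B (fun x y => φ x y + ψ x y) =
    rectInt μ ν A B φ + rectInt μ ν A B ψ := by
  simp only [rectInt, add_mul, Finset.sum_add_distrib]

theorem rectInt_const_mul (c : ℝ) :
    rectInt μ ν A B (fun x y => c * φ x y) = c * rectInt μ ν A B φ := by
  simp only [rectInt, mul_assoc, Finset.mul_sum]

theorem rectInt_mono (hμ : ∀ x, 0 ≤ μ x) (hν : ∀ y, 0 ≤ ν y)
    (h : ∀ x ∈ A, ∀ y ∈ B, φ x y ≤ ψ x y) : rectInt μ ν A B φ ≤ rectInt μ ν A B ψ :=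
  Finset.sum_le_sum fun x hx => Finset.sum_le_sum fun y hy =>
    mul_le_mul_of_nonneg_right (h x hx y hy) (mul_nonneg (hμ x) (hν y))

theorem rectInt_le_const_mul (hμ : ∀ x, 0 ≤ μ x) (hν : ∀ y, 0 ≤ ν y) {c : ℝ}
    (h : ∀ x y, φ x y ≤ c) : rectInt μ ν A B φ ≤ c * (mass μ A * mass ν B) :=
  (rectInt_mono hμ hν fun x _ y _ => h x y).trans_eq (rectInt_const A B c)

theorem rectInt_nonneg (hμ : ∀ x, 0 ≤ μ x) (hν : ∀ y, 0 ≤ ν y) (h : ∀ x y, 0 ≤ φ x y) :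
    0 ≤ rectInt μ ν A B φ :=
  Finset.sum_nonneg fun x _ => Finset.sum_nonneg fun y _ =>
    mul_nonneg (h x y) (mul_nonneg (hμ x) (hν y))

theorem rectInt_congr (h : ∀ x ∈ A, ∀ y ∈ B, φ x y = ψ x y) :
    rectInt μ ν A B φ = rectInt μ ν A B ψ :=
  Finset.sum_congr rfl fun x hx => Finset.sum_congr rfl fun y hy => by rw [h x hx y hy]

theorem rectInt_sdiff_add_left (hS : S ⊆ A) :
    rectInt μ ν (A \ S) B φ + rectInt μ ν S B φ = rectInt μ ν A B φ :=
  Finset.sum_sdiff hS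

theorem rectInt_sdiff_add_right (hT : T ⊆ B) :
    rectInt μ ν A (B \ T) φ + rectInt μ ν A T φ = rectInt μ ν A B φ := by
  simp only [rectInt, ← Finset.sum_add_distrib, Finset.sum_sdiff hT]

variable {R : ι → Finset X × Finset Y} {w : ι → ℝ} {D D' : Finset ι}

theorem coverage_nonneg (hw : ∀ i, 0 ≤ w i) (D : Finset ι) (x : X) (y : Y) :
    0 ≤ coverage R w D x y :=
  Finset.sum_nonneg fun i _ => hw i

theorem coverage_mono (hw : ∀ i, 0 ≤ w i) (h : D' ⊆ D) (x : X) (y : Y) :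
    coverage R w D' x y ≤ coverage R w D x y :=
  mass_mono hw (Finset.filter_subset_filter _ h)

theorem coverage_le_mass (hw : ∀ i, 0 ≤ w i) (D : Finset ι) (x : X) (y : Y) :
    coverage R w D x y ≤ mass w D :=
  mass_mono hw (Finset.filter_subset _ D)

theorem coverage_sdiff_add [DecidableEq ι] (h : D' ⊆ D) (x : X) (y : Y) :
    coverage R w (D \ D') x y + coverage R w D' x y = coverage R w D x y := by
  simp only [coverage, Finset.sum_filter, Finset.sum_sdiff h]

theorem rectInt_coverage_mul (A : Finset X) (B : Finset Y) (φ : X → Y → ℝ) :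
    rectInt μ ν A B (fun x y => coverage R w D x y * φ x y) =
      ∑ i ∈ D, w i * rectInt μ ν (A ∩ (R i).1) (B ∩ (R i).2) φ := by
  calc rectInt μ ν A B (fun x y => coverage R w D x y * φ x y)
      = ∑ x ∈ A, ∑ y ∈ B, ∑ i ∈ D,
          if x ∈ (R i).1 ∧ y ∈ (R i).2 then w i * (φ x y * (μ x * ν y)) else 0 := by
        simp only [rectInt, coverage, Finset.sum_filter, Finset.sum_mul, ite_mul, zero_mul,
          mul_assoc]
    _ = ∑ i ∈ D, ∑ x ∈ A, ∑ y ∈ B,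
          if x ∈ (R i).1 ∧ y ∈ (R i).2 then w i * (φ x y * (μ x * ν y)) else 0 := by
        simp only [Finset.sum_comm (s := B) (t := D)]
        exact Finset.sum_comm
    _ = ∑ i ∈ D, w i * rectInt μ ν (A ∩ (R i).1) (B ∩ (R i).2) φ := by
        simp only [rectInt, ← Finset.filter_mem_eq_inter, Finset.sum_filter, Finset.mul_sum,
          ite_and, mul_ite, mul_zero, Finset.sum_ite_irrel, Finset.sum_const_zero]

theorem rectInt_coverage (A : Finset X) (B : Finset Y) :
    rectInt μ ν A B (coverage R w D) =
      ∑ i ∈ D, w i * (mass μ (A ∩ (R i).1) * mass ν (B ∩ (R i).2)) := by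
  simpa only [mul_one, one_mul, rectInt_const] using
    rectInt_coverage_mul (μ := μ) (ν := ν) (R := R) (w := w) (D := D) A B fun _ _ => 1

theorem rectAvg_coverage (A : Finset X) (B : Finset Y) :
    rectAvg μ ν A B (coverage R w D) =
      ∑ i ∈ D, w i * (relMass μ A (R i).1 * relMass ν B (R i).2) := by
  simp only [rectAvg, relMass, rectInt_coverage, Finset.sum_div, mul_div_assoc, div_mul_div_comm]

theorem rectAvg_nonneg (hμ : ∀ x, 0 ≤ μ x) (hν : ∀ y, 0 ≤ ν y) (h : ∀ x y, 0 ≤ φ x y) :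
    0 ≤ rectAvg μ ν A B φ :=
  div_nonneg (rectInt_nonneg hμ hν h) (mul_nonneg (mass_nonneg hμ A) (mass_nonneg hν B))

theorem rectAvg_le_one (hμ : ∀ x, 0 ≤ μ x) (hν : ∀ y, 0 ≤ ν y) (h : ∀ x y, φ x y ≤ 1) :
    rectAvg μ ν A B φ ≤ 1 :=
  div_le_one_of_le₀ ((rectInt_le_const_mul hμ hν h).trans_eq (one_mul _))
    (mul_nonneg (mass_nonneg hμ A) (mass_nonneg hν B))

end Rectangles

section Averaging

variable {ι : Type*} {D : Finset ι} {w : ι → ℝ}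

theorem exists_lt_and_le_mul_of_lt_sum {m c : ι → ℝ} {W M κ : ℝ} (hw : ∀ i, 0 ≤ w i)
    (hWpos : 0 < W) (hW : mass w D ≤ W) (hM : 0 ≤ M) (hκ : 0 < κ) (hc : ∀ i, 0 ≤ c i)
    (hm : M < ∑ i ∈ D, w i * m i) (hmc : 2 * ∑ i ∈ D, w i * c i ≤ κ * M) :
    ∃ i ∈ D, M / (2 * W) < m i ∧ c i ≤ κ * m i := by
  by_contra! h
  have hbound : ∀ i ∈ D, m i ≤ M / (2 * W) + c i / κ := fun i hi => by
    rcases le_or_gt (m i) (M / (2 * W)) with hi' | hi'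
    · exact hi'.trans (le_add_of_nonneg_right (div_nonneg (hc i) hκ.le))
    · exact ((le_div_iff₀' hκ).2 (h i hi hi').le).trans (le_add_of_nonneg_left (by positivity))
  refine hm.not_ge ?_
  calc ∑ i ∈ D, w i * m i ≤ ∑ i ∈ D, w i * (M / (2 * W) + c i / κ) :=
        Finset.sum_le_sum fun i hi => mul_le_mul_of_nonneg_left (hbound i hi) (hw i)
    _ = mass w D * (M / (2 * W)) + (∑ i ∈ D, w i * c i) / κ := by
        simp only [mul_add, Finset.sum_add_distrib, mass, Finset.sum_mul, Finset.sum_div,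
          mul_div_assoc]
    _ ≤ W * (M / (2 * W)) + M / 2 := by
        refine add_le_add (mul_le_mul_of_nonneg_right hW (by positivity)) ?_
        rw [div_le_iff₀ hκ]
        linarith
    _ = M := by
        field_simp
        ring

theorem sq_sum_mul_le_of_mul_le_mul {G : Finset ι} {s t g h : ι → ℝ} (hG : G ⊆ D)
    (hw : ∀ i, 0 ≤ w i) (hs : ∀ i, 0 ≤ s i) (ht : ∀ i, 0 ≤ t i) (hg : ∀ i, 0 ≤ g i)
    (hh : ∀ i, 0 ≤ h i) (hle : ∀ i ∈ G, s i * h i ≤ g i * t i) :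
    (∑ i ∈ G, w i * (s i * h i)) ^ 2 ≤
      (∑ i ∈ D, w i * (s i * t i)) * ∑ i ∈ D, w i * (g i * h i) := by
  have hst (i : ι) : 0 ≤ w i * (s i * t i) := mul_nonneg (hw i) (mul_nonneg (hs i) (ht i))
  have hgh (i : ι) : 0 ≤ w i * (g i * h i) := mul_nonneg (hw i) (mul_nonneg (hg i) (hh i))
  calc (∑ i ∈ G, w i * (s i * h i)) ^ 2
      ≤ (∑ i ∈ G, w i * (s i * t i)) * ∑ i ∈ G, w i * (g i * h i) := by
        refine Finset.sum_sq_le_sum_mul_sum_of_sq_le_mul G (fun i _ => hst i) (fun i _ => hgh i)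
          fun i hi => ?_
        calc (w i * (s i * h i)) ^ 2 = w i ^ 2 * (s i * h i) * (s i * h i) := by ring
          _ ≤ w i ^ 2 * (s i * h i) * (g i * t i) :=
              mul_le_mul_of_nonneg_left (hle i hi)
                (mul_nonneg (sq_nonneg _) (mul_nonneg (hs i) (hh i)))
          _ = w i * (s i * t i) * (w i * (g i * h i)) := by ring
    _ ≤ (∑ i ∈ D, w i * (s i * t i)) * ∑ i ∈ D, w i * (g i * h i) :=
        mul_le_mul (Finset.sum_le_sum_of_subset_of_nonneg hG fun i _ _ => hst i)
          (Finset.sum_le_sum_of_subset_of_nonneg hG fun i _ _ => hgh i)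
          (Finset.sum_nonneg fun i _ => hgh i) (Finset.sum_nonneg fun i _ => hst i)

end Averaging

section Peeling

variable {X Y ι : Type*} {μ : X → ℝ} {ν : Y → ℝ} {R : ι → Finset X × Finset Y} {w : ι → ℝ}
  {A S : Finset X} {B T : Finset Y} {D : Finset ι}

-- A rectangle goes to the half whose side it meets in the relatively smaller part; then its
-- weight on that half is at most the geometric mean of its weights on `S × T` and on `A × B`.
theorem exists_subset_rectAvg_coverage_le {τ : ℝ} (hμ : ∀ x, 0 ≤ μ x) (hν : ∀ y, 0 ≤ ν y)
    (hw : ∀ i, 0 ≤ w i) (hτ : 0 ≤ τ) (hD : ∀ x y, coverage R w D x y ≤ 1)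
    (hST : rectAvg μ ν S T (coverage R w D) ≤ τ ^ 2) :
    ∃ G ⊆ D, rectAvg μ ν S B (coverage R w G) ≤ τ ∧
      rectAvg μ ν A T (coverage R w (D \ G)) ≤ τ := by
  let G := {i ∈ D | relMass μ S (R i).1 * relMass ν B (R i).2 ≤
    relMass μ A (R i).1 * relMass ν T (R i).2}
  have hmul : rectAvg μ ν S T (coverage R w D) * rectAvg μ ν A B (coverage R w D) ≤ τ ^ 2 :=
    (mul_le_of_le_one_right (rectAvg_nonneg hμ hν (coverage_nonneg hw D))
      (rectAvg_le_one hμ hν hD)).trans hST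
  have hμ' (A : Finset X) (i : ι) := relMass_nonneg hμ A (R i).1
  have hν' (B : Finset Y) (i : ι) := relMass_nonneg hν B (R i).2
  simp only [rectAvg_coverage] at hmul ⊢
  refine ⟨G, Finset.filter_subset _ _, ?_, ?_⟩
  · refine le_of_sq_le_sq ((sq_sum_mul_le_of_mul_le_mul (Finset.filter_subset _ D) hw
      (hμ' S) (hν' T) (hμ' A) (hν' B) fun i hi => ?_).trans hmul) hτ
    exact (Finset.mem_filter.1 hi).2
  · simp only [mul_comm (relMass μ _ _)] at hmul ⊢
    refine le_of_sq_le_sq ((sq_sum_mul_le_of_mul_le_mul Finset.sdiff_subset hw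
      (hν' T) (hμ' S) (hν' B) (hμ' A) fun i hi => ?_).trans hmul) hτ
    have hlt := lt_of_not_ge fun hle =>
      (Finset.mem_sdiff.1 hi).2 (Finset.mem_filter.2 ⟨(Finset.mem_sdiff.1 hi).1, hle⟩)
    linarith

theorem mul_le_left_of_mul_le_mul {σ a b s t : ℝ} (hb : 0 < b) (hs : 0 ≤ s) (htb : t ≤ b)
    (h : σ * (a * b) ≤ s * t) : σ * a ≤ s := by
  refine le_of_mul_le_mul_right ?_ hb
  calc σ * a * b = σ * (a * b) := mul_assoc σ a b
    _ ≤ s * t := h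
    _ ≤ s * b := mul_le_mul_of_nonneg_left htb hs

theorem exists_sparse_subrectangle {E : Finset ι} {φ : X → Y → ℝ} {α η τ W : ℝ}
    (hμ : ∀ x, 0 ≤ μ x) (hν : ∀ y, 0 ≤ ν y) (hw : ∀ i, 0 ≤ w i) (hη : 0 < η) (hτ : 0 < τ)
    (hα : 4 * α ≤ η * τ ^ 2) (hWpos : 0 < W) (hW : mass w E ≤ W)
    (hφ : ∀ x y, φ x y ≤ 2 * coverage R w E x y)
    (hED : ∀ x y, coverage R w E x y * coverage R w D x y ≤ α)
    (hA : η * (mass μ A * mass ν B) < rectInt μ ν A B φ) :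
    ∃ S ⊆ A, ∃ T ⊆ B, 0 < mass μ S ∧ 0 < mass ν T ∧
      η / (4 * W) * mass μ A ≤ mass μ S ∧ η / (4 * W) * mass ν B ≤ mass ν T ∧
      rectAvg μ ν S T (coverage R w D) ≤ τ ^ 2 := by
  have hm : 0 ≤ mass μ A * mass ν B := mul_nonneg (mass_nonneg hμ A) (mass_nonneg hν B)
  have hlarge : η / 2 * (mass μ A * mass ν B) <
      ∑ i ∈ E, w i * (mass μ (A ∩ (R i).1) * mass ν (B ∩ (R i).2)) := by
    have := hA.trans_le (rectInt_mono hμ hν fun x _ y _ => hφ x y)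
    rw [rectInt_const_mul, rectInt_coverage] at this
    linarith
  have hsparse : 2 * ∑ i ∈ E, w i * rectInt μ ν (A ∩ (R i).1) (B ∩ (R i).2) (coverage R w D) ≤
      τ ^ 2 * (η / 2 * (mass μ A * mass ν B)) := by
    rw [← rectInt_coverage_mul]
    have := rectInt_le_const_mul (A := A) (B := B) hμ hν hED
    have := mul_le_mul_of_nonneg_right hα hm
    linarith
  obtain ⟨i, -, hi, hiD⟩ := exists_lt_and_le_mul_of_lt_sum hw hWpos hW
    (mul_nonneg (half_pos hη).le hm) (pow_pos hτ 2)
    (fun i => rectInt_nonneg hμ hν (coverage_nonneg hw D)) hlarge hsparse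
  set S := A ∩ (R i).1
  set T := B ∩ (R i).2
  have hSA : mass μ S ≤ mass μ A := mass_mono hμ Finset.inter_subset_left
  have hTB : mass ν T ≤ mass ν B := mass_mono hν Finset.inter_subset_left
  have hST : 0 < mass μ S * mass ν T := lt_of_le_of_lt (by positivity) hi
  have hS : 0 < mass μ S := pos_of_mul_pos_left hST (mass_nonneg hν T)
  have hT : 0 < mass ν T := pos_of_mul_pos_right hST hS.le
  have hle : η / (4 * W) * (mass μ A * mass ν B) ≤ mass μ S * mass ν T :=
    le_trans (le_of_eq (by ring)) hi.le
  refine ⟨S, Finset.inter_subset_left, T, Finset.inter_subset_left, hS, hT,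
    mul_le_left_of_mul_le_mul (hT.trans_le hTB) hS.le hTB hle,
    mul_le_left_of_mul_le_mul (hS.trans_le hSA) hT.le hSA ?_, (div_le_iff₀ hST).2 hiD⟩
  rwa [mul_comm (mass ν B), mul_comm (mass ν T)]

/-- A strip of relative mass at least `σ`, either `S × B` with `S ⊆ A` or `A × T` with `T ⊆ B`, can
be peeled off the rectangle `A × B`: on this strip, at least half of the weight of the family `D`
can be discarded at the cost of losing average coverage at most `τ`. -/
def Peelable (μ : X → ℝ) (ν : Y → ℝ) (R : ι → Finset X × Finset Y) (w : ι → ℝ) (σ τ : ℝ)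
    (A : Finset X) (B : Finset Y) (D : Finset ι) : Prop :=
  ∃ D' ⊆ D, 2 * mass w D' ≤ mass w D ∧
    ((∃ S ⊆ A, σ * mass μ A ≤ mass μ S ∧
        rectInt μ ν S B (coverage R w (D \ D')) ≤ τ * (mass μ S * mass ν B)) ∨
      ∃ T ⊆ B, σ * mass ν B ≤ mass ν T ∧
        rectInt μ ν A T (coverage R w (D \ D')) ≤ τ * (mass μ A * mass ν T))

theorem rectInt_le_or_peelable {E : Finset ι} {φ : X → Y → ℝ} {α η τ W : ℝ}
    (hμ : ∀ x, 0 ≤ μ x) (hν : ∀ y, 0 ≤ ν y) (hw : ∀ i, 0 ≤ w i) (hη : 0 < η) (hτ : 0 < τ)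
    (hα : 4 * α ≤ η * τ ^ 2) (hWpos : 0 < W) (hW : mass w E ≤ W)
    (hφ : ∀ x y, φ x y ≤ 2 * coverage R w E x y) (hD : ∀ x y, coverage R w D x y ≤ 1)
    (hED : ∀ x y, coverage R w E x y * coverage R w D x y ≤ α) :
    rectInt μ ν A B φ ≤ η * (mass μ A * mass ν B) ∨ Peelable μ ν R w (η / (4 * W)) τ A B D := by
  refine or_iff_not_imp_left.2 fun h => ?_
  obtain ⟨S, hSA, T, hTB, hS, hT, hσS, hσT, hST⟩ :=
    exists_sparse_subrectangle hμ hν hw hη hτ hα hWpos hW hφ hED (not_le.1 h)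
  obtain ⟨G, hGD, hG, hG'⟩ :=
    exists_subset_rectAvg_coverage_le (A := A) (B := B) hμ hν hw hτ.le hD hST
  have hB : 0 < mass ν B := hT.trans_le (mass_mono hν hTB)
  have hA : 0 < mass μ A := hS.trans_le (mass_mono hμ hSA)
  rw [rectAvg, div_le_iff₀ (by positivity)] at hG hG'
  have hsplit := mass_sdiff_add (μ := w) hGD
  rcases le_total (mass w (D \ G)) (mass w G) with hle | hle
  · refine ⟨D \ G, Finset.sdiff_subset, by linarith, Or.inl ⟨S, hSA, hσS, ?_⟩⟩
    rwa [Finset.sdiff_sdiff_eq_self hGD]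
  · exact ⟨G, hGD, by linarith, Or.inr ⟨T, hTB, hσT, hG'⟩⟩

end Peeling

section Recursion

variable {X Y : Type} {ι : Type*} {μ : X → ℝ} {ν : Y → ℝ} {f : X → Y → Bool}
  {R : ι → Finset X × Finset Y} {w : ι → ℝ} {A S : Finset X} {B T : Finset Y} {D D' : Finset ι}
  {L L' L₁ L₂ : ℕ} {e e' r η σ τ : ℝ} {P : Protocol X Y} {c c' : X → Y → ℝ} {x : X} {y : Y}

/-- The error indicator of `P`, discounted on the zeros of `f` by twice the missing coverage
`1 - c`: the discount excuses the errors made after most of the weight around an input has been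
discarded. -/
noncomputable def excessErr (f : X → Y → Bool) (P : Protocol X Y) (c : X → Y → ℝ) (x : X)
    (y : Y) : ℝ :=
  (if P.eval x y ≠ f x y then 1 else 0) - if f x y then 0 else 2 * (1 - c x y)

theorem excessErr_leaf_true_nonpos (hc : c x y ≤ 1 / 2) : excessErr f (.leaf true) c x y ≤ 0 := by
  cases hf : f x y <;> norm_num [excessErr, Protocol.eval, hf]
  linarith

theorem excessErr_leaf_false_le (hc : c x y ≤ 1) :
    excessErr f (.leaf false) c x y ≤ if f x y then 1 else 0 := by
  cases hf : f x y <;> norm_num [excessErr, Protocol.eval, hf]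
  linarith

theorem excessErr_le_add (hc : c' x y ≤ c x y) :
    excessErr f P c x y ≤ excessErr f P c' x y + 2 * (c x y - c' x y) := by
  unfold excessErr
  split_ifs <;> linarith

/-- On the rectangle `A × B`, some protocol with at most `L` leaves has average excess error at
most `e` with respect to the coverage by the family `D`. -/
def HasProtocol (μ : X → ℝ) (ν : Y → ℝ) (f : X → Y → Bool) (R : ι → Finset X × Finset Y)
    (w : ι → ℝ) (D : Finset ι) (A : Finset X) (B : Finset Y) (L : ℕ) (e : ℝ) : Prop :=
  ∃ P : Protocol X Y, P.leavesCount ≤ L ∧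
    rectInt μ ν A B (excessErr f P (coverage R w D)) ≤ e * (mass μ A * mass ν B)

theorem HasProtocol.mono (hμ : ∀ x, 0 ≤ μ x) (hν : ∀ y, 0 ≤ ν y) (hL : L ≤ L') (he : e ≤ e')
    (h : HasProtocol μ ν f R w D A B L e) : HasProtocol μ ν f R w D A B L' e' := by
  obtain ⟨P, hP, hPe⟩ := h
  exact ⟨P, hP.trans hL, hPe.trans
    (mul_le_mul_of_nonneg_right he (mul_nonneg (mass_nonneg hμ A) (mass_nonneg hν B)))⟩

theorem hasProtocol_of_two_mul_mass_le_one (hμ : ∀ x, 0 ≤ μ x) (hν : ∀ y, 0 ≤ ν y)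
    (hw : ∀ i, 0 ≤ w i) (hD : 2 * mass w D ≤ 1) : HasProtocol μ ν f R w D A B 1 0 :=
  ⟨.leaf true, le_rfl, rectInt_le_const_mul hμ hν fun x y => excessErr_leaf_true_nonpos <| by
    linarith [coverage_le_mass (R := R) hw D x y]⟩

theorem hasProtocol_of_rectInt_le (hμ : ∀ x, 0 ≤ μ x) (hν : ∀ y, 0 ≤ ν y)
    (hD : ∀ x y, coverage R w D x y ≤ 1)
    (h : rectInt μ ν A B (fun x y => if f x y then 1 else 0) ≤ e * (mass μ A * mass ν B)) :
    HasProtocol μ ν f R w D A B 1 e :=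
  ⟨.leaf false, le_rfl,
    (rectInt_mono hμ hν fun x _ y _ => excessErr_leaf_false_le (hD x y)).trans h⟩

theorem HasProtocol.of_subset (hμ : ∀ x, 0 ≤ μ x) (hν : ∀ y, 0 ≤ ν y) (hw : ∀ i, 0 ≤ w i)
    (hD' : D' ⊆ D)
    (hτ : rectInt μ ν A B (coverage R w (D \ D')) ≤ τ * (mass μ A * mass ν B))
    (h : HasProtocol μ ν f R w D' A B L e) : HasProtocol μ ν f R w D A B L (e + 2 * τ) := by
  obtain ⟨P, hP, hPe⟩ := h
  refine ⟨P, hP, ?_⟩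
  calc rectInt μ ν A B (excessErr f P (coverage R w D))
      ≤ rectInt μ ν A B (fun x y => excessErr f P (coverage R w D') x y +
          2 * coverage R w (D \ D') x y) :=
        rectInt_mono hμ hν fun x _ y _ => by
          rw [eq_sub_of_add_eq (coverage_sdiff_add hD' x y)]
          exact excessErr_le_add (coverage_mono hw hD' x y)
    _ = rectInt μ ν A B (excessErr f P (coverage R w D')) +
          2 * rectInt μ ν A B (coverage R w (D \ D')) := by
        rw [rectInt_add, rectInt_const_mul]
    _ ≤ (e + 2 * τ) * (mass μ A * mass ν B) := by linarith

theorem mul_sdiff_mass_add_le (hr : 0 ≤ r) (hS : S ⊆ A) (hσ : σ * mass μ A ≤ mass μ S) :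
    (e + r) * mass μ (A \ S) + e * mass μ S ≤ (e + r * (1 - σ)) * mass μ A := by
  rw [eq_sub_of_add_eq (mass_sdiff_add hS)]
  linarith [mul_le_mul_of_nonneg_left hσ hr]

theorem HasProtocol.glue_left (hν : ∀ y, 0 ≤ ν y) (hr : 0 ≤ r) (hS : S ⊆ A)
    (hσ : σ * mass μ A ≤ mass μ S) (h₁ : HasProtocol μ ν f R w D (A \ S) B L₁ (e + r))
    (h₂ : HasProtocol μ ν f R w D S B L₂ e) :
    HasProtocol μ ν f R w D A B (L₁ + L₂) (e + r * (1 - σ)) := by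
  obtain ⟨P₁, hP₁, he₁⟩ := h₁
  obtain ⟨P₂, hP₂, he₂⟩ := h₂
  refine ⟨.nodeA (· ∈ S) P₁ P₂, Nat.add_le_add hP₁ hP₂, ?_⟩
  rw [← rectInt_sdiff_add_left hS]
  have hout : rectInt μ ν (A \ S) B (excessErr f (.nodeA (· ∈ S) P₁ P₂) (coverage R w D)) =
      rectInt μ ν (A \ S) B (excessErr f P₁ (coverage R w D)) :=
    rectInt_congr fun x hx y _ => by simp [excessErr, Protocol.eval, (Finset.mem_sdiff.1 hx).2]
  have hin : rectInt μ ν S B (excessErr f (.nodeA (· ∈ S) P₁ P₂) (coverage R w D)) =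
      rectInt μ ν S B (excessErr f P₂ (coverage R w D)) :=
    rectInt_congr fun x hx y _ => by simp [excessErr, Protocol.eval, hx]
  have := mul_le_mul_of_nonneg_right (mul_sdiff_mass_add_le (e := e) hr hS hσ) (mass_nonneg hν B)
  linarith

theorem HasProtocol.glue_right (hμ : ∀ x, 0 ≤ μ x) (hr : 0 ≤ r) (hT : T ⊆ B)
    (hσ : σ * mass ν B ≤ mass ν T) (h₁ : HasProtocol μ ν f R w D A (B \ T) L₁ (e + r))
    (h₂ : HasProtocol μ ν f R w D A T L₂ e) :
    HasProtocol μ ν f R w D A B (L₁ + L₂) (e + r * (1 - σ)) := by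
  obtain ⟨P₁, hP₁, he₁⟩ := h₁
  obtain ⟨P₂, hP₂, he₂⟩ := h₂
  refine ⟨.nodeB (· ∈ T) P₁ P₂, Nat.add_le_add hP₁ hP₂, ?_⟩
  rw [← rectInt_sdiff_add_right hT]
  have hout : rectInt μ ν A (B \ T) (excessErr f (.nodeB (· ∈ T) P₁ P₂) (coverage R w D)) =
      rectInt μ ν A (B \ T) (excessErr f P₁ (coverage R w D)) :=
    rectInt_congr fun x _ y hy => by simp [excessErr, Protocol.eval, (Finset.mem_sdiff.1 hy).2]
  have hin : rectInt μ ν A T (excessErr f (.nodeB (· ∈ T) P₁ P₂) (coverage R w D)) =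
      rectInt μ ν A T (excessErr f P₂ (coverage R w D)) :=
    rectInt_congr fun x _ y hy => by simp [excessErr, Protocol.eval, hy]
  have := mul_le_mul_of_nonneg_right (mul_sdiff_mass_add_le (e := e) hr hT hσ) (mass_nonneg hμ A)
  linarith

theorem hasProtocol_of_forall_peelable_of_forall_half (hμ : ∀ x, 0 ≤ μ x) (hν : ∀ y, 0 ≤ ν y)
    (hw : ∀ i, 0 ≤ w i) (hD : ∀ x y, coverage R w D x y ≤ 1) (hη : 0 ≤ η) (hηe : η ≤ e)
    (hτ : 0 ≤ τ) (hσ : σ ≤ 1)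
    (hpeel : ∀ A B, rectInt μ ν A B (fun x y => if f x y then 1 else 0) ≤
      η * (mass μ A * mass ν B) ∨ Peelable μ ν R w σ τ A B D)
    (hhalf : ∀ D' ⊆ D, 2 * mass w D' ≤ mass w D → ∀ A B, HasProtocol μ ν f R w D' A B L e)
    (M : ℕ) (A : Finset X) (B : Finset Y) :
    HasProtocol μ ν f R w D A B (M * L + 1) (e + 2 * τ + (1 - σ) ^ M) := by
  have hρ : 0 ≤ 1 - σ := sub_nonneg.2 hσ
  induction M generalizing A B with
  | zero =>
    refine (hasProtocol_of_rectInt_le hμ hν hD ?_).mono hμ hν (by omega)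
      (by rw [pow_zero]; linarith : (1 : ℝ) ≤ _)
    exact rectInt_le_const_mul hμ hν fun x y => by split_ifs <;> norm_num
  | succ M ih =>
    rcases hpeel A B with hsparse | ⟨D', hD', hmass, ⟨S, hS, hσS, hτS⟩ | ⟨T, hT, hσT, hτT⟩⟩
    · exact (hasProtocol_of_rectInt_le hμ hν hD hsparse).mono hμ hν (by omega)
        (by linarith [pow_nonneg hρ (M + 1)])
    all_goals rw [add_one_mul, add_right_comm, pow_succ]
    · exact (ih (A \ S) B).glue_left hν (pow_nonneg hρ M) hS hσS
        ((hhalf D' hD' hmass S B).of_subset hμ hν hw hD' hτS)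
    · exact (ih A (B \ T)).glue_right hμ (pow_nonneg hρ M) hT hσT
        ((hhalf D' hD' hmass A T).of_subset hμ hν hw hD' hτT)

theorem hasProtocol_of_forall_peelable (hμ : ∀ x, 0 ≤ μ x) (hν : ∀ y, 0 ≤ ν y)
    (hw : ∀ i, 0 ≤ w i) (hD : ∀ x y, coverage R w D x y ≤ 1) (hη : 0 ≤ η) (hτ : 0 ≤ τ)
    (hσ : σ ≤ 1)
    (hpeel : ∀ D' ⊆ D, ∀ A B, rectInt μ ν A B (fun x y => if f x y then 1 else 0) ≤
      η * (mass μ A * mass ν B) ∨ Peelable μ ν R w σ τ A B D')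
    (N : ℕ) {j : ℕ} (hj : 2 * mass w D ≤ 2 ^ j) (A : Finset X) (B : Finset Y) :
    HasProtocol μ ν f R w D A B ((N + 1) ^ j) (η + j * (2 * τ + (1 - σ) ^ N)) := by
  have hloss : 0 ≤ 2 * τ + (1 - σ) ^ N :=
    add_nonneg (mul_nonneg zero_le_two hτ) (pow_nonneg (sub_nonneg.2 hσ) N)
  induction j generalizing D A B with
  | zero =>
    exact (hasProtocol_of_two_mul_mass_le_one hμ hν hw (by simpa using hj)).mono hμ hν le_rfl
      (by simpa using hη)
  | succ j ih =>
    have hhalf (D') (hD' : D' ⊆ D) (hmass : 2 * mass w D' ≤ mass w D) :=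
      ih (fun x y => (coverage_mono hw hD' x y).trans (hD x y))
        (fun D'' hD'' => hpeel D'' (hD''.trans hD')) (by rw [pow_succ] at hj; linarith)
    refine (hasProtocol_of_forall_peelable_of_forall_half hμ hν hw hD hη
      (le_add_of_nonneg_right (mul_nonneg j.cast_nonneg hloss)) hτ hσ (hpeel D subset_rfl) hhalf
      N A B).mono hμ hν ?_ (le_of_eq (by push_cast; ring))
    rw [pow_succ, mul_comm, mul_add_one]
    exact Nat.add_le_add_left (Nat.one_le_pow _ _ N.succ_pos) _

theorem commErr_eq_rectInt [Fintype X] [Fintype Y] : commErr (fun x y => μ x * ν y) f P =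
    rectInt μ ν Finset.univ Finset.univ (fun x y => if P.eval x y ≠ f x y then 1 else 0) := by
  simp only [commErr, rectInt, ite_mul, one_mul, zero_mul]

theorem HasProtocol.exists_commErr_le [Fintype X] [Fintype Y] {α : ℝ} (hμ : IsDist μ)
    (hν : IsDist ν) (hα : 0 ≤ α) (hD : ∀ x y, f x y = false → 1 - α ≤ coverage R w D x y)
    (h : HasProtocol μ ν f R w D Finset.univ Finset.univ L e) :
    ∃ P : Protocol X Y, P.leavesCount ≤ L ∧ commErr (fun x y => μ x * ν y) f P ≤ e + 2 * α := by
  obtain ⟨P, hP, hPe⟩ := h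
  refine ⟨P, hP, ?_⟩
  have hμ1 : mass μ Finset.univ = 1 := hμ.2
  have hν1 : mass ν Finset.univ = 1 := hν.2
  rw [hμ1, hν1, one_mul, mul_one] at hPe
  calc commErr (fun x y => μ x * ν y) f P
      ≤ rectInt μ ν Finset.univ Finset.univ
          (fun x y => excessErr f P (coverage R w D) x y + 2 * α) := by
        refine commErr_eq_rectInt.trans_le (rectInt_mono hμ.1 hν.1 fun x _ y _ => ?_)
        unfold excessErr
        cases hf : f x y
        · simp only [Bool.false_eq_true, if_false]
          linarith [hD x y hf]
        · simp only [if_true]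
          linarith
    _ = rectInt μ ν Finset.univ Finset.univ (excessErr f P (coverage R w D)) + 2 * α := by
        rw [rectInt_add, rectInt_const, hμ1, hν1, one_mul, mul_one]
    _ ≤ e + 2 * α := by linarith

theorem exists_protocol_of_coverage [Fintype X] [Fintype Y] {E : Finset ι} {α W : ℝ}
    (hμ : IsDist μ) (hν : IsDist ν) (hw : ∀ i, 0 ≤ w i) (hη : 0 < η) (hτ : 0 < τ)
    (hα : 0 ≤ α) (hατ : 4 * α ≤ η * τ ^ 2) (hηW : η ≤ 4 * W) (hEW : mass w E ≤ W)
    (hD : ∀ x y, coverage R w D x y ≤ 1)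
    (hED : ∀ x y, coverage R w E x y * coverage R w D x y ≤ α)
    (htrue : ∀ x y, f x y = true → 1 / 2 ≤ coverage R w E x y)
    (hfalse : ∀ x y, f x y = false → 1 - α ≤ coverage R w D x y)
    (N : ℕ) {j : ℕ} (hj : 2 * mass w D ≤ 2 ^ j) :
    ∃ P : Protocol X Y, P.leavesCount ≤ (N + 1) ^ j ∧
      commErr (fun x y => μ x * ν y) f P ≤
        η + j * (2 * τ + (1 - η / (4 * W)) ^ N) + 2 * α := by
  have hpeel (D') (hD' : D' ⊆ D) (A B) :
      rectInt μ ν A B (fun x y => if f x y then 1 else 0) ≤ η * (mass μ A * mass ν B) ∨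
        Peelable μ ν R w (η / (4 * W)) τ A B D' :=
    rectInt_le_or_peelable hμ.1 hν.1 hw hη hτ hατ (by linarith) hEW
      (fun x y => by
        have := coverage_nonneg (R := R) hw E x y
        split_ifs with h
        · linarith [htrue x y h]
        · linarith)
      (fun x y => (coverage_mono hw hD' x y).trans (hD x y))
      fun x y => (mul_le_mul_of_nonneg_left (coverage_mono hw hD' x y)
        (coverage_nonneg hw E x y)).trans (hED x y)
  exact (hasProtocol_of_forall_peelable hμ.1 hν.1 hw hD hη.le hτ.le
    (div_le_one_of_le₀ hηW (hη.le.trans hηW)) hpeel N hj Finset.univ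
    Finset.univ).exists_commErr_le hμ hν hα hfalse

end Recursion

section Amplification

variable {X Y : Type} [Fintype X] [Fintype Y] {f : X → Y → Bool} {δ δ' : ℝ}
  {w : Bool → Finset X × Finset Y → ℝ} {x : X} {y : Y} {z : Bool} {m l : ℕ}

/-- The feasible solutions of the linear program defining `prt f δ`: the rectangle `Q` is output
with label `z` with weight `w z Q`. -/
structure IsFractionalPartition (f : X → Y → Bool) (δ : ℝ) (w : Bool → Finset X × Finset Y → ℝ) :
    Prop where
  nonneg : ∀ z Q, 0 ≤ w z Q
  le_rcov : ∀ x y, 1 - δ ≤ rcov (w (f x y)) x y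
  rcov_add_rcov : ∀ x y, rcov (w false) x y + rcov (w true) x y = 1

theorem IsFractionalPartition.mono (h : IsFractionalPartition f δ w) (hδ : δ ≤ δ') :
    IsFractionalPartition f δ' w :=
  ⟨h.nonneg, fun x y => (sub_le_sub_left hδ 1).trans (h.le_rcov x y), h.rcov_add_rcov⟩

theorem IsFractionalPartition.rcov_le_of_ne (h : IsFractionalPartition f δ w) (hz : f x y ≠ z) :
    rcov (w z) x y ≤ δ := by
  have hle := h.le_rcov x y
  have hadd := h.rcov_add_rcov x y
  cases z
  · rw [Bool.eq_true_of_not_eq_false hz] at hle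
    linarith
  · rw [Bool.eq_false_of_not_eq_true hz] at hle
    linarith

/-- The product weight of a tuple of labelled rectangles. -/
noncomputable def tupleWeight (w : Bool → Finset X × Finset Y → ℝ)
    (p : Fin m → Bool × (Finset X × Finset Y)) : ℝ :=
  ∏ i, w (p i).1 (p i).2

/-- The intersection of the rectangles of a tuple. -/
noncomputable def tupleInter (p : Fin m → Bool × (Finset X × Finset Y)) : Finset X × Finset Y :=
  (Finset.univ.filter fun x => ∀ i, x ∈ (p i).2.1, Finset.univ.filter fun y => ∀ i, y ∈ (p i).2.2)

/-- The tuples of `2 * l` labelled rectangles at least half of whose labels are `z`. -/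
noncomputable def majority (X Y : Type) [Fintype X] [Fintype Y] (z : Bool) (l : ℕ) :
    Finset (Fin (2 * l) → Bool × (Finset X × Finset Y)) :=
  {p | l ≤ Finset.card {i | (p i).1 = z}}

theorem tupleWeight_nonneg {X Y : Type} {w : Bool → Finset X × Finset Y → ℝ}
    (hw : ∀ z Q, 0 ≤ w z Q) (p : Fin m → Bool × (Finset X × Finset Y)) : 0 ≤ tupleWeight w p :=
  Finset.prod_nonneg fun _ _ => hw _ _

theorem mass_tupleWeight_univ (w : Bool → Finset X × Finset Y → ℝ) (m : ℕ) :
    mass (tupleWeight w) (Finset.univ : Finset (Fin m → _)) =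
      (∑ Q, (w false Q + w true Q)) ^ m := by
  calc mass (tupleWeight w) (Finset.univ : Finset (Fin m → _))
      = (∑ a : Bool × (Finset X × Finset Y), w a.1 a.2) ^ m :=
        (Fintype.sum_pow (fun a : Bool × (Finset X × Finset Y) => w a.1 a.2) m).symm
    _ = (∑ Q, (w false Q + w true Q)) ^ m := by
        rw [Fintype.sum_prod_type, Fintype.sum_bool, Finset.sum_add_distrib, add_comm]

theorem coverage_tupleWeight_univ (w : Bool → Finset X × Finset Y → ℝ) (m : ℕ) (x : X) (y : Y) :
    coverage tupleInter (tupleWeight w) (Finset.univ : Finset (Fin m → _)) x y =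
      (rcov (w false) x y + rcov (w true) x y) ^ m := by
  have hterm (p : Fin m → Bool × (Finset X × Finset Y)) :
      (if x ∈ (tupleInter p).1 ∧ y ∈ (tupleInter p).2 then tupleWeight w p else 0) =
        ∏ i, if x ∈ (p i).2.1 ∧ y ∈ (p i).2.2 then w (p i).1 (p i).2 else 0 := by
    simp only [tupleInter, tupleWeight, Finset.prod_ite_zero, Finset.mem_filter, Finset.mem_univ,
      true_and, forall_const, forall_and]
  calc coverage tupleInter (tupleWeight w) (Finset.univ : Finset (Fin m → _)) x y
      = (∑ a : Bool × (Finset X × Finset Y),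
          if x ∈ a.2.1 ∧ y ∈ a.2.2 then w a.1 a.2 else 0) ^ m := by
        simp only [coverage, Finset.sum_filter, hterm]
        exact (Fintype.sum_pow (fun a : Bool × (Finset X × Finset Y) =>
          if x ∈ a.2.1 ∧ y ∈ a.2.2 then w a.1 a.2 else 0) m).symm
    _ = (rcov (w false) x y + rcov (w true) x y) ^ m := by
        rw [Fintype.sum_prod_type, Fintype.sum_bool, add_comm, rcov, rcov]

theorem rcov_const_mul (t : ℝ) (u : Finset X × Finset Y → ℝ) :
    rcov (fun Q => t * u Q) x y = t * rcov u x y := by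
  simp only [rcov, Finset.mul_sum, mul_ite, mul_zero]

-- Exponential Markov inequality: tilting the label `z` by `t` multiplies the weight of every
-- tuple in `majority X Y z l` by at least `t ^ l`.
theorem pow_mul_coverage_majority_le (h : IsFractionalPartition f δ w) {t : ℝ} (ht : 1 ≤ t) :
    t ^ l * coverage tupleInter (tupleWeight w) (majority X Y z l) x y ≤
      (1 + (t - 1) * rcov (w z) x y) ^ (2 * l) := by
  have ht0 : 0 ≤ t := zero_le_one.trans ht
  let tilted : Bool → Finset X × Finset Y → ℝ := fun b Q => (if b = z then t else 1) * w b Q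
  have htilted (p : Fin (2 * l) → _) :
      tupleWeight tilted p = t ^ Finset.card {i | (p i).1 = z} * tupleWeight w p := by
    simp only [tupleWeight, tilted, Finset.prod_mul_distrib, Finset.prod_ite, Finset.prod_const,
      one_pow, mul_one]
  calc t ^ l * coverage tupleInter (tupleWeight w) (majority X Y z l) x y
      ≤ coverage tupleInter (tupleWeight tilted) (majority X Y z l) x y := by
        rw [coverage, coverage, Finset.mul_sum]
        refine Finset.sum_le_sum fun p hp => ?_
        rw [htilted]
        exact mul_le_mul_of_nonneg_right
          (pow_le_pow_right₀ ht (Finset.mem_filter.1 (Finset.mem_filter.1 hp).1).2)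
          (tupleWeight_nonneg h.nonneg p)
    _ ≤ coverage tupleInter (tupleWeight tilted) Finset.univ x y :=
        coverage_mono (fun p => htilted p ▸
          mul_nonneg (pow_nonneg ht0 _) (tupleWeight_nonneg h.nonneg p))
          (Finset.subset_univ _) x y
    _ = (1 + (t - 1) * rcov (w z) x y) ^ (2 * l) := by
        rw [coverage_tupleWeight_univ, rcov_const_mul, rcov_const_mul]
        congr 1
        cases z <;> simp only [if_true, Bool.false_eq_true, Bool.true_eq_false, if_false] <;>
          linear_combination h.rcov_add_rcov x y

theorem coverage_majority_le (h : IsFractionalPartition f δ w) (hδ0 : 0 < δ) (hδ : δ ≤ 1 / 2)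
    (hz : f x y ≠ z) :
    coverage tupleInter (tupleWeight w) (majority X Y z l) x y ≤ (4 * δ * (1 - δ)) ^ l := by
  set t := (1 - δ) / δ
  have ht : 1 ≤ t := (one_le_div hδ0).2 (by linarith)
  have htδ : t * δ = 1 - δ := div_mul_cancel₀ _ hδ0.ne'
  have hrcov : 0 ≤ rcov (w z) x y :=
    Finset.sum_nonneg fun Q _ => by split_ifs; exacts [h.nonneg z Q, le_rfl]
  refine le_of_mul_le_mul_left ?_ (pow_pos (zero_lt_one.trans_le ht) l)
  calc t ^ l * coverage tupleInter (tupleWeight w) (majority X Y z l) x y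
      ≤ (1 + (t - 1) * rcov (w z) x y) ^ (2 * l) := pow_mul_coverage_majority_le h ht
    _ ≤ (1 + (t - 1) * δ) ^ (2 * l) := by
        have := sub_nonneg.2 ht
        gcongr
        exact h.rcov_le_of_ne hz
    _ = t ^ l * (4 * δ * (1 - δ)) ^ l := by
        rw [pow_mul, ← mul_pow, sub_one_mul, htδ]
        congr 1
        linear_combination (4 * (δ - 1)) * htδ

theorem univ_sdiff_majority_true_subset (X Y : Type) [Fintype X] [Fintype Y] (l : ℕ) :
    Finset.univ \ majority X Y true l ⊆ majority X Y false l := by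
  intro p hp
  have hlt : Finset.card {i | (p i).1 = true} < l := by
    simpa [majority] using hp
  have hadd := Finset.card_filter_add_card_filter_not (s := Finset.univ) fun i => (p i).1 = true
  simp only [Bool.not_eq_true, Finset.card_univ, Fintype.card_fin] at hadd
  simp only [majority, Finset.mem_filter, Finset.mem_univ, true_and]
  omega

theorem IsFractionalPartition.exists_protocol {μ : X → ℝ} {ν : Y → ℝ} {α η τ W : ℝ}
    (h : IsFractionalPartition f δ w) (hδ0 : 0 < δ) (hδ : δ ≤ 1 / 2) (hμ : IsDist μ)
    (hν : IsDist ν) (hη : 0 < η) (hτ : 0 < τ) (hαl : (4 * δ * (1 - δ)) ^ l ≤ α)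
    (hα : α ≤ 1 / 2) (hατ : 4 * α ≤ η * τ ^ 2) (hηW : η ≤ 4 * W)
    (hW : (∑ Q, (w false Q + w true Q)) ^ (2 * l) ≤ W) (N : ℕ) {j : ℕ} (hj : 2 * W ≤ 2 ^ j) :
    ∃ P : Protocol X Y, P.leavesCount ≤ (N + 1) ^ j ∧
      commErr (fun x y => μ x * ν y) f P ≤
        η + j * (2 * τ + (1 - η / (4 * W)) ^ N) + 2 * α := by
  have hw := tupleWeight_nonneg (m := 2 * l) h.nonneg
  have hmass (G : Finset (Fin (2 * l) → _)) : mass (tupleWeight w) G ≤ W :=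
    (mass_mono hw (Finset.subset_univ G)).trans ((mass_tupleWeight_univ w _).trans_le hW)
  set E := majority X Y true l
  have hadd (x y) : coverage tupleInter (tupleWeight w) (Finset.univ \ E) x y +
      coverage tupleInter (tupleWeight w) E x y = 1 := by
    rw [coverage_sdiff_add (Finset.subset_univ E), coverage_tupleWeight_univ, h.rcov_add_rcov,
      one_pow]
  have hE (x y) (hf : f x y ≠ true) : coverage tupleInter (tupleWeight w) E x y ≤ α :=
    (coverage_majority_le h hδ0 hδ hf).trans hαl
  have hD (x y) (hf : f x y ≠ false) :
      coverage tupleInter (tupleWeight w) (Finset.univ \ E) x y ≤ α :=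
    (coverage_mono hw (univ_sdiff_majority_true_subset X Y l) x y).trans
      ((coverage_majority_le h hδ0 hδ hf).trans hαl)
  have hnonneg (G x y) := coverage_nonneg (R := tupleInter) hw G x y
  have hα0 : 0 ≤ α := (pow_nonneg (mul_nonneg (by linarith) (by linarith)) l).trans hαl
  refine exists_protocol_of_coverage (D := Finset.univ \ E) hμ hν hw hη hτ hα0 hατ hηW (hmass E)
    (fun x y => by linarith [hadd x y, hnonneg E x y]) (fun x y => ?_)
    (fun x y hf => by linarith [hadd x y, hD x y (by simp [hf])])
    (fun x y hf => by linarith [hadd x y, hE x y (by simp [hf])])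
    N ((mul_le_mul_of_nonneg_left (hmass _) zero_le_two).trans hj)
  cases hf : f x y
  · exact (mul_le_of_le_one_right (hnonneg E x y) (by linarith [hadd x y, hnonneg E x y])).trans
      (hE x y (by simp [hf]))
  · exact (mul_le_of_le_one_left (hnonneg _ x y)
      (by linarith [hadd x y, hnonneg (Finset.univ \ E) x y])).trans (hD x y (by simp [hf]))

end Amplification

section Parameters

variable {X Y : Type} [Fintype X] [Fintype Y] {f : X → Y → Bool} {μ : X → ℝ} {ν : Y → ℝ}
  {w : Bool → Finset X × Finset Y → ℝ} {δ ε : ℝ}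

theorem one_sub_pow_le_half_pow {σ : ℝ} {N h : ℕ} (hσ : σ ≤ 1) (hN : h ≤ σ * N) :
    (1 - σ) ^ N ≤ (1 / 2) ^ h := by
  calc (1 - σ) ^ N ≤ Real.exp (-σ) ^ N :=
        pow_le_pow_left₀ (sub_nonneg.2 hσ) (Real.one_sub_le_exp_neg σ) N
    _ = Real.exp (-(σ * N)) := by rw [← Real.exp_nat_mul]; ring_nf
    _ ≤ Real.exp (h * -1) := Real.exp_le_exp.2 (by linarith)
    _ = Real.exp (-1) ^ h := Real.exp_nat_mul _ h
    _ ≤ (1 / 2) ^ h :=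
        pow_le_pow_left₀ (Real.exp_nonneg _) (Real.exp_neg_one_lt_half.le.trans_eq (by norm_num)) h

theorem four_mul_div_sixteen_pow_le {η : ℝ} (hη : 0 ≤ η) (hη1 : η ≤ 1) {h : ℕ} (hh : 1 ≤ h) :
    4 * (η / 16) ^ h ≤ η * ((1 / 2) ^ h) ^ 2 := by
  obtain ⟨k, rfl⟩ := Nat.exists_eq_add_of_le' hh
  calc 4 * (η / 16) ^ (k + 1) = η / 4 * (η / 16) ^ k := by ring
    _ ≤ η / 4 * (1 / 4) ^ k := by gcongr; linarith
    _ = η * ((1 / 2) ^ (k + 1)) ^ 2 := by rw [← pow_mul, mul_comm (k + 1) 2, pow_mul]; ring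

theorem IsFractionalPartition.exists_protocol_leavesCount_le (hw : IsFractionalPartition f δ w)
    (hδ0 : 0 < δ) (hδ : δ ≤ 1 / 2) (hμ : IsDist μ) (hν : IsDist ν) (hε0 : 0 < ε) (hε : ε ≤ 1)
    {K a q h : ℕ} (hK : (4 * δ * (1 - δ)) ^ K ≤ ε / 32) (ha : 8 ≤ ε * a)
    (hq : ∑ Q, (w false Q + w true Q) ≤ 2 ^ q) (hh : 1 ≤ h)
    (hqh : 8 * ((2 * K * q * h + 1 : ℕ) : ℝ) ≤ ε * 2 ^ h) :
    ∃ P : Protocol X Y,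
      P.leavesCount ≤ (a * h * 2 ^ (2 * K * q * h) + 1) ^ (2 * K * q * h + 1) ∧
      commErr (fun x y => μ x * ν y) f P ≤ ε := by
  set J := 2 * K * q * h + 1 with hJ
  set W : ℝ := 2 ^ (2 * K * q * h) with hWdef
  have hβ : 0 ≤ 4 * δ * (1 - δ) := mul_nonneg (by linarith) (by linarith)
  have hW1 : 1 ≤ W := one_le_pow₀ one_le_two
  have hW : (∑ Q, (w false Q + w true Q)) ^ (2 * (K * h)) ≤ W :=
    calc (∑ Q, (w false Q + w true Q)) ^ (2 * (K * h)) ≤ (2 ^ q) ^ (2 * (K * h)) :=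
          pow_le_pow_left₀ (Finset.sum_nonneg fun Q _ =>
            add_nonneg (hw.nonneg false Q) (hw.nonneg true Q)) hq _
      _ = W := by rw [← pow_mul, hWdef]; ring_nf
  have hα : (4 * δ * (1 - δ)) ^ (K * h) ≤ (ε / 2 / 16) ^ h := by
    rw [pow_mul]
    exact pow_le_pow_left₀ (pow_nonneg hβ K) (hK.trans_eq (by ring)) h
  have hατ : 4 * (ε / 2 / 16) ^ h ≤ ε / 2 * ((1 / 2) ^ h) ^ 2 :=
    four_mul_div_sixteen_pow_le (by linarith) (by linarith) hh
  have hN : (1 - ε / 2 / (4 * W)) ^ (a * h * 2 ^ (2 * K * q * h)) ≤ (1 / 2) ^ h := by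
    refine one_sub_pow_le_half_pow (div_le_one_of_le₀ (by linarith) (by linarith)) ?_
    push_cast
    calc (h : ℝ) ≤ ε * a / 8 * h := le_mul_of_one_le_left h.cast_nonneg (by linarith)
      _ = ε / 2 / (4 * W) * (a * h * W) := by field_simp; ring
  have hτ1 : ((1 / 2) ^ h : ℝ) ≤ 1 := pow_le_one₀ (by norm_num) (by norm_num)
  have hτ2 : (1 / 2 : ℝ) ^ h * 2 ^ h = 1 := by rw [← mul_pow]; norm_num
  set τ : ℝ := (1 / 2) ^ h
  have hτ0 : 0 < τ := by positivity
  have hα2 : 2 * (ε / 2 / 16) ^ h ≤ τ := by nlinarith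
  obtain ⟨P, hleaves, herr⟩ := hw.exists_protocol hδ0 hδ hμ hν (half_pos hε0) hτ0 hα (by linarith)
    hατ (by linarith) hW (a * h * 2 ^ (2 * K * q * h)) (j := J) (by rw [hJ, pow_succ', hWdef])
  have hJ1 : (1 : ℝ) ≤ J := Nat.one_le_cast.2 (Nat.le_add_left 1 _)
  have hJτ : 8 * (J : ℝ) * τ ≤ ε := by
    calc 8 * (J : ℝ) * τ ≤ ε * 2 ^ h * τ := by gcongr
      _ = ε := by rw [mul_assoc, mul_comm _ τ, hτ2, mul_one]
  refine ⟨P, hleaves, ?_⟩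
  calc commErr (fun x y => μ x * ν y) f P
      ≤ ε / 2 + J * (2 * τ + (1 - ε / 2 / (4 * W)) ^ (a * h * 2 ^ (2 * K * q * h))) +
          2 * (ε / 2 / 16) ^ h := herr
    _ ≤ ε / 2 + J * (2 * τ + τ) + J * τ := by
        grw [hN, hα2, ← le_mul_of_one_le_left hτ0.le hJ1]
    _ = ε / 2 + 8 * J * τ / 2 := by ring
    _ ≤ ε := by linarith

theorem mul_two_pow_add_one_pow_le_two_pow {K a q h : ℕ} (hq : 1 ≤ q) (hh : 1 ≤ h) :
    (a * h * 2 ^ (2 * K * q * h) + 1) ^ (2 * K * q * h + 1) ≤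
      2 ^ ((a + 2 * K) * (2 * K + 1) * (q * h) ^ 2) := by
  have hqh : 1 ≤ q * h := Nat.mul_pos hq hh
  calc (a * h * 2 ^ (2 * K * q * h) + 1) ^ (2 * K * q * h + 1)
      ≤ ((a * h + 1) * 2 ^ (2 * K * q * h)) ^ (2 * K * q * h + 1) := by
        rw [add_one_mul]
        gcongr
        exact Nat.one_le_two_pow
    _ ≤ (2 ^ (a * h) * 2 ^ (2 * K * q * h)) ^ (2 * K * q * h + 1) := by
        gcongr
        exact Nat.lt_two_pow_self
    _ = 2 ^ ((a * h + 2 * K * (q * h)) * (2 * K * (q * h) + 1)) := by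
        rw [← pow_add, ← pow_mul]; ring_nf
    _ ≤ 2 ^ ((a * (q * h) + 2 * K * (q * h)) * (2 * K * (q * h) + q * h)) := by
        gcongr
        · exact one_le_two
        · exact Nat.le_mul_of_pos_left h hq
    _ = _ := by ring_nf

theorem IsFractionalPartition.exists_protocol_depth_le (hδ0 : 0 < δ) (hδ : δ < 1 / 2)
    (hε0 : 0 < ε) (hε : ε ≤ 1) :
    ∃ K : ℕ, 0 < K ∧ ∀ {X Y : Type} [Fintype X] [Fintype Y] {f : X → Y → Bool} {μ : X → ℝ}
      {ν : Y → ℝ} {w : Bool → Finset X × Finset Y → ℝ} {q h : ℕ}, IsFractionalPartition f δ w →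
      IsDist μ → IsDist ν → ∑ Q, (w false Q + w true Q) ≤ 2 ^ q → 1 ≤ q → 1 ≤ h →
      K * (q * h) ≤ 2 ^ h →
      ∃ P : Protocol X Y, P.depth ≤ K * (q * h) ^ 2 ∧
        commErr (fun x y => μ x * ν y) f P ≤ ε := by
  obtain ⟨k, hk⟩ := exists_pow_lt_of_lt_one (show 0 < ε / 32 by positivity)
    (show 4 * δ * (1 - δ) < 1 by nlinarith [sq_pos_of_neg (sub_neg.2 hδ)])
  obtain ⟨a, ha⟩ := exists_nat_ge (8 / ε)
  rw [div_le_iff₀' hε0] at ha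
  have ha0 : 0 < a := Nat.pos_of_ne_zero fun h => by norm_num [h] at ha
  refine ⟨6 * (a + 2 * k) * (2 * k + 1), by positivity, ?_⟩
  intro X Y _ _ f μ ν w q h hw hμ hν hsum hq hh hlarge
  have hJ : a * (2 * k * q * h + 1) ≤ 2 ^ h :=
    calc a * (2 * k * q * h + 1) ≤ a * (2 * k * q * h + q * h) := by
          gcongr
          exact Nat.mul_pos hq hh
      _ = a * (2 * k + 1) * (q * h) := by ring
      _ ≤ 6 * (a + 2 * k) * (2 * k + 1) * (q * h) := by
          gcongr
          omega
      _ ≤ 2 ^ h := hlarge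
  have hqh : 8 * ((2 * k * q * h + 1 : ℕ) : ℝ) ≤ ε * 2 ^ h :=
    calc 8 * ((2 * k * q * h + 1 : ℕ) : ℝ) ≤ ε * a * (2 * k * q * h + 1 : ℕ) := by gcongr
      _ = ε * (a * (2 * k * q * h + 1) : ℕ) := by push_cast; ring
      _ ≤ ε * 2 ^ h := by gcongr; exact_mod_cast hJ
  obtain ⟨P, hleaves, herr⟩ :=
    hw.exists_protocol_leavesCount_le hδ0 hδ.le hμ hν hε0 hε hk.le ha hsum hh hqh
  obtain ⟨Q, hdepth, heval⟩ :=
    P.exists_depth_le_of_leavesCount_le_two_pow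
      (hleaves.trans (mul_two_pow_add_one_pow_le_two_pow hq hh))
  refine ⟨Q, hdepth.trans_eq (by ring), ?_⟩
  simpa only [commErr, heval] using herr

theorem exists_isFractionalPartition_of_prt_lt {v : ℝ} (hne : prt f δ ≠ 0) (hv : prt f δ < v) :
    ∃ w, IsFractionalPartition f δ w ∧ ∑ Q, (w false Q + w true Q) < v := by
  obtain ⟨_, ⟨w, hnonneg, hle, hadd, rfl⟩, hlt⟩ := exists_lt_of_csInf_lt
    (Set.nonempty_iff_ne_empty.2 fun h => hne (by rw [prt, h, Real.sInf_empty])) hv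
  exact ⟨w, ⟨hnonneg, hle, hadd⟩, hlt⟩

theorem mul_four_pow_mul_le_two_pow {K r : ℕ} (hK : 1 ≤ K) (hr : 1 ≤ r) :
    K * (4 ^ r * (8 * K * r)) ≤ 2 ^ (8 * K * r) := by
  have hm : 1 ≤ K * r := Nat.mul_pos hK hr
  calc K * (4 ^ r * (8 * K * r)) = 8 * K * (K * r) * 4 ^ r := by ring
    _ ≤ 8 * (K * r) * (K * r) * 4 ^ (K * r) := by
        gcongr
        · exact Nat.le_mul_of_pos_right K hr
        · norm_num
        · exact Nat.le_mul_of_pos_left r hK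
    _ ≤ 2 ^ 3 * 2 ^ (K * r) * 2 ^ (K * r) * (2 ^ 2) ^ (K * r) := by
        gcongr
        · norm_num
        · exact Nat.lt_two_pow_self.le
        · exact Nat.lt_two_pow_self.le
        · norm_num
    _ = 2 ^ (3 + 4 * (K * r)) := by rw [← pow_mul, ← pow_add, ← pow_add, ← pow_add]; ring_nf
    _ ≤ 2 ^ (8 * K * r) := Nat.pow_le_pow_right two_pos (by linarith)

theorem exists_lt_and_mul_le_two_pow {c : ℝ} (hc : 2 ≤ c) {K : ℕ} (hK : 0 < K) :
    ∃ q h : ℕ, 1 ≤ q ∧ 1 ≤ h ∧ c < q ∧ K * (q * h) ≤ 2 ^ h ∧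
      (q * h : ℝ) ≤ 32 * K * (c * Real.logb 2 c) := by
  have hd : 1 ≤ Real.logb 2 c := by
    rw [Real.le_logb_iff_rpow_le one_lt_two (by linarith), Real.rpow_one]
    exact hc
  set r := ⌈Real.logb 2 c⌉₊
  have hr : (r : ℝ) < Real.logb 2 c + 1 := Nat.ceil_lt_add_one (by linarith)
  have hr1 : 1 ≤ r := Nat.one_le_ceil_iff.2 (by linarith)
  have hcr : c ≤ 2 ^ r := by
    rw [← Real.rpow_natCast, ← Real.logb_le_iff_le_rpow one_lt_two (by linarith)]
    exact Nat.le_ceil _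
  have hq : ((⌊c⌋₊ + 1 : ℕ) : ℝ) ≤ 2 * c := by
    push_cast
    linarith [Nat.floor_le (show 0 ≤ c by linarith)]
  have hq4 : ⌊c⌋₊ + 1 ≤ 4 ^ r := by
    have : (2 : ℝ) ≤ 2 ^ r := le_self_pow₀ one_le_two (by omega)
    rify
    calc (⌊c⌋₊ + 1 : ℝ) ≤ 2 * 2 ^ r := by push_cast at hq; linarith
      _ ≤ 2 ^ r * 2 ^ r := by gcongr
      _ = 4 ^ r := by rw [← mul_pow]; norm_num
  refine ⟨⌊c⌋₊ + 1, 8 * K * r, Nat.le_add_left 1 _,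
    Nat.mul_pos (Nat.mul_pos (by norm_num) hK) hr1,
    (Nat.lt_floor_add_one c).trans_eq (Nat.cast_succ _).symm, ?_, ?_⟩
  · exact le_trans (by gcongr) (mul_four_pow_mul_le_two_pow hK hr1)
  · calc ((⌊c⌋₊ + 1 : ℕ) : ℝ) * (8 * K * r : ℕ)
        ≤ 2 * c * (8 * K * (2 * Real.logb 2 c)) := by
          push_cast at hq ⊢
          gcongr
          linarith
      _ = 32 * K * (c * Real.logb 2 c) := by ring

theorem cc_le_log_prt_sq_general {δ ε : ℝ} (hδ : δ < 1 / 2) (hε : 0 < ε) :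
    ∃ C : ℝ, 0 < C ∧
      ∀ (X Y : Type) [Fintype X] [Fintype Y] (f : X → Y → Bool) (μ : X → ℝ) (ν : Y → ℝ),
        IsDist μ → IsDist ν → 2 ≤ Real.logb 2 (prt f δ) →
        (CCdist (fun x y => μ x * ν y) f ε : ℝ) ≤
          C * (Real.logb 2 (prt f δ) * Real.logb 2 (Real.logb 2 (prt f δ))) ^ 2 := by
  obtain ⟨K, hK, hprot⟩ := IsFractionalPartition.exists_protocol_depth_le
    (lt_max_of_lt_right (by norm_num)) (max_lt hδ (by norm_num : (1 / 4 : ℝ) < 1 / 2))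
    (lt_min hε one_pos) (min_le_right ε 1)
  refine ⟨K * (32 * K) ^ 2, by positivity, fun X Y _ _ f μ ν hμ hν hc => ?_⟩
  obtain ⟨q, h, hq, hh, hcq, hlarge, hqh⟩ := exists_lt_and_mul_le_two_pow hc hK
  have hne : prt f δ ≠ 0 := fun h0 => by norm_num [h0] at hc
  have hprt : prt f δ < 2 ^ q := hne.lt_or_gt.elim (·.trans (by positivity)) fun hpos => by
    rwa [← Real.rpow_natCast, ← Real.logb_lt_iff_lt_rpow one_lt_two hpos]
  obtain ⟨w, hw, hsum⟩ := exists_isFractionalPartition_of_prt_lt hne hprt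
  obtain ⟨P, hdepth, herr⟩ :=
    hprot (hw.mono (le_max_left δ (1 / 4))) hμ hν hsum.le hq hh hlarge
  calc (CCdist (fun x y => μ x * ν y) f ε : ℝ) ≤ (K * (q * h) ^ 2 : ℕ) :=
        Nat.cast_le.2 (Nat.sInf_le ⟨P, hdepth, herr.trans (min_le_left ε 1)⟩)
    _ ≤ K * (32 * K * (Real.logb 2 (prt f δ) * Real.logb 2 (Real.logb 2 (prt f δ)))) ^ 2 := by
        push_cast
        gcongr
    _ = _ := by ring

end Parameters

/-- **CC vs partition bound (Theorem 1.1, eq. (2)).** There is a universal constant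
`C > 0` such that for every `n`, every total `f : {0,1}ⁿ × {0,1}ⁿ → {0,1}` and every
product distribution `μ = μA ⊗ μB` (with `log prt_{1/8}(f) ≥ 2`),
`CC^μ_{0.49}(f) ≤ C · (log prt_{1/8}(f) · log log prt_{1/8}(f))²`. -/
theorem cc_le_log_prt_sq :
    ∃ C : ℝ, 0 < C ∧
      ∀ (n : ℕ) (f : (Fin n → Bool) → (Fin n → Bool) → Bool)
        (μA μB : (Fin n → Bool) → ℝ), IsDist μA → IsDist μB →
        2 ≤ Real.logb 2 (prt f (1/8)) →
        (CCdist (fun x y => μA x * μB y) f 0.49 : ℝ) ≤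
          C * (Real.logb 2 (prt f (1/8)) *
            Real.logb 2 (Real.logb 2 (prt f (1/8)))) ^ 2 :=
  let ⟨C, hC, h⟩ := cc_le_log_prt_sq_general (δ := 1 / 8) (ε := 0.49) (by norm_num) (by norm_num)
  ⟨C, hC, fun _ f μA μB => h _ _ f μA μB⟩
end
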